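/- Let m be an even positive integer and let s₁ and s₂ be integers coprime to m. Let F ∈ ℤ[x] be a polynomial of degree k > 0 with positive leading coefficient, and suppose there is an integer n₀ such that F(n₀) is even and F(n₀) ≡ s₁ + s₂ (mod m). Then there are infinitely many pairs of primes (p₁, p₂) with p₁ ≡ s₁ (mod m) and p₂ ≡ s₂ (mod m) such that p₁ + p₂ = F(n) for some integer n; equivalently, for every M there exist primes p₁, p₂ > M with p₁ ≡ s₁ (mod m), p₂ ≡ s₂ (mod m) and an integer n with p₁ + p₂ = F(n). -/

import Mathlib

open Polynomial


noncomputable def ee (x : ℝ) : ℂ := Complex.exp ((2 * Real.pi * x : ℝ) * Complex.I)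

lemma ee_norm (x : ℝ) : ‖ee x‖ = 1 := by
  unfold ee; exact Complex.norm_exp_ofReal_mul_I _

lemma ee_add (x y : ℝ) : ee (x + y) = ee x * ee y := by
  unfold ee; rw [← Complex.exp_add]; congr 1; push_cast; ring

lemma ee_zero : ee 0 = 1 := by simp [ee]

lemma ee_int (n : ℤ) : ee n = 1 := by
  unfold ee
  rw [Complex.exp_eq_one_iff]
  exact ⟨n, by push_cast; ring⟩

lemma ee_neg (x : ℝ) : ee (-x) = (starRingEnd ℂ) (ee x) := by
  unfold ee
  rw [← Complex.exp_conj]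
  congr 1
  simp only [map_mul, Complex.conj_ofReal, Complex.conj_I]
  push_cast; ring

lemma ee_ne_zero (x : ℝ) : ee x ≠ 0 := Complex.exp_ne_zero _

lemma ee_lip (x y : ℝ) : ‖ee x - ee y‖ ≤ 2 * Real.pi * |x - y| := by
  have h : ee x - ee y = ee y * (ee (x - y) - 1) := by
    rw [mul_sub, ← ee_add]; simp
  rw [h, norm_mul, ee_norm, one_mul]
  unfold ee
  rw [mul_comm]
  refine (Real.norm_exp_I_mul_ofReal_sub_one_le).trans ?_
  rw [Real.norm_eq_abs, abs_mul, abs_of_pos (by positivity)]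

lemma ee_add_int (x : ℝ) (n : ℤ) : ee (x + n) = ee x := by
  rw [ee_add, ee_int, mul_one]

lemma ee_sub_one_lower (x : ℝ) (h : |x| ≤ 1 / 2) : 4 * |x| ≤ ‖ee x - 1‖ := by
  unfold ee
  rw [mul_comm _ Complex.I, Complex.norm_exp_I_mul_ofReal_sub_one]
  have h1 : |Real.pi * x| ≤ Real.pi / 2 := by
    rw [abs_mul, abs_of_pos Real.pi_pos]
    nlinarith [Real.pi_pos]
  have h2 := Real.mul_abs_le_abs_sin h1
  have h3 : (2 * Real.pi * x) / 2 = Real.pi * x := by ring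
  rw [h3, norm_mul, Real.norm_eq_abs, Real.norm_eq_abs, abs_of_pos (by norm_num : (0:ℝ) < 2)]
  rw [abs_mul, abs_of_pos Real.pi_pos] at h2
  have h4 : 2 / Real.pi * (Real.pi * |x|) = 2 * |x| := by
    field_simp
  linarith

lemma geom_bound (c θ : ℝ) (H : ℕ) :
    ‖∑ s ∈ Finset.range H, ee (c + θ * s)‖ * |θ - round θ| ≤ 1 / 2 := by
  set y := θ - round θ with hy
  have hy1 : |y| ≤ 1 / 2 := abs_sub_round θ
  have hs : ∀ s : ℕ, ee (c + θ * s) = ee c * (ee y) ^ s := by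
    intro s
    have : c + θ * s = c + (s * y) + ((round θ * s : ℤ) : ℝ) := by
      rw [hy]; push_cast; ring
    rw [this, ee_add_int, ee_add]
    congr 1
    unfold ee
    rw [← Complex.exp_nat_mul]
    congr 1; push_cast; ring
  simp_rw [hs]
  rw [← Finset.mul_sum, norm_mul, ee_norm, one_mul]
  have h1 := ee_sub_one_lower y hy1
  have h2 : (∑ s ∈ Finset.range H, ee y ^ s) * (ee y - 1) = ee y ^ H - 1 := geom_sum_mul _ _
  have h3 : ‖∑ s ∈ Finset.range H, ee y ^ s‖ * ‖ee y - 1‖ ≤ 2 := by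
    rw [← norm_mul, h2]
    refine (norm_sub_le _ _).trans ?_
    rw [norm_pow, ee_norm]; norm_num
  nlinarith [norm_nonneg (∑ s ∈ Finset.range H, ee y ^ s)]

lemma recur (φ ε ρ : ℝ) (H : ℕ) (B : Finset ℕ) (hB : B ⊆ Finset.range H)
    (hρ : 0 < ρ) (hcard : ρ * H ≤ B.card) (hρH : 2 ≤ ρ * H) (hε : 0 ≤ ε) (hε2 : 24 * ε < ρ)
    (hap : ∀ h ∈ B, ∃ a : ℤ, |h * φ - a| ≤ ε) :
    ∃ q : ℕ, ∃ a : ℤ, 1 ≤ q ∧ q * ρ ≤ 12 ∧ |q * φ - a| * H * ρ ^ 2 ≤ 24 * ε := by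
  have hH : 0 < H := by
    rcases Nat.eq_zero_or_pos H with h | h
    · subst h; norm_num at hρH
    · exact h
  have hHr : (0:ℝ) < H := by exact_mod_cast hH
  obtain ⟨r, hr1, hr2⟩ := Real.exists_rat_abs_sub_le_and_den_le φ (n := 2 * H) (by omega)
  set d := r.den with hd
  have hdpos : 0 < d := r.den_pos
  have hdr : (0:ℝ) < d := by exact_mod_cast hdpos
  have hd1 : (1:ℝ) ≤ d := by exact_mod_cast hdpos
  have hd2 : (d:ℝ) ≤ 2 * H := by exact_mod_cast hr2
  set β := φ - r with hβ
  have hrr : (r:ℝ) = r.num / d := by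
    rw [hd]; exact Rat.cast_def r
  have hβb : |β| * (2 * H * d) ≤ 1 := by
    have : 1 / (((2 * H : ℕ) + 1 : ℝ) * d) * (2 * H * d) ≤ 1 := by
      push_cast
      rw [div_mul_eq_mul_div, div_le_one (by positivity)]
      nlinarith
    refine le_trans ?_ this
    gcongr
  choose! aa haa using hap
  -- the centered residue
  have key : ∀ h ∈ B, |((h * r.num - d * aa h : ℤ) : ℝ)| ≤ d * ε + 1 / 2 := by
    intro h hh
    have hlt : (h:ℝ) ≤ H := by
      have := Finset.mem_range.mp (hB hh)
      exact_mod_cast this.le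
    have e1 : ((h * r.num - d * aa h : ℤ) : ℝ) = d * ((h * φ - aa h) - h * β) := by
      rw [hβ, hrr]; push_cast; field_simp; ring
    rw [e1, abs_mul, abs_of_pos hdr]
    have e2 : |h * φ - aa h - h * β| ≤ ε + h * |β| := by
      refine (abs_sub _ _).trans ?_
      rw [abs_mul, abs_of_nonneg (by positivity : (0:ℝ) ≤ h)]
      linarith [haa h hh]
    have e3 : (h:ℝ) * |β| ≤ H * |β| := by gcongr
    nlinarith [abs_nonneg β]
  have hcop : IsCoprime (r.num) (d : ℤ) := by
    rw [Int.isCoprime_iff_gcd_eq_one]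
    exact r.reduced
  -- counting
  have hcount : (B.card : ℝ) ≤ (H / d + 1) * (2 * (d * ε + 1 / 2) + 1) := by
    set R := ⌊d * ε + 1 / 2⌋₊ with hR
    have hRr : (R:ℝ) ≤ d * ε + 1 / 2 := Nat.floor_le (by positivity)
    have hinj : B.card ≤ ((Finset.range (H / d + 1)) ×ˢ (Finset.Icc (-(R:ℤ)) R)).card := by
      apply Finset.card_le_card_of_injOn (fun h => (h / d, (h * r.num - d * aa h : ℤ)))
      · intro h hh
        have hh' : h ∈ B := hh
        simp only [Finset.coe_product, Set.mem_prod, Finset.mem_coe, Finset.mem_range,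
          Finset.mem_Icc]
        constructor
        · have := Finset.mem_range.mp (hB hh')
          exact Nat.lt_succ_of_le (Nat.div_le_div_right this.le)
        · have h1 := key h hh'
          have h2 : (|(h * r.num - d * aa h : ℤ)|.toNat) ≤ R := by
            apply Nat.le_floor
            have : ((|(h * r.num - d * aa h : ℤ)|.toNat : ℤ) : ℝ) = |((h * r.num - d * aa h : ℤ) : ℝ)| := by
              rw [Int.toNat_of_nonneg (abs_nonneg _)]; push_cast; rfl
            have h3 : ((|(h * r.num - d * aa h : ℤ)|.toNat : ℕ) : ℝ) = |((h * r.num - d * aa h : ℤ) : ℝ)| := by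
              rw [← this]; norm_cast
            rw [h3]; exact h1
          have h4 : |(h * r.num - d * aa h : ℤ)| ≤ R := by omega
          exact abs_le.mp h4
      · intro h hh h' hh' heq
        simp only [Prod.mk.injEq] at heq
        obtain ⟨h1, h2⟩ := heq
        have h3 : (d:ℤ) ∣ ((h:ℤ) - h') * r.num := ⟨aa h - aa h', by linarith⟩
        have h4 : (d:ℤ) ∣ (h:ℤ) - h' := hcop.symm.dvd_of_dvd_mul_right h3
        have h5 : h % d = h' % d := by
          have := (Int.emod_emod_of_dvd (h:ℤ) (dvd_refl (d:ℤ)))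
          have h6 := Int.emod_emod_of_dvd
          have h7 : (h':ℤ) ≡ h [ZMOD d] := Int.modEq_iff_dvd.mpr h4
          exact ((Int.natCast_modEq_iff.mp h7).symm)
        rw [← Nat.div_add_mod h d, ← Nat.div_add_mod h' d, h1, h5]
    rw [Finset.card_product, Finset.card_range, Int.card_Icc] at hinj
    have h1 : ((R:ℤ) + 1 - -(R:ℤ)).toNat = 2 * R + 1 := by omega
    rw [h1] at hinj
    have h2 : (B.card : ℝ) ≤ ((H / d : ℕ) + 1) * (2 * R + 1) := by exact_mod_cast hinj
    refine h2.trans ?_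
    have h3 : ((H / d : ℕ) : ℝ) ≤ H / d := Nat.cast_div_le
    gcongr
  have hdρ : d * ρ ≤ 12 := by
    have h1 : (H:ℝ) / d + 1 ≤ 3 * H / d := by
      rw [div_add_one hdr.ne']
      gcongr; linarith
    have h2 : ρ * H ≤ (3 * H / d) * (2 * (d * ε + 1 / 2) + 1) :=
      hcard.trans (hcount.trans (by gcongr))
    have h3 : (3 * H / d) * (2 * (d * ε + 1 / 2) + 1) = H * (6 * ε + 6 / d) := by
      field_simp; ring
    rw [h3, mul_comm] at h2
    have h4 : ρ ≤ 6 * ε + 6 / d := le_of_mul_le_mul_left h2 hHr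
    have h5 : ρ / 2 ≤ 6 / d := by linarith
    rw [le_div_iff₀ hdr] at h5
    linarith
  have hdε : d * ε < 1 / 2 := by nlinarith
  -- divisibility
  have hzero : ∀ h ∈ B, (h:ℝ) * |β| ≤ ε := by
    intro h hh
    have h1 := key h hh
    have h2 : |((h * r.num - d * aa h : ℤ) : ℝ)| < 1 := by linarith
    have h3 : (h * r.num - d * aa h : ℤ) = 0 := by
      rw [← Int.abs_lt_one_iff]
      exact_mod_cast h2
    have e1 : ((h * r.num - d * aa h : ℤ) : ℝ) = d * ((h * φ - aa h) - h * β) := by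
      rw [hβ, hrr]; push_cast; field_simp; ring
    rw [h3] at e1
    have e2 : (h * φ - aa h) = h * β := by
      have : (h * φ - aa h) - h * β = 0 := by
        have := e1.symm
        simp only [Int.cast_zero, mul_eq_zero] at this
        rcases this with h | h
        · exact absurd h hdr.ne'
        · exact h
      linarith
    have := haa h hh
    rw [e2, abs_mul, abs_of_nonneg (by positivity : (0:ℝ) ≤ h)] at this
    exact this
  -- large element
  obtain ⟨h, hh, hbig⟩ : ∃ h ∈ B, ρ * H / 2 ≤ h := by
    by_contra hcon
    push Not at hcon
    have hsub : B ⊆ Finset.range ⌈ρ * H / 2⌉₊ := by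
      intro h hh
      rw [Finset.mem_range, Nat.lt_ceil]
      exact hcon h hh
    have h1 := Finset.card_le_card hsub
    rw [Finset.card_range] at h1
    have h2 : (B.card : ℝ) ≤ ⌈ρ * H / 2⌉₊ := by exact_mod_cast h1
    have h3 := Nat.ceil_lt_add_one (a := ρ * H / 2) (by positivity)
    linarith
  refine ⟨d, r.num, hdpos, hdρ, ?_⟩
  have h1 : (d:ℝ) * φ - r.num = d * β := by rw [hβ, hrr]; field_simp
  rw [h1, abs_mul, abs_of_pos hdr]
  have h2 := hzero h hh
  have h3 : ρ * H / 2 * |β| ≤ ε := le_trans (by gcongr) h2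
  have h4 : d * |β| * H * ρ ^ 2 = 2 * (d * ρ) * (ρ * H / 2 * |β|) := by ring
  rw [h4]
  calc 2 * (d * ρ) * (ρ * H / 2 * |β|) ≤ 2 * 12 * ε := by gcongr
    _ = 24 * ε := by ring


lemma weyl_diff (z : ℕ → ℂ) (H : ℕ) :
    ‖∑ s ∈ Finset.range H, z s‖ ^ 2 ≤
      2 * ∑ h ∈ Finset.range H, ‖∑ s ∈ Finset.range (H - h), z (s + h) * (starRingEnd ℂ) (z s)‖ := by
  set A : ℕ → ℂ := fun H => ∑ s ∈ Finset.range H, ∑ s' ∈ Finset.range (s + 1),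
    z s * (starRingEnd ℂ) (z s') with hA
  have h1 : ∀ H, (∑ s ∈ Finset.range H, z s) * (starRingEnd ℂ) (∑ s ∈ Finset.range H, z s) =
      A H + (starRingEnd ℂ) (A H) - ∑ s ∈ Finset.range H, z s * (starRingEnd ℂ) (z s) := by
    intro H
    induction H with
    | zero => simp [hA]
    | succ n ih =>
      have e : A (n + 1) = A n + z n * (starRingEnd ℂ) (∑ s ∈ Finset.range n, z s)
          + z n * (starRingEnd ℂ) (z n) := by
        simp only [hA]
        rw [Finset.sum_range_succ, ← Finset.mul_sum, Finset.sum_range_succ, map_sum]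
        ring
      rw [e, Finset.sum_range_succ, Finset.sum_range_succ]
      simp only [map_add, map_mul, Complex.conj_conj]
      linear_combination ih
  have h2 : ‖∑ s ∈ Finset.range H, z s‖ ^ 2 ≤ 2 * ‖A H‖ := by
    have := h1 H
    rw [Complex.mul_conj, Complex.normSq_eq_norm_sq] at this
    have h3 := congrArg Complex.re this
    simp only [Complex.ofReal_re, Complex.sub_re, Complex.add_re, Complex.conj_re] at h3
    have h4 : 0 ≤ (∑ s ∈ Finset.range H, z s * (starRingEnd ℂ) (z s)).re := by
      rw [Complex.re_sum]
      apply Finset.sum_nonneg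
      intro i _
      rw [Complex.mul_conj, Complex.ofReal_re]
      exact Complex.normSq_nonneg _
    have h5 := Complex.re_le_norm (A H)
    linarith
  refine h2.trans ?_
  gcongr
  have h3 : A H = ∑ h ∈ Finset.range H, ∑ s ∈ Finset.range (H - h), z (s + h) * (starRingEnd ℂ) (z s) := by
    rw [← Finset.sum_range_diag_flip H (fun h s => z (s + h) * (starRingEnd ℂ) (z s))]
    simp only [hA]
    apply Finset.sum_congr rfl
    intro s _
    rw [← Finset.sum_range_reflect]
    apply Finset.sum_congr rfl
    intro k hk
    have := Finset.mem_range.mp hk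
    have e1 : s + 1 - 1 - k = s - k := by omega
    have e2 : s - k + k = s := by omega
    rw [e1, e2]
  rw [h3]
  exact norm_sum_le _ _

lemma taylor_diff (g : ℝ[X]) (k : ℕ) (hg : g.natDegree ≤ k + 1) (h : ℝ) :
    (taylor h g - g).natDegree ≤ k ∧ (taylor h g - g).coeff k = (k + 1) * h * g.coeff (k + 1) := by
  have hc : ∀ n, g.natDegree < n → g.coeff n = 0 := fun n hn => coeff_eq_zero_of_natDegree_lt hn
  constructor
  · rw [natDegree_le_iff_coeff_eq_zero]
    intro N hN
    rw [coeff_sub, taylor_coeff]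
    rcases Nat.lt_or_ge (k + 1) N with h1 | h1
    · rw [hc N (by omega), hasseDeriv_eq_zero_of_lt_natDegree _ _ (by omega)]
      simp
    · have h2 : N = k + 1 := by omega
      subst h2
      have : hasseDeriv (k + 1) g = C (g.coeff (k + 1)) := by
        ext n
        rw [hasseDeriv_coeff, coeff_C]
        split_ifs with hn
        · subst hn; simp
        · rw [hc _ (by omega)]; simp
      rw [this]; simp
  · rw [coeff_sub, taylor_coeff]
    have : hasseDeriv k g = C (g.coeff k) + C ((k + 1) * g.coeff (k + 1)) * X := by
      ext n
      rw [hasseDeriv_coeff, coeff_add, coeff_C, coeff_C_mul, coeff_X]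
      rcases n with _ | _ | n
      · simp
      · simp [add_comm 1 k]
      · rw [hc _ (by omega)]; simp
    rw [this]; simp; ring

set_option maxHeartbeats 1600000 in
theorem weyl_inv (k : ℕ) (hk : 1 ≤ k) : ∃ C : ℕ, ∀ (g : ℝ[X]), g.natDegree ≤ k →
    ∀ (H : ℕ) (D : ℝ), 1 ≤ H → 2 ≤ D →
    H ≤ D * ‖∑ s ∈ Finset.range H, ee (g.eval (s:ℝ))‖ →
    ∃ q : ℕ, ∃ a : ℤ, 1 ≤ q ∧ q ≤ D ^ C ∧ |q * g.coeff k - a| * H ^ k ≤ D ^ C := by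
  induction k, hk using Nat.le_induction with
  | base =>
    refine ⟨1, fun g hg H D hH hD hS => ⟨1, round (g.coeff 1), le_rfl, by push_cast; linarith, ?_⟩⟩
    have h1 : ∀ s : ℝ, g.eval s = g.coeff 0 + g.coeff 1 * s := by
      intro s
      conv_lhs => rw [Polynomial.eq_X_add_C_of_natDegree_le_one hg]
      simp; ring
    simp_rw [h1] at hS
    have h2 := geom_bound (g.coeff 0) (g.coeff 1) H
    rw [Nat.cast_one, one_mul, pow_one, pow_one]
    have h3 : (H:ℝ) * |g.coeff 1 - round (g.coeff 1)| ≤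
      D * ‖∑ s ∈ Finset.range H, ee (g.coeff 0 + g.coeff 1 * s)‖ * |g.coeff 1 - round (g.coeff 1)| := by
      gcongr
    rw [mul_assoc] at h3
    nlinarith
  | succ k hk ih =>
    obtain ⟨C, hC⟩ := ih
    set A := 8 * C + 4 * k + 12 with hA
    refine ⟨A * (k + 1) + 20 * C + 20 * k + 40, fun g hg H D hH hD hS => ?_⟩
    set θ := g.coeff (k + 1) with hθ
    have hD1 : 1 ≤ D := by linarith
    have hD0 : 0 < D := by linarith
    have hHr : (0:ℝ) < H := by exact_mod_cast hH
    have hH1 : (1:ℝ) ≤ H := by exact_mod_cast hH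
    by_cases hsmall : (H:ℝ) ≤ D ^ A
    · refine ⟨1, round θ, le_rfl, ?_, ?_⟩
      · push_cast; exact one_le_pow₀ hD1
      · rw [Nat.cast_one, one_mul]
        have h1 := abs_sub_round θ
        calc |θ - round θ| * H ^ (k + 1) ≤ 1 * (D ^ A) ^ (k + 1) := by
              gcongr; linarith
          _ = D ^ (A * (k + 1)) := by rw [one_mul, ← pow_mul]
          _ ≤ _ := pow_le_pow_right₀ hD1 (by omega)
    push Not at hsmall
    -- differencing
    set Sh : ℕ → ℂ := fun h => ∑ s ∈ Finset.range (H - h), ee ((taylor (h:ℝ) g - g).eval (s:ℝ)) with hSh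
    have hdiff : ‖∑ s ∈ Finset.range H, ee (g.eval (s:ℝ))‖ ^ 2 ≤ 2 * ∑ h ∈ Finset.range H, ‖Sh h‖ := by
      refine (weyl_diff _ H).trans (le_of_eq ?_)
      congr 1
      apply Finset.sum_congr rfl
      intro h _
      congr 1
      apply Finset.sum_congr rfl
      intro s _
      rw [← ee_neg, ← ee_add, eval_sub, taylor_eval]
      congr 1
      push_cast; ring
    have hShle : ∀ h, ‖Sh h‖ ≤ H - (h:ℕ) ∨ H ≤ h ∧ Sh h = 0 := by
      intro h
      rcases Nat.lt_or_ge h H with h1 | h1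
      · left
        refine (norm_sum_le _ _).trans ?_
        simp_rw [ee_norm]
        simp only [Finset.sum_const, Finset.card_range, nsmul_eq_mul, mul_one]
        rw [Nat.cast_sub h1.le]
      · right
        refine ⟨h1, ?_⟩
        simp [hSh, Nat.sub_eq_zero_of_le h1]
    have hsum : (H:ℝ) ^ 2 ≤ 2 * D ^ 2 * ∑ h ∈ Finset.range H, ‖Sh h‖ := by
      calc (H:ℝ) ^ 2 ≤ (D * ‖∑ s ∈ Finset.range H, ee (g.eval (s:ℝ))‖) ^ 2 := by gcongr
        _ = D ^ 2 * ‖∑ s ∈ Finset.range H, ee (g.eval (s:ℝ))‖ ^ 2 := by ring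
        _ ≤ D ^ 2 * (2 * ∑ h ∈ Finset.range H, ‖Sh h‖) := by gcongr
        _ = _ := by ring
    set B0 := (Finset.range H).filter (fun h => (H:ℝ) ≤ 4 * D ^ 2 * ‖Sh h‖) with hB0
    have hB0card : (H:ℝ) ≤ 4 * D ^ 2 * B0.card := by
      have h1 : 4 * D ^ 2 * ∑ h ∈ Finset.range H, ‖Sh h‖ ≤ 4 * D ^ 2 * B0.card * H + H * H := by
        rw [Finset.mul_sum]
        have h2 : ∀ h ∈ Finset.range H, 4 * D ^ 2 * ‖Sh h‖ ≤
            (if (H:ℝ) ≤ 4 * D ^ 2 * ‖Sh h‖ then 4 * D ^ 2 * (H:ℝ) else 0) + H := by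
          intro h hh
          split_ifs with hc
          · have h3 : ‖Sh h‖ ≤ H := by
              rcases hShle h with h4 | h4
              · have : (0:ℝ) ≤ h := by positivity
                linarith
              · rw [h4.2]; simp
            have : 4 * D ^ 2 * ‖Sh h‖ ≤ 4 * D ^ 2 * H := by gcongr
            linarith
          · push Not at hc; linarith
        refine (Finset.sum_le_sum h2).trans (le_of_eq ?_)
        rw [Finset.sum_add_distrib, ← Finset.sum_filter]
        simp only [Finset.sum_const, Finset.card_range, nsmul_eq_mul]
        rw [← hB0]; ring
      have h2 : 2 * (H:ℝ) ^ 2 ≤ 4 * D ^ 2 * B0.card * H + H * H := by linarith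
      have h3 : (H:ℝ) * H ≤ 4 * D ^ 2 * B0.card * H := by nlinarith
      exact le_of_mul_le_mul_right h3 hHr
    have hD4 : 4 * D ^ 2 ≤ D ^ 4 := by
      have h4 : (4:ℝ) ≤ D ^ 2 := by nlinarith
      have h5 : D ^ 4 = D ^ 2 * D ^ 2 := by ring
      rw [h5]; gcongr
    -- apply induction hypothesis
    have hstep : ∀ h ∈ B0, ∃ q : ℕ, ∃ a : ℤ, 1 ≤ q ∧ (q:ℝ) ≤ D ^ (4 * C) ∧
        |q * ((k + 1) * h * θ) - a| * H ^ k ≤ D ^ (4 * C + 4 * k) := by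
      intro h hh
      rw [hB0, Finset.mem_filter, Finset.mem_range] at hh
      obtain ⟨hh1, hh2⟩ := hh
      have hle : ‖Sh h‖ ≤ H - (h:ℕ) := by
        rcases hShle h with h4 | h4
        · exact h4
        · omega
      obtain ⟨hdeg, hcoef⟩ := taylor_diff g k hg (h:ℝ)
      obtain ⟨q, a, hq1, hq2, hq3⟩ := hC (taylor (h:ℝ) g - g) hdeg (H - h) (4 * D ^ 2) (by omega)
        (by nlinarith) (by
          refine le_trans ?_ hh2
          exact_mod_cast Nat.sub_le H h)
      have hp : (4 * D ^ 2) ^ C ≤ D ^ (4 * C) := by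
        rw [pow_mul]; gcongr
      refine ⟨q, a, hq1, hq2.trans hp, ?_⟩
      rw [hcoef] at hq3
      have hHle : (H:ℝ) ≤ D ^ 4 * ((H - h : ℕ) : ℝ) := by
        rw [Nat.cast_sub hh1.le]
        calc (H:ℝ) ≤ 4 * D ^ 2 * ‖Sh h‖ := hh2
          _ ≤ D ^ 4 * (H - h) := by gcongr
      calc |q * ((k + 1) * h * θ) - a| * H ^ k
          ≤ |q * ((k + 1) * h * θ) - a| * (D ^ 4 * ((H - h : ℕ) : ℝ)) ^ k := by gcongr
        _ = (|q * ((k + 1) * h * θ) - a| * ((H - h : ℕ) : ℝ) ^ k) * D ^ (4 * k) := by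
            rw [mul_pow, ← pow_mul]; ring
        _ ≤ (4 * D ^ 2) ^ C * D ^ (4 * k) := by gcongr
        _ ≤ D ^ (4 * C) * D ^ (4 * k) := by gcongr
        _ = _ := by rw [← pow_add]
    choose! qf af hqf1 hqf2 hqf3 using hstep
    -- pigeonhole
    have hB0ne : B0.Nonempty := by
      rw [Finset.nonempty_iff_ne_empty]
      intro h; rw [h] at hB0card; simp at hB0card
      omega
    set T := Finset.Icc 1 ⌊D ^ (4 * C)⌋₊ with hT
    have hmaps : ∀ h ∈ B0, qf h ∈ T := by
      intro h hh
      rw [hT, Finset.mem_Icc]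
      exact ⟨hqf1 h hh, Nat.le_floor (hqf2 h hh)⟩
    have hTcard : (T.card : ℝ) ≤ D ^ (4 * C) := by
      rw [hT, Nat.card_Icc]; simp only [Nat.add_sub_cancel]
      exact Nat.floor_le (by positivity)
    have hTne : T.Nonempty := ⟨qf hB0ne.choose, hmaps _ hB0ne.choose_spec⟩
    obtain ⟨q, hqT, hqcard⟩ := Finset.exists_le_card_fiber_of_nsmul_le_card_of_maps_to
      (M := ℝ) (b := (B0.card : ℝ) / T.card) (f := qf) (s := B0) (t := T) hmaps hTne (by
        rw [nsmul_eq_mul]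
        have : (T.card : ℝ) ≠ 0 := by
          have := hTne.card_pos
          positivity
        rw [mul_div_cancel₀ _ this])
    set B := B0.filter (fun h => qf h = q) with hB
    have hTpos : (0:ℝ) < T.card := by
      have := hTne.card_pos
      exact_mod_cast this
    rw [hT, Finset.mem_Icc] at hqT
    have hqle : (q:ℝ) ≤ D ^ (4 * C) := (Nat.le_floor_iff (by positivity)).mp hqT.2
    set ρ := 1 / D ^ (4 * C + 4) with hρ
    have hρpos : 0 < ρ := by positivity
    have hBcard : ρ * H ≤ B.card := by
      rw [div_le_iff₀ hTpos] at hqcard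
      rw [hρ, div_mul_eq_mul_div, one_mul, div_le_iff₀ (by positivity)]
      calc (H:ℝ) ≤ 4 * D ^ 2 * B0.card := hB0card
        _ ≤ D ^ 4 * (B.card * T.card) := by gcongr
        _ ≤ D ^ 4 * (B.card * D ^ (4 * C)) := by gcongr
        _ = B.card * D ^ (4 * C + 4) := by rw [pow_add]; ring
    set ε := D ^ (4 * C + 4 * k) / H ^ k with hε
    set φ := (q:ℝ) * ((k + 1) * θ) with hφ
    have hHk : (H:ℝ) ≤ H ^ k := le_self_pow₀ hH1 (by omega)
    have h32 : (32:ℝ) ≤ D ^ 5 := by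
      calc (32:ℝ) = 2 ^ 5 := by norm_num
        _ ≤ D ^ 5 := by gcongr
    obtain ⟨q', a', hq'1, hq'2, hq'3⟩ := recur φ ε ρ H B
      ((Finset.filter_subset _ _).trans (Finset.filter_subset _ _)) hρpos hBcard
      (by
        rw [hρ, div_mul_eq_mul_div, one_mul, le_div_iff₀ (by positivity)]
        calc 2 * D ^ (4 * C + 4) ≤ D * D ^ (4 * C + 4) := by gcongr
          _ = D ^ (4 * C + 5) := by ring
          _ ≤ D ^ A := pow_le_pow_right₀ hD1 (by omega)
          _ ≤ H := hsmall.le)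
      (by positivity)
      (by
        rw [hε, hρ, ← mul_div_assoc, div_lt_div_iff₀ (by positivity) (by positivity), one_mul]
        calc 24 * D ^ (4 * C + 4 * k) * D ^ (4 * C + 4)
            ≤ D ^ 5 * D ^ (4 * C + 4 * k) * D ^ (4 * C + 4) := by gcongr; linarith
          _ = D ^ (8 * C + 4 * k + 9) := by rw [← pow_add, ← pow_add]; congr 1; ring
          _ ≤ D ^ A := pow_le_pow_right₀ hD1 (by omega)
          _ < H := hsmall
          _ ≤ H ^ k := hHk)
      (by
        intro h hh
        rw [hB, Finset.mem_filter] at hh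
        refine ⟨af h, ?_⟩
        have h1 := hqf3 h hh.1
        rw [hh.2] at h1
        rw [hε, le_div_iff₀ (by positivity)]
        have h2 : h * φ = q * ((k + 1) * h * θ) := by rw [hφ]; ring
        rw [h2]; exact h1)
    have hk1 : ((k + 1 : ℕ) : ℝ) ≤ D ^ k := by
      have h1 : k + 1 ≤ 2 ^ k := Nat.lt_two_pow_self
      calc ((k + 1 : ℕ) : ℝ) ≤ ((2 ^ k : ℕ) : ℝ) := by exact_mod_cast h1
        _ = 2 ^ k := by push_cast; rfl
        _ ≤ D ^ k := by gcongr
    refine ⟨q' * (q * (k + 1)), a', ?_, ?_, ?_⟩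
    · have : 1 ≤ q * (k + 1) := Nat.mul_pos hqT.1 (by omega)
      exact Nat.mul_pos hq'1 this
    · have hq'le : (q':ℝ) ≤ D ^ (4 * C + 9) := by
        rw [hρ, mul_one_div, div_le_iff₀ (by positivity)] at hq'2
        calc (q':ℝ) ≤ 12 * D ^ (4 * C + 4) := hq'2
          _ ≤ D ^ 5 * D ^ (4 * C + 4) := by gcongr; linarith
          _ = _ := by rw [← pow_add]; congr 1; ring
      rw [Nat.cast_mul, Nat.cast_mul]
      calc (q':ℝ) * (q * ((k + 1 : ℕ) : ℝ)) ≤ D ^ (4 * C + 9) * (D ^ (4 * C) * D ^ k) := by gcongr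
        _ = D ^ (8 * C + k + 9) := by rw [← pow_add, ← pow_add]; congr 1; ring
        _ ≤ _ := pow_le_pow_right₀ hD1 (by omega)
    · have e1 : ((q' * (q * (k + 1)) : ℕ) : ℝ) * θ - a' = q' * φ - a' := by
        rw [hφ]; push_cast; ring
      rw [e1]
      have h1 : |q' * φ - a'| * H * (H ^ k) ≤ 24 * D ^ (4 * C + 4 * k) * (D ^ (4 * C + 4)) ^ 2 := by
        have h2 : |q' * φ - a'| * H * ρ ^ 2 * H ^ k ≤ 24 * ε * H ^ k := by gcongr
        have h3 : 24 * ε * H ^ k = 24 * D ^ (4 * C + 4 * k) := by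
          rw [hε]; field_simp
        rw [h3, hρ, one_div, inv_pow] at h2
        have h4 : |q' * φ - a'| * H * (H ^ k) = (|q' * φ - a'| * H * ((D ^ (4 * C + 4)) ^ 2)⁻¹ * H ^ k) * (D ^ (4 * C + 4)) ^ 2 := by
          field_simp
        rw [h4]
        gcongr
      calc |q' * φ - a'| * H ^ (k + 1) = |q' * φ - a'| * H * (H ^ k) := by ring
        _ ≤ 24 * D ^ (4 * C + 4 * k) * (D ^ (4 * C + 4)) ^ 2 := h1
        _ ≤ D ^ 5 * D ^ (4 * C + 4 * k) * (D ^ (4 * C + 4)) ^ 2 := by gcongr; linarith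
        _ = D ^ (12 * C + 4 * k + 13) := by rw [← pow_mul, ← pow_add, ← pow_add]; congr 1; ring
        _ ≤ _ := pow_le_pow_right₀ hD1 (by omega)


lemma ee_eq_one_iff (x : ℝ) : ee x = 1 ↔ ∃ n : ℤ, x = n := by
  unfold ee
  rw [Complex.exp_eq_one_iff]
  constructor
  · rintro ⟨n, hn⟩
    refine ⟨n, ?_⟩
    have h2 : ((2 * Real.pi * x : ℝ) : ℂ) = ((n * (2 * Real.pi) : ℝ) : ℂ) := by
      have hI : Complex.I ≠ 0 := Complex.I_ne_zero
      apply mul_right_cancel₀ hI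
      rw [hn]; push_cast; ring
    have h3 := Complex.ofReal_injective h2
    have hp := Real.pi_pos
    nlinarith
  · rintro ⟨n, rfl⟩
    exact ⟨n, by push_cast; ring⟩

lemma orth (N : ℕ) (hN : 0 < N) (n : ℤ) :
    ∑ r ∈ Finset.range N, ee ((r:ℝ) / N * n) = if (N:ℤ) ∣ n then (N:ℂ) else 0 := by
  have hNr : (N:ℝ) ≠ 0 := by positivity
  have hp : ∀ r : ℕ, ee ((r:ℝ) / N * n) = ee ((n:ℝ) / N) ^ r := by
    intro r
    unfold ee
    rw [← Complex.exp_nat_mul]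
    congr 1; push_cast; ring
  simp_rw [hp]
  split_ifs with h
  · obtain ⟨m, rfl⟩ := h
    have : ((N * m : ℤ) : ℝ) / N = m := by push_cast; field_simp
    rw [this, ee_int]; simp
  · have hne : ee ((n:ℝ) / N) ≠ 1 := by
      rw [Ne, ee_eq_one_iff]
      rintro ⟨m, hm⟩
      apply h
      refine ⟨m, ?_⟩
      rw [div_eq_iff hNr] at hm
      have : (n:ℝ) = ((N * m : ℤ) : ℝ) := by rw [hm]; push_cast; ring
      exact_mod_cast this
    rw [geom_sum_eq hne, ← hp N]
    have : (N:ℝ) / N * n = (n:ℝ) := by field_simp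
    rw [this, ee_int]; simp

noncomputable def fh (A : Finset ℕ) (α : ℝ) : ℂ := ∑ x ∈ A, ee (α * x)

lemma fh_add_int (A : Finset ℕ) (α : ℝ) (n : ℤ) : fh A (α + n) = fh A α := by
  unfold fh
  apply Finset.sum_congr rfl
  intro x _
  have : (α + n) * x = α * x + ((n * x : ℤ) : ℝ) := by push_cast; ring
  rw [this, ee_add_int]

lemma parseval (A : Finset ℕ) (N lo : ℕ) (hN : 0 < N) (hA : ∀ x ∈ A, lo ≤ x ∧ x < lo + N) :
    ∑ r ∈ Finset.range N, ‖fh A ((r:ℝ) / N)‖ ^ 2 = N * A.card := by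
  have h1 : ∀ r : ℕ, ((‖fh A ((r:ℝ) / N)‖ ^ 2 : ℝ) : ℂ) =
      ∑ x ∈ A, ∑ y ∈ A, ee ((r:ℝ) / N * ((x - y : ℤ) : ℝ)) := by
    intro r
    rw [← Complex.normSq_eq_norm_sq, ← Complex.mul_conj]
    unfold fh
    rw [map_sum, Finset.sum_mul_sum]
    apply Finset.sum_congr rfl; intro x _
    apply Finset.sum_congr rfl; intro y _
    rw [← ee_neg, ← ee_add]
    congr 1; push_cast; ring
  have h2 : ((∑ r ∈ Finset.range N, ‖fh A ((r:ℝ) / N)‖ ^ 2 : ℝ) : ℂ) = ((N * A.card : ℝ) : ℂ) := by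
    rw [Complex.ofReal_sum]
    simp_rw [h1]
    rw [Finset.sum_comm]
    have h3 : ∀ x ∈ A, ∑ r ∈ Finset.range N, ∑ y ∈ A, ee ((r:ℝ) / N * ((x - y : ℤ) : ℝ)) = N := by
      intro x hx
      rw [Finset.sum_comm]
      simp_rw [orth N hN]
      rw [Finset.sum_eq_single x]
      · simp
      · intro y hy hne
        rw [if_neg]
        intro hd
        have hx' := hA x hx
        have hy' := hA y hy
        have := Int.eq_zero_of_abs_lt_dvd hd (by rw [abs_lt]; constructor <;> omega)
        omega
      · intro h; exact absurd hx h
    rw [Finset.sum_congr rfl h3]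
    simp; ring
  exact Complex.ofReal_injective h2

noncomputable def cop (l : ℕ) : Finset ℕ := (Finset.range l).filter (fun j => Nat.Coprime j l)

lemma cop_card (l : ℕ) : (cop l).card = l.totient := by
  rw [Nat.totient_eq_card_coprime]
  unfold cop
  congr 1
  ext j
  simp only [Finset.mem_filter, Nat.coprime_comm]

lemma sum_primitive (l : ℕ) (hl : 0 < l) :
    ∑ z ∈ primitiveRoots l ℂ, z = (ArithmeticFunction.moebius l : ℂ) := by
  induction l using Nat.strong_induction_on with
  | _ l ih =>
    obtain ⟨ζ, hprim⟩ : ∃ ζ : ℂ, IsPrimitiveRoot ζ l := ⟨_, Complex.isPrimitiveRoot_exp l hl.ne'⟩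
    have h1 : ∑ d ∈ l.divisors, ∑ z ∈ primitiveRoots d ℂ, z = if l = 1 then 1 else 0 := by
      rw [← Finset.sum_biUnion]
      · have : NeZero l := ⟨hl.ne'⟩
        rw [← IsPrimitiveRoot.nthRoots_one_eq_biUnion_primitiveRoots]
        split_ifs with h
        · subst h
          simp [Polynomial.nthRootsFinset, Polynomial.nthRoots]
          have : (X - 1 : ℂ[X]) = X - C 1 := by simp
          rw [this, Polynomial.roots_X_sub_C]; simp
        · have h3 : l ≠ 1 := h
          have := hprim.geom_sum_eq_zero (by omega)
          rw [← this]
          symm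
          apply Finset.sum_bij (fun i _ => ζ ^ i)
          · intro i _
            rw [Polynomial.mem_nthRootsFinset hl, ← pow_mul, mul_comm i l, pow_mul, hprim.pow_eq_one, one_pow]
          · intro i hi j hj hij
            exact hprim.pow_inj (Finset.mem_range.mp hi) (Finset.mem_range.mp hj) hij
          · intro z hz
            rw [Polynomial.mem_nthRootsFinset hl] at hz
            obtain ⟨i, hi, rfl⟩ := hprim.eq_pow_of_pow_eq_one hz
            exact ⟨i, Finset.mem_range.mpr hi, rfl⟩
          · intro i _; rfl
      · intro a _ b _ hab
        exact IsPrimitiveRoot.disjoint hab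
    have h2 : ∑ d ∈ l.divisors, (ArithmeticFunction.moebius d : ℂ) = if l = 1 then 1 else 0 := by
      have := ArithmeticFunction.coe_mul_zeta_apply (f := ArithmeticFunction.moebius) (x := l)
      rw [ArithmeticFunction.moebius_mul_coe_zeta, ArithmeticFunction.one_apply] at this
      have h3 := congrArg (Int.cast : ℤ → ℂ) this
      push_cast at h3
      rw [← h3]
    rw [← Nat.cons_self_properDivisors hl.ne', Finset.sum_cons] at h1 h2
    have h3 : ∑ d ∈ l.properDivisors, ∑ z ∈ primitiveRoots d ℂ, z =
        ∑ d ∈ l.properDivisors, (ArithmeticFunction.moebius d : ℂ) := by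
      apply Finset.sum_congr rfl
      intro d hd
      rw [Nat.mem_properDivisors] at hd
      exact ih d hd.2 (Nat.pos_of_dvd_of_pos hd.1 hl)
    rw [h3] at h1
    linear_combination h1 - h2

lemma ramanujan (l : ℕ) (hl : 0 < l) (n : ℕ) (hn : n.Coprime l) :
    ∑ j ∈ cop l, ee ((j:ℝ) / l * n) = (ArithmeticFunction.moebius l : ℂ) := by
  rw [← sum_primitive l hl]
  have hlr : (l:ℝ) ≠ 0 := by positivity
  have hinj : Set.InjOn (fun j : ℕ => ee ((j:ℝ) / l * n)) (cop l) := by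
    intro i hi j hj hij
    simp only [cop, Finset.coe_filter, Finset.mem_range, Set.mem_ofPred_eq] at hi hj
    have h1 : ee (((i:ℝ) / l * n) - (j:ℝ) / l * n) = 1 := by
      rw [sub_eq_add_neg, ee_add, ee_neg]
      simp only at hij
      rw [hij, Complex.mul_conj, Complex.normSq_eq_norm_sq, ee_norm]; simp
    rw [ee_eq_one_iff] at h1
    obtain ⟨m, hm⟩ := h1
    have h2 : ((i:ℤ) - j) * n = l * m := by
      have : ((i:ℝ) - j) * n = l * m := by
        rw [← hm]; field_simp
      exact_mod_cast this
    have h3 : (l:ℤ) ∣ (i:ℤ) - j := by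
      have hc : IsCoprime (l:ℤ) (n:ℤ) := (Nat.isCoprime_iff_coprime.mpr hn).symm
      exact hc.dvd_of_dvd_mul_right ⟨m, h2⟩
    have := Int.eq_zero_of_abs_lt_dvd h3 (by rw [abs_lt]; constructor <;> omega)
    omega
  rw [← Finset.sum_image (f := fun z => z) (g := fun j : ℕ => ee ((j:ℝ) / l * n)) hinj]
  congr 1
  apply Finset.eq_of_subset_of_card_le
  · intro z hz
    rw [Finset.mem_image] at hz
    obtain ⟨j, hj, rfl⟩ := hz
    rw [mem_primitiveRoots hl]
    simp only [cop, Finset.mem_filter, Finset.mem_range] at hj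
    have := Complex.isPrimitiveRoot_exp_of_coprime (j * n) l hl.ne' (Nat.Coprime.mul_left hj.2 hn)
    convert this using 1
    unfold ee
    congr 1; push_cast; ring
  · rw [Finset.card_image_of_injOn hinj, cop_card, Complex.card_primitiveRoots]

lemma ls1 (A : Finset ℕ) (l u : ℕ) (hl : Squarefree l) (hA : ∀ x ∈ A, Nat.Coprime (x + u) l) (α : ℝ) :
    ‖fh A α‖ ^ 2 ≤ l.totient * ∑ j ∈ cop l, ‖fh A (α + (j:ℝ) / l)‖ ^ 2 := by
  have hl0 : 0 < l := Nat.pos_of_ne_zero hl.ne_zero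
  have h1 : (ArithmeticFunction.moebius l : ℂ) * fh A α =
      ∑ j ∈ cop l, ee ((j:ℝ) / l * u) * fh A (α + (j:ℝ) / l) := by
    unfold fh
    rw [Finset.mul_sum]
    simp_rw [Finset.mul_sum]
    rw [Finset.sum_comm]
    apply Finset.sum_congr rfl
    intro x hx
    rw [← ramanujan l hl0 _ (hA x hx), Finset.sum_mul]
    apply Finset.sum_congr rfl
    intro j _
    rw [← ee_add, ← ee_add]
    congr 1; push_cast; ring
  have h2 : ‖(ArithmeticFunction.moebius l : ℂ)‖ = 1 := by
    rw [Complex.norm_intCast]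
    have := ArithmeticFunction.abs_moebius_eq_one_of_squarefree hl
    exact_mod_cast this
  have h3 : ‖fh A α‖ ≤ ∑ j ∈ cop l, ‖fh A (α + (j:ℝ) / l)‖ := by
    have := congrArg norm h1
    rw [norm_mul, h2, one_mul] at this
    rw [this]
    refine (norm_sum_le _ _).trans (le_of_eq ?_)
    apply Finset.sum_congr rfl
    intro j _
    rw [norm_mul, ee_norm, one_mul]
  calc ‖fh A α‖ ^ 2 ≤ (∑ j ∈ cop l, ‖fh A (α + (j:ℝ) / l)‖) ^ 2 := by gcongr
    _ ≤ (cop l).card * ∑ j ∈ cop l, ‖fh A (α + (j:ℝ) / l)‖ ^ 2 := sq_sum_le_card_mul_sum_sq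
    _ = _ := by rw [cop_card]

lemma ls2 (A : Finset ℕ) (N lo : ℕ) (hN : 0 < N) (hA : ∀ x ∈ A, lo ≤ x ∧ x < lo + N)
    (Q L : ℕ) (τ : ℝ) (hτ : 2 * τ * (Q ^ 2 * L ^ 2) < 1)
    (M : Finset ℕ) (hM : M ⊆ Finset.range N)
    (hMq : ∀ r ∈ M, ∃ q : ℕ, ∃ a : ℤ, 1 ≤ q ∧ q ≤ Q ∧ |(r:ℝ) / N - a / q| ≤ τ)
    (S : Finset ℕ) (hS : ∀ l ∈ S, Squarefree l ∧ l ≤ L ∧ l ∣ N ∧ (∀ q, 1 ≤ q → q ≤ Q → Nat.Coprime q l) ∧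
      ∃ u, ∀ x ∈ A, Nat.Coprime (x + u) l) :
    (∑ l ∈ S, 1 / (l.totient : ℝ)) * ∑ r ∈ M, ‖fh A ((r:ℝ) / N)‖ ^ 2 ≤ N * A.card := by
  rw [← parseval A N lo hN hA]
  have hNr : (0:ℝ) < N := by exact_mod_cast hN
  set I := S.sigma (fun l => cop l ×ˢ M) with hI
  have step1 : (∑ l ∈ S, 1 / (l.totient : ℝ)) * ∑ r ∈ M, ‖fh A ((r:ℝ) / N)‖ ^ 2 ≤
      ∑ i ∈ I, ‖fh A (((((i.2.2 + i.2.1 * (N / i.1)) % N : ℕ)) : ℝ) / N)‖ ^ 2 := by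
    rw [hI, Finset.sum_sigma, Finset.sum_mul]
    apply Finset.sum_le_sum
    intro l hl
    obtain ⟨h1, h2, h3, h4, u, hu⟩ := hS l hl
    have hl0 : 0 < l := Nat.pos_of_ne_zero h1.ne_zero
    have hlr : (0:ℝ) < l := by exact_mod_cast hl0
    have ht : (0:ℝ) < l.totient := by exact_mod_cast Nat.totient_pos.mpr hl0
    rw [Finset.sum_product, Finset.sum_comm, Finset.mul_sum]
    apply Finset.sum_le_sum
    intro r hr
    have h5 := ls1 A l u h1 hu ((r:ℝ) / N)
    rw [one_div, inv_mul_le_iff₀ ht]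
    refine h5.trans (le_of_eq ?_)
    congr 1
    apply Finset.sum_congr rfl
    intro j _
    congr 2
    have e1 : ((r + j * (N / l) : ℕ) : ℝ) = N * ((r + j * (N / l)) / N : ℕ) + ((r + j * (N / l)) % N : ℕ) := by
      exact_mod_cast (Nat.div_add_mod _ _).symm
    have e2 : ((N / l : ℕ) : ℝ) = N / l := Nat.cast_div h3 hlr.ne'
    have e3 : (r:ℝ) / N + j / l = (((r + j * (N / l)) % N : ℕ) : ℝ) / N + (((r + j * (N / l)) / N : ℕ) : ℤ) := by
      have : (((r + j * (N / l)) % N : ℕ) : ℝ) = (r + j * (N / l)) - N * ((r + j * (N / l)) / N : ℕ) := by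
        push_cast [e2] at e1
        rw [← e2] at e1 ⊢
        linarith
      rw [this, Int.cast_natCast]
      generalize (((r + j * (N / l)) / N : ℕ) : ℝ) = dv
      field_simp
      ring
    rw [e3, fh_add_int]
  refine step1.trans ?_
  have hinj : Set.InjOn (fun i : (_ : ℕ) × ℕ × ℕ => (i.2.2 + i.2.1 * (N / i.1)) % N) I := by
    rintro ⟨l, j, r⟩ hi ⟨l', j', r'⟩ hi' heq
    simp only [hI, Finset.coe_sigma, Set.mem_sigma_iff, Finset.mem_coe, Finset.mem_product] at hi hi'
    obtain ⟨hl, hj, hr⟩ := hi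
    obtain ⟨hl', hj', hr'⟩ := hi'
    simp only at heq
    obtain ⟨hsq, hlL, hlN, hcop, -⟩ := hS l hl
    obtain ⟨hsq', hlL', hlN', hcop', -⟩ := hS l' hl'
    have hl0 : 0 < l := Nat.pos_of_ne_zero hsq.ne_zero
    have hl0' : 0 < l' := Nat.pos_of_ne_zero hsq'.ne_zero
    have hlr : (0:ℝ) < l := by exact_mod_cast hl0
    have hlr' : (0:ℝ) < l' := by exact_mod_cast hl0'
    simp only [cop, Finset.mem_filter, Finset.mem_range] at hj hj'
    obtain ⟨q, a, hq1, hqQ, hq⟩ := hMq r hr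
    obtain ⟨q', a', hq1', hqQ', hq'⟩ := hMq r' hr'
    have hqr : (0:ℝ) < q := by exact_mod_cast hq1
    have hqr' : (0:ℝ) < q' := by exact_mod_cast hq1'
    obtain ⟨m, hm⟩ : ∃ m : ℤ, (r:ℝ) / N + j / l - (r' / N + j' / l') = m := by
      have hmod : ((r + j * (N / l) : ℕ) : ℤ) ≡ ((r' + j' * (N / l') : ℕ) : ℤ) [ZMOD N] :=
        Int.natCast_modEq_iff.mpr heq
      obtain ⟨m, hm⟩ := hmod.symm.dvd
      refine ⟨m, ?_⟩
      have e2 : ((N / l : ℕ) : ℝ) = N / l := Nat.cast_div hlN hlr.ne'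
      have e2' : ((N / l' : ℕ) : ℝ) = N / l' := Nat.cast_div hlN' hlr'.ne'
      have hm2 : ((r + j * (N / l) : ℕ) : ℝ) - ((r' + j' * (N / l') : ℕ) : ℝ) = N * m := by
        exact_mod_cast hm
      rw [Nat.cast_add, Nat.cast_mul, Nat.cast_add, Nat.cast_mul, e2, e2'] at hm2
      have : (m:ℝ) = (N * m) / N := by field_simp
      rw [this, ← hm2]
      field_simp
    have hclose : |(a:ℝ) / q + j / l - (a' / q' + j' / l') - m| ≤ 2 * τ := by
      have : (a:ℝ) / q + j / l - (a' / q' + j' / l') - m =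
        ((r':ℝ) / N - a' / q') - ((r:ℝ) / N - a / q) := by rw [← hm]; ring
      rw [this]
      refine (abs_sub _ _).trans ?_
      linarith
    have hint : (a * q' * l * l' + j * q * q' * l' - a' * q * l * l' - j' * q * q' * l
        - m * q * q' * l * l' : ℤ) = 0 := by
      rw [← Int.abs_lt_one_iff]
      have e : ((a * q' * l * l' + j * q * q' * l' - a' * q * l * l' - j' * q * q' * l
        - m * q * q' * l * l' : ℤ) : ℝ) = ((a:ℝ) / q + j / l - (a' / q' + j' / l') - m) * (q * q' * (l * l')) := by
        push_cast
        field_simp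
        ring
      have h1 : |((a * q' * l * l' + j * q * q' * l' - a' * q * l * l' - j' * q * q' * l
        - m * q * q' * l * l' : ℤ) : ℝ)| < 1 := by
        rw [e, abs_mul, abs_of_pos (by positivity : (0:ℝ) < q * q' * (l * l'))]
        have hτ0 : 0 ≤ 2 * τ := (abs_nonneg _).trans hclose
        refine lt_of_le_of_lt ?_ hτ
        have hb : (q:ℝ) ≤ Q := by exact_mod_cast hqQ
        have hb' : (q':ℝ) ≤ Q := by exact_mod_cast hqQ'
        have hc : (l:ℝ) ≤ L := by exact_mod_cast hlL
        have hc' : (l':ℝ) ≤ L := by exact_mod_cast hlL'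
        have : (q:ℝ) * q' * (l * l') ≤ Q ^ 2 * L ^ 2 := by
          rw [sq, sq]; gcongr
        gcongr
      exact_mod_cast h1
    have dvd1 : l ∣ l' := by
      have h1 : (l:ℤ) ∣ (j * q * q' : ℕ) * l' := by
        refine ⟨-(a * q' * l' - a' * q * l' - j' * q * q' - m * q * q' * l'), ?_⟩
        push_cast
        linear_combination hint
      have hc : Nat.Coprime (j * q * q') l :=
        Nat.Coprime.mul_left (Nat.Coprime.mul_left hj.2 (hcop q hq1 hqQ)) (hcop q' hq1' hqQ')
      have h2 : l ∣ (j * q * q') * l' := by exact_mod_cast h1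
      exact hc.symm.dvd_of_dvd_mul_left h2
    have dvd2 : l' ∣ l := by
      have h1 : (l':ℤ) ∣ (j' * q * q' : ℕ) * l := by
        refine ⟨(a * q' * l - a' * q * l + j * q * q' - m * q * q' * l), ?_⟩
        push_cast
        linear_combination -hint
      have hc : Nat.Coprime (j' * q * q') l' :=
        Nat.Coprime.mul_left (Nat.Coprime.mul_left hj'.2 (hcop' q hq1 hqQ)) (hcop' q' hq1' hqQ')
      have h2 : l' ∣ (j' * q * q') * l := by exact_mod_cast h1
      exact hc.symm.dvd_of_dvd_mul_left h2
    have hll : l = l' := Nat.dvd_antisymm dvd1 dvd2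
    subst hll
    have hjj : j = j' := by
      have hlz : (l:ℤ) ≠ 0 := by exact_mod_cast hl0.ne'
      have h1 : (l:ℤ) ∣ ((j:ℤ) - j') * (q * q' : ℕ) := by
        refine ⟨-(a * q' - a' * q - m * q * q'), ?_⟩
        apply mul_left_cancel₀ hlz
        push_cast
        linear_combination hint
      have hc : Nat.Coprime (q * q') l := Nat.Coprime.mul_left (hcop q hq1 hqQ) (hcop q' hq1' hqQ')
      have hc' : IsCoprime (l:ℤ) ((q * q' : ℕ) : ℤ) := (Nat.isCoprime_iff_coprime.mpr hc).symm
      have h3 := hc'.dvd_of_dvd_mul_right h1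
      have := Int.eq_zero_of_abs_lt_dvd h3 (by rw [abs_lt]; constructor <;> omega)
      omega
    subst hjj
    have hrr : r = r' := by
      have h1 : r ≡ r' [MOD N] := Nat.ModEq.add_right_cancel' _ heq
      exact Nat.ModEq.eq_of_lt_of_lt h1 (Finset.mem_range.mp (hM hr)) (Finset.mem_range.mp (hM hr'))
    subst hrr
    rfl
  rw [← Finset.sum_image (f := fun r : ℕ => ‖fh A ((r:ℝ) / N)‖ ^ 2)
    (g := fun i : (_ : ℕ) × ℕ × ℕ => (i.2.2 + i.2.1 * (N / i.1)) % N) hinj]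
  apply Finset.sum_le_sum_of_subset_of_nonneg
  · intro r hr
    rw [Finset.mem_image] at hr
    obtain ⟨i, _, rfl⟩ := hr
    exact Finset.mem_range.mpr (Nat.mod_lt _ hN)
  · intro _ _ _; positivity


lemma totient_ratio (K : ℕ) (hK : 0 < K) :
    (K:ℝ) / K.totient = ∏ p ∈ K.primeFactors, (1 - (p:ℝ)⁻¹)⁻¹ := by
  have h := Nat.totient_eq_mul_prod_factors K
  have h2 : (K.totient : ℝ) = K * ∏ p ∈ K.primeFactors, (1 - (p:ℝ)⁻¹) := by
    have := congrArg (Rat.cast : ℚ → ℝ) h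
    push_cast at this
    exact this
  have hKr : (K:ℝ) ≠ 0 := by positivity
  rw [Finset.prod_inv_distrib, h2, div_mul_eq_div_div, div_self hKr, one_div]

lemma sum_factored (K : ℕ) (hK : 0 < K) (T : Finset ℕ) (hT : ∀ n ∈ T, 0 < n ∧ ∀ p, p.Prime → p ∣ n → p ∣ K) :
    ∑ n ∈ T, 1 / (n:ℝ) ≤ K / K.totient := by
  let f : ℕ →* ℝ := 
    { toFun := fun n => (n:ℝ)⁻¹
      map_one' := by simp
      map_mul' := by intro a b; simp [mul_comm] }
  have hf : ∀ {p : ℕ}, p.Prime → ‖f p‖ < 1 := by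
    intro p hp
    change ‖(p:ℝ)⁻¹‖ < 1
    have : (1:ℝ) < p := by exact_mod_cast hp.one_lt
    rw [Real.norm_of_nonneg (by positivity)]
    exact inv_lt_one_of_one_lt₀ this
  obtain ⟨hs, hh⟩ := EulerProduct.summable_and_hasSum_factoredNumbers_prod_filter_prime_geometric hf K.primeFactors
  have e : ∏ p ∈ K.primeFactors with p.Prime, (1 - f p)⁻¹ = (K:ℝ) / K.totient := by
    rw [totient_ratio K hK, Finset.filter_true_of_mem (fun p hp => Nat.prime_of_mem_primeFactors hp)]
    rfl
  rw [e] at hh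
  rw [← hh.tsum_eq]
  have hmem : ∀ n ∈ T, n ∈ Nat.factoredNumbers K.primeFactors := by
    intro n hn
    obtain ⟨h0, h1⟩ := hT n hn
    rw [Nat.mem_factoredNumbers']
    intro p hp hpn
    exact Nat.mem_primeFactors.mpr ⟨hp, h1 p hp hpn, hK.ne'⟩
  have := hh.summable.sum_le_tsum (T.attach.map ⟨fun x => (⟨x.1, hmem x.1 x.2⟩ : Nat.factoredNumbers K.primeFactors), by
    intro a b hab; exact Subtype.ext (Subtype.mk.inj hab)⟩) (by
      intro i _
      change (0:ℝ) ≤ ((i:ℕ):ℝ)⁻¹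
      positivity)
  refine le_trans (le_of_eq ?_) this
  rw [Finset.sum_map, ← Finset.sum_attach]
  apply Finset.sum_congr rfl
  intro x _
  change _ = ((x:ℕ):ℝ)⁻¹
  rw [one_div]

noncomputable def sqS (L D : ℕ) : Finset ℕ := (Finset.Icc 1 L).filter (fun l => Squarefree l ∧ Nat.Coprime l D)

lemma sum_phi_lower (L D : ℕ) (hD : 0 < D) :
    Real.log L ≤ (D / D.totient : ℝ) * ∑ l ∈ sqS L D, 1 / (l.totient : ℝ) := by
  have h0 : Real.log L ≤ ∑ n ∈ Finset.Icc 1 L, 1 / (n:ℝ) := by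
    rcases Nat.eq_zero_or_pos L with rfl | hL
    · simp
    have := log_add_one_le_harmonic L
    rw [harmonic_eq_sum_Icc] at this
    push_cast at this
    simp only [one_div]
    refine le_trans ?_ this
    apply Real.log_le_log (by exact_mod_cast hL)
    linarith
  refine h0.trans ?_
  let f : ℕ → ℕ := fun n => ∏ p ∈ n.primeFactors.filter (fun p => ¬ p ∣ D), p
  have hfd : ∀ n, f n ∣ n := by
    intro n
    refine dvd_trans (Finset.prod_dvd_prod_of_subset _ _ _ (Finset.filter_subset _ _)) (Nat.prod_primeFactors_dvd n)
  have hpf : ∀ n p, p.Prime → p ∣ f n → p ∣ n ∧ ¬ p ∣ D := by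
    intro n p hp hpd
    rw [Prime.dvd_finsetProd_iff hp.prime] at hpd
    obtain ⟨q, hq, hpq⟩ := hpd
    rw [Finset.mem_filter] at hq
    have hqp := Nat.prime_of_mem_primeFactors hq.1
    rw [(Nat.prime_dvd_prime_iff_eq hp hqp).mp hpq]
    exact ⟨Nat.dvd_of_mem_primeFactors hq.1, hq.2⟩
  have hmaps : ∀ n ∈ Finset.Icc 1 L, f n ∈ sqS L D := by
    intro n hn
    rw [Finset.mem_Icc] at hn
    unfold sqS
    rw [Finset.mem_filter, Finset.mem_Icc]
    have h1 : f n ≤ n := Nat.le_of_dvd (by omega) (hfd n)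
    have h2 : 0 < f n := Nat.pos_of_dvd_of_pos (hfd n) (by omega)
    refine ⟨⟨h2, by omega⟩, ?_, ?_⟩
    · rw [Nat.squarefree_iff_prime_squarefree]
      intro p hp hpp
      have hp1 := hpf n p hp (dvd_trans (dvd_mul_right p p) hpp)
      have hmem : p ∈ n.primeFactors.filter (fun p => ¬ p ∣ D) :=
        Finset.mem_filter.mpr ⟨Nat.mem_primeFactors.mpr ⟨hp, hp1.1, by omega⟩, hp1.2⟩
      have e : f n = p * ∏ q ∈ (n.primeFactors.filter (fun p => ¬ p ∣ D)).erase p, q :=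
        (Finset.mul_prod_erase _ (fun x => x) hmem).symm
      rw [e] at hpp
      have h3 := Nat.dvd_of_mul_dvd_mul_left hp.pos hpp
      rw [Prime.dvd_finsetProd_iff hp.prime] at h3
      obtain ⟨q, hq, hpq⟩ := h3
      rw [Finset.mem_erase, Finset.mem_filter] at hq
      have hqp := Nat.prime_of_mem_primeFactors hq.2.1
      exact hq.1 ((Nat.prime_dvd_prime_iff_eq hp hqp).mp hpq).symm
    · apply Nat.Coprime.symm
      apply Nat.coprime_of_dvd
      intro p hp hpD hpn
      exact (hpf n p hp hpn).2 hpD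
  rw [← Finset.sum_fiberwise_of_maps_to hmaps, Finset.mul_sum]
  apply Finset.sum_le_sum
  intro l hl
  unfold sqS at hl
  rw [Finset.mem_filter, Finset.mem_Icc] at hl
  obtain ⟨⟨hl1, hlL⟩, hsq, hcop⟩ := hl
  have hlr : (0:ℝ) < l := by exact_mod_cast hl1
  set T := ((Finset.Icc 1 L).filter (fun n => f n = l)).image (fun n => n / l) with hT
  have hinj : Set.InjOn (fun n => n / l) ((Finset.Icc 1 L).filter (fun n => f n = l) : Finset ℕ) := by
    intro a ha b hb hab
    simp only [Finset.coe_filter, Set.mem_ofPred_eq] at ha hb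
    have h1 : l ∣ a := ha.2 ▸ hfd a
    have h2 : l ∣ b := hb.2 ▸ hfd b
    simp only at hab
    rw [← Nat.mul_div_cancel' h1, ← Nat.mul_div_cancel' h2, hab]
  have key := sum_factored (D * l) (by positivity) T (by
    intro c hc
    rw [hT, Finset.mem_image] at hc
    obtain ⟨n, hn, rfl⟩ := hc
    rw [Finset.mem_filter, Finset.mem_Icc] at hn
    have h1 : l ∣ n := hn.2 ▸ hfd n
    refine ⟨Nat.div_pos (Nat.le_of_dvd (by omega) h1) hl1, ?_⟩
    intro p hp hpn
    have hpn' : p ∣ n := dvd_trans hpn (Nat.div_dvd_of_dvd h1)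
    by_cases hpD : p ∣ D
    · exact dvd_mul_of_dvd_left hpD _
    · apply dvd_mul_of_dvd_right
      rw [← hn.2]
      exact Finset.dvd_prod_of_mem _ (Finset.mem_filter.mpr ⟨Nat.mem_primeFactors.mpr ⟨hp, hpn', by omega⟩, hpD⟩))
  rw [hT, Finset.sum_image hinj] at key
  have e1 : ∑ n ∈ (Finset.Icc 1 L).filter (fun n => f n = l), 1 / (n:ℝ) =
      1 / l * ∑ n ∈ (Finset.Icc 1 L).filter (fun n => f n = l), 1 / ((n / l : ℕ):ℝ) := by
    rw [Finset.mul_sum]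
    apply Finset.sum_congr rfl
    intro n hn
    rw [Finset.mem_filter, Finset.mem_Icc] at hn
    have h1 : l ∣ n := hn.2 ▸ hfd n
    rw [Nat.cast_div h1 hlr.ne']
    field_simp
  rw [e1]
  have ht : (0:ℝ) < l.totient := by exact_mod_cast Nat.totient_pos.mpr hl1
  have htD : (0:ℝ) < D.totient := by exact_mod_cast Nat.totient_pos.mpr hD
  rw [Nat.totient_mul hcop.symm] at key
  calc 1 / (l:ℝ) * _ ≤ 1 / l * (((D * l : ℕ):ℝ) / ((D.totient * l.totient : ℕ) : ℝ)) := by gcongr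
    _ = _ := by push_cast; field_simp

lemma totient_ratio_mul (a b : ℕ) (ha : 0 < a) (hb : 0 < b) :
    ((a * b : ℕ) : ℝ) / (a * b).totient ≤ (a / a.totient) * (b / b.totient) := by
  have h := Nat.totient_super_multiplicative a b
  have h1 : (0:ℝ) < a.totient := by exact_mod_cast Nat.totient_pos.mpr ha
  have h2 : (0:ℝ) < b.totient := by exact_mod_cast Nat.totient_pos.mpr hb
  have h' : (a.totient : ℝ) * b.totient ≤ (a*b).totient := by exact_mod_cast h
  rw [div_mul_div_comm]
  push_cast
  gcongr

noncomputable def gq (I : ℕ) : ℝ := ((2^I).factorial : ℝ) / ((2^I).factorial).totient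

lemma primeFactors_fact (n : ℕ) : n.factorial.primeFactors = (Finset.Icc 1 n).filter Nat.Prime := by
  ext p
  rw [Nat.mem_primeFactors, Finset.mem_filter, Finset.mem_Icc]
  constructor
  · rintro ⟨hp, h, _⟩
    exact ⟨⟨hp.one_lt.le, hp.dvd_factorial.mp h⟩, hp⟩
  · rintro ⟨⟨_, h⟩, hp⟩
    exact ⟨hp, hp.dvd_factorial.mpr h, Nat.factorial_ne_zero n⟩

lemma gq_step (I : ℕ) (hI : 1 ≤ I) : gq (I+1) ≤ gq I * Real.exp (4 / I) := by
  unfold gq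
  rw [totient_ratio _ (Nat.factorial_pos _), totient_ratio _ (Nat.factorial_pos _)]
  rw [primeFactors_fact, primeFactors_fact]
  have hle : 2^I ≤ 2^(I+1) := Nat.pow_le_pow_right (by norm_num) (by omega)
  have hsub : (Finset.Icc 1 (2^I)).filter Nat.Prime ⊆ (Finset.Icc 1 (2^(I+1))).filter Nat.Prime := by
    apply Finset.filter_subset_filter
    exact Finset.Icc_subset_Icc_right hle
  rw [← Finset.prod_sdiff hsub, mul_comm]
  set T := (Finset.Icc 1 (2^(I+1))).filter Nat.Prime \ (Finset.Icc 1 (2^I)).filter Nat.Prime with hT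
  have hTm : ∀ p ∈ T, p.Prime ∧ 2^I + 1 ≤ p ∧ p ≤ 2^(I+1) := by
    intro p hp
    rw [hT, Finset.mem_sdiff, Finset.mem_filter, Finset.mem_filter, Finset.mem_Icc, Finset.mem_Icc] at hp
    refine ⟨hp.1.2, ?_, hp.1.1.2⟩
    by_contra h
    exact hp.2 ⟨⟨hp.1.1.1, by omega⟩, hp.1.2⟩
  have hnn : 0 ≤ ∏ p ∈ (Finset.Icc 1 (2^I)).filter Nat.Prime, (1 - (p:ℝ)⁻¹)⁻¹ := by
    apply Finset.prod_nonneg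
    intro p hp
    rw [Finset.mem_filter] at hp
    have : (1:ℝ) < p := by exact_mod_cast hp.2.one_lt
    have := inv_lt_one_of_one_lt₀ this
    apply inv_nonneg.mpr; linarith
  apply mul_le_mul_of_nonneg_left _ hnn
  have h1 : ∀ p ∈ T, (1 - (p:ℝ)⁻¹)⁻¹ ≤ Real.exp (1 / 2^I) := by
    intro p hp
    obtain ⟨_, h2, _⟩ := hTm p hp
    have h3 : (2:ℝ)^I + 1 ≤ p := by exact_mod_cast h2
    have h4 : (0:ℝ) < 2^I := by positivity
    have e : (1 - (p:ℝ)⁻¹)⁻¹ = 1 / (p - 1) + 1 := by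
      have : (p:ℝ) ≠ 0 := by linarith
      have : (p:ℝ) - 1 ≠ 0 := by linarith
      field_simp
      ring
    rw [e]
    refine le_trans (Real.add_one_le_exp _) ?_
    apply Real.exp_le_exp.mpr
    apply one_div_le_one_div_of_le h4
    linarith
  have h0 : ∀ p ∈ T, (0:ℝ) ≤ (1 - (p:ℝ)⁻¹)⁻¹ := by
    intro p hp
    have : (1:ℝ) < p := by exact_mod_cast (hTm p hp).1.one_lt
    have := inv_lt_one_of_one_lt₀ this
    apply inv_nonneg.mpr; linarith
  refine (Finset.prod_le_prod h0 h1).trans ?_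
  rw [Finset.prod_const, ← Real.exp_nat_mul]
  apply Real.exp_le_exp.mpr
  have hth : (T.card : ℝ) * (I * Real.log 2) ≤ Real.log 4 * 2^(I+1) := by
    have h5 := Chebyshev.theta_le_log4_mul_x (x := (2:ℝ)^(I+1)) (by positivity)
    refine le_trans ?_ h5
    rw [Chebyshev.theta_eq_sum_Icc]
    have hfl : ⌊(2:ℝ)^(I+1)⌋₊ = 2^(I+1) := by
      have : (2:ℝ)^(I+1) = ((2^(I+1) : ℕ) : ℝ) := by push_cast; rfl
      rw [this, Nat.floor_natCast]
    rw [hfl]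
    rw [← nsmul_eq_mul, ← Finset.sum_const]
    have hTs : T ⊆ (Finset.Icc 0 (2^(I+1))).filter Nat.Prime := by
      intro p hp
      obtain ⟨a, b, c⟩ := hTm p hp
      exact Finset.mem_filter.mpr ⟨Finset.mem_Icc.mpr ⟨by omega, c⟩, a⟩
    refine le_trans ?_ (Finset.sum_le_sum_of_subset_of_nonneg hTs ?_)
    · apply Finset.sum_le_sum
      intro p hp
      rw [← Real.log_pow]
      apply Real.log_le_log (by positivity)
      have := (hTm p hp).2.1
      exact_mod_cast (by omega : 2^I ≤ p)
    · intro p _ _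
      exact Real.log_natCast_nonneg p
  have hlog4 : Real.log 4 = 2 * Real.log 2 := by
    rw [show (4:ℝ) = 2^2 by norm_num, Real.log_pow]; push_cast; ring
  have hl2 : 0 < Real.log 2 := Real.log_pos (by norm_num)
  rw [hlog4, pow_succ] at hth
  have hIr : (0:ℝ) < I := by exact_mod_cast hI
  have h2I : (0:ℝ) < 2^I := by positivity
  have : (T.card : ℝ) * I ≤ 4 * 2^I := by
    have : (T.card : ℝ) * I * Real.log 2 ≤ 4 * 2^I * Real.log 2 := by linarith
    exact le_of_mul_le_mul_right this hl2
  rw [mul_one_div, div_le_div_iff₀ h2I hIr]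
  exact this

lemma gq_bound : ∃ C : ℝ, 0 < C ∧ ∀ I : ℕ, 1 ≤ I → gq I ≤ C * (I:ℝ)^8 := by
  have hg : 0 < gq 1 := by
    unfold gq
    have : 0 < ((2^1).factorial).totient := Nat.totient_pos.mpr (Nat.factorial_pos _)
    have h2 := Nat.factorial_pos (2^1)
    positivity
  refine ⟨gq 1, hg, ?_⟩
  intro I hI
  induction I, hI using Nat.le_induction with
  | base => simp
  | succ I hI ih =>
    refine (gq_step I hI).trans ?_
    have hIr : (0:ℝ) < I := by exact_mod_cast hI
    have h1I : (1:ℝ) ≤ I := by exact_mod_cast hI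
    have h1 : Real.exp (4 / (I:ℝ)) ≤ ((I + 1) / I)^8 := by
      have h2 : Real.exp (1 / (2 * I : ℝ)) ≤ (I+1) / I := by
        have h3 : Real.exp (-(1 / (2 * I : ℝ))) ≥ 1 - 1 / (2 * I) := by
          have := Real.add_one_le_exp (-(1 / (2 * I : ℝ))); linarith
        rw [Real.exp_neg] at h3
        have h4 : (0:ℝ) < Real.exp (1 / (2 * I : ℝ)) := Real.exp_pos _
        have h6 : (0:ℝ) < 1 - 1 / (2 * I) := by
          rw [sub_pos, div_lt_one (by positivity)]; linarith
        have h5 : Real.exp (1 / (2 * I : ℝ)) ≤ (1 - 1 / (2 * (I:ℝ)))⁻¹ := by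
          rw [le_inv_comm₀ h4 h6]; exact h3
        refine h5.trans ?_
        have e : (1 - 1 / (2 * I : ℝ)) = (2 * I - 1) / (2 * I) := by field_simp
        rw [e, inv_div, div_le_div_iff₀ (by linarith) hIr]
        nlinarith
      calc Real.exp (4 / (I:ℝ)) = Real.exp (1 / (2 * I : ℝ)) ^ 8 := by
            rw [← Real.exp_nat_mul]; congr 1; push_cast; field_simp; norm_num
        _ ≤ _ := by gcongr
    calc gq I * Real.exp (4 / I) ≤ (gq 1 * (I:ℝ)^8) * ((I + 1) / I)^8 := by gcongr
      _ = _ := by push_cast; field_simp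


section prm
open ArithmeticFunction ArithmeticFunction.vonMangoldt LSeries Complex in
lemma residue_two_sided {q : ℕ} [NeZero q] {a : ZMod q} (ha : IsUnit a) :
    ∃ C : ℝ, ∀ {x : ℝ} (_ : x ∈ Set.Ioc (1:ℝ) 2),
      |∑' n, residueClass a n / (n : ℝ) ^ x - (q.totient : ℝ)⁻¹ / (x - 1)| ≤ C := by
  have H {x : ℝ} (hx : 1 < x) :
      ∑' n, residueClass a n / (n : ℝ) ^ x =
        (LFunctionResidueClassAux a x).re + (q.totient : ℝ)⁻¹ / (x - 1) := by
    refine ofReal_injective ?_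
    simp only [ofReal_tsum, ofReal_div, ofReal_cpow (Nat.cast_nonneg _), ofReal_natCast,
      ofReal_add, ofReal_inv, ofReal_sub, ofReal_one]
    simp_rw [← LFunctionResidueClassAux_real ha hx,
      eqOn_LFunctionResidueClassAux ha <| Set.mem_ofPred.mpr (ofReal_re x ▸ hx), sub_add_cancel,
      LSeries, term]
    refine tsum_congr fun n ↦ ?_
    split_ifs with hn
    · simp only [hn, residueClass_apply_zero, ofReal_zero, zero_div]
    · rfl
  have : ContinuousOn (fun x : ℝ ↦ (LFunctionResidueClassAux a x).re) (Set.Icc 1 2) :=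
    continuous_re.continuousOn.comp (t := Set.univ) (continuousOn_LFunctionResidueClassAux a)
      (fun ⦃x⦄ a ↦ trivial) |>.comp continuous_ofReal.continuousOn fun x hx ↦ by
        simpa only [Set.mem_ofPred_eq, ofReal_re] using hx.1
  obtain ⟨C, hC⟩ := IsCompact.exists_bound_of_continuousOn isCompact_Icc this
  refine ⟨C, fun {x} hx ↦ ?_⟩
  rw [H hx.1, add_sub_cancel_right]
  exact hC x (Set.mem_Icc_of_Ioc hx)

noncomputable def an (V b n : ℕ) : ℝ :=
  if n.Prime ∧ (n : ZMod V) = (b : ZMod V) then Real.log n / n else 0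

lemma an_nonneg (V b n : ℕ) : 0 ≤ an V b n := by
  unfold an
  split_ifs
  · exact div_nonneg (Real.log_natCast_nonneg n) (Nat.cast_nonneg n)
  · rfl

open ArithmeticFunction ArithmeticFunction.vonMangoldt LSeries in
lemma an_two_sided (V b : ℕ) (hV : 0 < V) (hb : Nat.Coprime b V) :
    ∃ C : ℝ, ∀ ε : ℝ, 0 < ε → ε ≤ 1 → Summable (fun n => an V b n * (n:ℝ) ^ (-ε)) ∧
      |∑' n, an V b n * (n:ℝ)^(-ε) - (V.totient : ℝ)⁻¹ / ε| ≤ C := by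
  have : NeZero V := ⟨hV.ne'⟩
  have ha : IsUnit (b : ZMod V) := (ZMod.isUnit_iff_coprime b V).mpr hb
  obtain ⟨C, hC⟩ := residue_two_sided ha
  have hnp := summable_residueClass_non_primes_div (b : ZMod V)
  set B := ∑' n : ℕ, (if n.Prime then 0 else residueClass (b : ZMod V) n) / n with hB
  refine ⟨C + B, ?_⟩
  intro ε h0 h1
  have hs : Summable (fun n : ℕ => residueClass (b : ZMod V) n / (n:ℝ)^(1+ε)) :=
    summable_real_of_abscissaOfAbsConv_lt <|
        (abscissaOfAbsConv_residueClass_le_one _).trans_lt <| by exact_mod_cast (by linarith : 1 < 1 + ε)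
  have hdec : ∀ n : ℕ, an V b n * (n:ℝ)^(-ε) = residueClass (b : ZMod V) n / (n:ℝ)^(1+ε) -
      (if n.Prime then 0 else residueClass (b : ZMod V) n) / n * (n:ℝ)^(-ε) := by
    intro n
    rcases Nat.eq_zero_or_pos n with rfl | hn
    · simp [an]
    have hnr : (0:ℝ) < n := by exact_mod_cast hn
    unfold an
    rw [Real.rpow_add hnr, Real.rpow_one, Real.rpow_neg hnr.le]
    by_cases hp : n.Prime
    · by_cases hm : (n : ZMod V) = (b : ZMod V)
      · simp only [hp, hm, and_self, if_true, residueClass, Set.indicator_apply, Set.mem_ofPred_eq, vonMangoldt_apply_prime hp]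
        field_simp
        simp
      · simp [hp, hm, residueClass]
    · simp only [hp, false_and, if_false]
      field_simp
      simp
  have hle : ∀ n : ℕ, (if n.Prime then 0 else residueClass (b : ZMod V) n) / n * (n:ℝ)^(-ε) ≤
      (if n.Prime then 0 else residueClass (b : ZMod V) n) / n := by
    intro n
    rcases Nat.eq_zero_or_pos n with rfl | hn
    · simp
    have : 0 ≤ (if n.Prime then 0 else residueClass (b : ZMod V) n) / n := by
      apply div_nonneg _ (Nat.cast_nonneg n)
      split_ifs
      · rfl
      · exact residueClass_nonneg _ _
    apply mul_le_of_le_one_right this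
    apply Real.rpow_le_one_of_one_le_of_nonpos (by exact_mod_cast hn) (by linarith)
  have hnn : ∀ n : ℕ, 0 ≤ (if n.Prime then 0 else residueClass (b : ZMod V) n) / n * (n:ℝ)^(-ε) := by
    intro n
    apply mul_nonneg _ (by positivity)
    apply div_nonneg _ (Nat.cast_nonneg n)
    split_ifs
    · rfl
    · exact residueClass_nonneg _ _
  have hs2 := Summable.of_nonneg_of_le hnn hle hnp
  simp_rw [hdec]
  refine ⟨hs.sub hs2, ?_⟩
  rw [hs.tsum_sub hs2]
  have h2 : ∑' n : ℕ, (if n.Prime then 0 else residueClass (b : ZMod V) n) / n * (n:ℝ)^(-ε) ≤ B :=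
    hs2.tsum_le_tsum hle hnp
  have h3 : 0 ≤ ∑' n : ℕ, (if n.Prime then 0 else residueClass (b : ZMod V) n) / n * (n:ℝ)^(-ε) := tsum_nonneg hnn
  have h4 := hC (x := 1 + ε) ⟨by linarith, by linarith⟩
  rw [add_sub_cancel_left] at h4
  rw [abs_le] at h4 ⊢
  constructor <;> linarith [h4.1, h4.2]

lemma window_poly (δ : ℝ) (h0 : 0 < δ) (h1 : δ ≤ 1/2) :
    ∃ q : ℝ[X], (∀ x, 0 ≤ x → x ≤ 1 → δ ≤ |x - 1/2| → q.eval x ≤ 0) ∧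
      (∀ x, 0 ≤ x → x ≤ 1 → q.eval x ≤ 1) ∧
      0 < ∑ j ∈ Finset.range (q.natDegree + 1), q.coeff j / (j + 1) := by
  have hint : ∀ q : ℝ[X], ∑ j ∈ Finset.range (q.natDegree + 1), q.coeff j / (j + 1) = ∫ x in (0:ℝ)..1, q.eval x := by
    intro q
    simp_rw [Polynomial.eval_eq_sum_range]
    rw [intervalIntegral.integral_finsetSum]
    · apply Finset.sum_congr rfl
      intro j _
      rw [intervalIntegral.integral_const_mul, integral_pow]
      simp [div_eq_mul_inv]
    · intro j _
      apply Continuous.intervalIntegrable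
      fun_prop
  have hd4 : 0 ≤ 1 - 4 * δ^2 := by nlinarith
  have hd1 : 0 < 1 - δ^2 := by nlinarith
  obtain ⟨K, hK⟩ : ∃ K : ℕ, (1 - 4 * δ^2)^K < δ * (1 - δ^2)^K := by
    have h2 : (1 - 4 * δ^2) / (1 - δ^2) < 1 := by rw [div_lt_one hd1]; nlinarith
    obtain ⟨K, hK⟩ := exists_pow_lt_of_lt_one h0 h2
    refine ⟨K, ?_⟩
    rwa [div_pow, div_lt_iff₀ (by positivity)] at hK
  refine ⟨(C 4 * X * (1 - X))^K - C ((1 - 4 * δ^2)^K), ?_, ?_, ?_⟩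
  · intro x hx hx1 hd
    simp only [eval_sub, eval_pow, eval_mul, eval_C, eval_X, eval_one]
    have h2 : δ^2 ≤ (x - 1/2)^2 := by
      rw [← sq_abs (x - 1/2)]; gcongr
    have h3 : (4 * x * (1 - x))^K ≤ (1 - 4 * δ^2)^K := by
      apply pow_le_pow_left₀
      · nlinarith
      · nlinarith
    linarith
  · intro x hx hx1
    simp only [eval_sub, eval_pow, eval_mul, eval_C, eval_X, eval_one]
    have h3 : (4 * x * (1 - x))^K ≤ 1 := by
      apply pow_le_one₀
      · nlinarith
      · nlinarith [sq_nonneg (x - 1/2)]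
    have : 0 ≤ (1 - 4 * δ^2)^K := by positivity
    linarith
  · rw [hint]
    simp only [eval_sub, eval_pow, eval_mul, eval_C, eval_X, eval_one]
    have hci : ∀ a b : ℝ, IntervalIntegrable (fun x : ℝ => (4 * x * (1 - x))^K) MeasureTheory.volume a b := by
      intro a b
      apply Continuous.intervalIntegrable
      fun_prop
    rw [intervalIntegral.integral_sub (hci _ _) (by simp), intervalIntegral.integral_const]
    simp only [sub_zero, one_smul, sub_pos]
    refine hK.trans_le ?_
    have h5 : ∫ x in (1/2 - δ/2)..(1/2 + δ/2), (4 * x * (1 - x))^K ≤ ∫ x in (0:ℝ)..1, (4 * x * (1 - x))^K := by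
      apply intervalIntegral.integral_mono_interval (by linarith) (by linarith) (by linarith) _ (hci _ _)
      rw [Filter.EventuallyLE, MeasureTheory.ae_restrict_iff' measurableSet_Ioc]
      apply Filter.Eventually.of_forall
      intro x hx
      simp only [Pi.zero_apply]
      apply pow_nonneg
      nlinarith [hx.1, hx.2]
    refine le_trans ?_ h5
    have h6 : ∫ x in (1/2 - δ/2)..(1/2 + δ/2), (1 - δ^2)^K = δ * (1 - δ^2)^K := by
      rw [intervalIntegral.integral_const, smul_eq_mul]; ring
    rw [← h6]
    apply intervalIntegral.integral_mono_on (by linarith) (by simp) (hci _ _)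
    intro x hx
    apply pow_le_pow_left₀ hd1.le
    nlinarith [hx.1, hx.2]
end prm


lemma window_sum (M : ℕ) (hM : 1 ≤ M) : ∃ κ : ℝ, 0 < κ ∧ ∀ V b : ℕ, 0 < V → Nat.Coprime b V →
    ∃ Z0 : ℕ, ∀ Z : ℕ, Z0 ≤ Z → κ * Real.log Z / V.totient ≤
      ∑ n ∈ Finset.Icc (2 * V * Z^(M-1)) (Z^(M+1)), an V b n := by
  have hMr : (1:ℝ) ≤ M := by exact_mod_cast hM
  have hl2 : 0 < Real.log 2 := Real.log_pos (by norm_num)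
  have ex2 : Real.exp (-Real.log 2) = 1/2 := by rw [Real.exp_neg, Real.exp_log (by norm_num)]; norm_num
  obtain ⟨δ, hδ0, hδ1, hδa, hδb⟩ : ∃ δ : ℝ, 0 < δ ∧ δ ≤ 1/2 ∧ 1/2 + δ ≤ Real.exp (-(Real.log 2 * (1 - 1/(2*M)))) ∧
      Real.exp (-(Real.log 2 * (1 + 1/M))) ≤ 1/2 - δ := by
    have h1 : 1/2 < Real.exp (-(Real.log 2 * (1 - 1/(2*M)))) := by
      rw [← ex2]; apply Real.exp_lt_exp.mpr
      have : 0 < Real.log 2 * (1/(2*M)) := by positivity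
      linarith
    have h2 : Real.exp (-(Real.log 2 * (1 + 1/M))) < 1/2 := by
      rw [← ex2]; apply Real.exp_lt_exp.mpr
      have : 0 < Real.log 2 * (1/M) := by positivity
      linarith
    refine ⟨min (1/2) (min (Real.exp (-(Real.log 2 * (1 - 1/(2*M)))) - 1/2) (1/2 - Real.exp (-(Real.log 2 * (1 + 1/M))))), ?_, ?_, ?_, ?_⟩
    · apply lt_min (by norm_num) (lt_min (by linarith) (by linarith))
    · exact min_le_left _ _
    · have := (min_le_right (1/2:ℝ) (min (Real.exp (-(Real.log 2 * (1 - 1/(2*M)))) - 1/2) (1/2 - Real.exp (-(Real.log 2 * (1 + 1/M)))))).trans (min_le_left _ _)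
      linarith
    · have := (min_le_right (1/2:ℝ) (min (Real.exp (-(Real.log 2 * (1 - 1/(2*M)))) - 1/2) (1/2 - Real.exp (-(Real.log 2 * (1 + 1/M)))))).trans (min_le_right _ _)
      linarith
  obtain ⟨q, hq1, hq2, hq3⟩ := window_poly δ hδ0 hδ1
  set κ := ∑ j ∈ Finset.range (q.natDegree + 1), q.coeff j / (j + 1) with hκ
  refine ⟨κ * M / (2 * Real.log 2), by positivity, ?_⟩
  intro V b hV hb
  obtain ⟨C, hC⟩ := an_two_sided V b hV hb
  have hφ : (0:ℝ) < V.totient := by exact_mod_cast Nat.totient_pos.mpr hV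
  set d := q.natDegree with hd
  set C' := C * ∑ j ∈ Finset.range (d+1), |q.coeff j| with hC'
  have htend : Filter.Tendsto (fun Z : ℕ => Real.log (Z:ℝ)) Filter.atTop Filter.atTop :=
    Real.tendsto_log_atTop.comp tendsto_natCast_atTop_atTop
  have hev := htend.eventually_ge_atTop (max 1 (max ((d+1) * Real.log 2) (max (2 * Real.log (2 * V)) (C' * (2 * Real.log 2 * V.totient) / (κ * M)))))
  obtain ⟨Z0, hZ0⟩ := Filter.eventually_atTop.mp hev
  refine ⟨max Z0 1, ?_⟩
  intro Z hZ
  have hZ1 : 1 ≤ Z := le_of_max_le_right hZ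
  have hlogZ := hZ0 Z (le_of_max_le_left hZ)
  have hA : 1 ≤ Real.log Z := (le_max_left _ _).trans hlogZ
  have hB : (d+1) * Real.log 2 ≤ Real.log Z := ((le_max_left _ _).trans (le_max_right _ _)).trans hlogZ
  have hD : 2 * Real.log (2 * V) ≤ Real.log Z := ((le_max_left _ _).trans ((le_max_right _ _).trans (le_max_right _ _))).trans hlogZ
  have hE : C' * (2 * Real.log 2 * V.totient) / (κ * M) ≤ Real.log Z := ((le_max_right _ _).trans ((le_max_right _ _).trans (le_max_right _ _))).trans hlogZ
  have hZr : (0:ℝ) < Z := by exact_mod_cast hZ1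
  set lz := Real.log Z with hlz
  set ε := Real.log 2 / (M * lz) with hε
  have hlz0 : 0 < lz := by linarith
  have hε0 : 0 < ε := by positivity
  have hεd : (d + 1) * ε ≤ 1 := by
    rw [hε, mul_div_assoc', div_le_one (by positivity)]
    nlinarith
  have hεlz : ε * lz = Real.log 2 / M := by rw [hε]; field_simp
  -- the weighted sum
  set f : ℕ → ℝ := fun n => an V b n * ((n:ℝ)^(-ε) * q.eval ((n:ℝ)^(-ε))) with hf
  have hfj : ∀ n : ℕ, f n = ∑ j ∈ Finset.range (d+1), q.coeff j * (an V b n * (n:ℝ)^(-((j+1) * ε))) := by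
    intro n
    rw [hf]
    simp only
    rw [Polynomial.eval_eq_sum_range, Finset.mul_sum, Finset.mul_sum]
    apply Finset.sum_congr rfl
    intro j _
    have : (n:ℝ)^(-((j+1) * ε)) = (n:ℝ)^(-ε) * ((n:ℝ)^(-ε))^j := by
      rw [← pow_succ', ← Real.rpow_natCast, ← Real.rpow_mul (Nat.cast_nonneg n)]
      congr 1; push_cast; ring
    rw [this]; ring
  have hj : ∀ j ∈ Finset.range (d+1), 0 < ((j:ℝ)+1) * ε ∧ ((j:ℝ)+1) * ε ≤ 1 := by
    intro j hj
    rw [Finset.mem_range] at hj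
    have : (j:ℝ) ≤ d := by exact_mod_cast (by omega : j ≤ d)
    refine ⟨by positivity, ?_⟩
    refine le_trans ?_ hεd
    gcongr
  have hsumm : Summable f := by
    have : f = fun n => ∑ j ∈ Finset.range (d+1), q.coeff j * (an V b n * (n:ℝ)^(-((j+1) * ε))) := funext hfj
    rw [this]
    apply summable_sum
    intro j hjj
    exact ((hC _ (hj j hjj).1 (hj j hjj).2).1).mul_left _
  have htsum : ∑' n, f n = ∑ j ∈ Finset.range (d+1), q.coeff j * ∑' n, an V b n * (n:ℝ)^(-((j+1) * ε)) := by
    have : f = fun n => ∑ j ∈ Finset.range (d+1), q.coeff j * (an V b n * (n:ℝ)^(-((j+1) * ε))) := funext hfj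
    rw [this, Summable.tsum_finsetSum]
    · apply Finset.sum_congr rfl
      intro j _
      rw [tsum_mul_left]
    · intro j hjj
      exact ((hC _ (hj j hjj).1 (hj j hjj).2).1).mul_left _
  have hlow : κ * (V.totient : ℝ)⁻¹ / ε - C' ≤ ∑' n, f n := by
    rw [htsum]
    have : κ * (V.totient : ℝ)⁻¹ / ε - C' = ∑ j ∈ Finset.range (d+1), (q.coeff j * ((V.totient : ℝ)⁻¹ / ((j+1) * ε)) - C * |q.coeff j|) := by
      rw [Finset.sum_sub_distrib, ← Finset.mul_sum, hC', hκ, Finset.sum_mul, Finset.sum_div]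
      congr 1
      apply Finset.sum_congr rfl
      intro j _
      field_simp
    rw [this]
    apply Finset.sum_le_sum
    intro j hjj
    have h1 := (hC _ (hj j hjj).1 (hj j hjj).2).2
    set S := ∑' n, an V b n * (n:ℝ)^(-((j+1) * ε))
    have h2 : |q.coeff j * (S - (V.totient : ℝ)⁻¹ / ((j+1) * ε))| ≤ C * |q.coeff j| := by
      rw [abs_mul, mul_comm C]
      gcongr
    have := (abs_le.mp h2).1
    linarith
  have hup : ∑' n, f n ≤ ∑ n ∈ Finset.Icc (2 * V * Z^(M-1)) (Z^(M+1)), an V b n := by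
    have hx0 : ∀ n : ℕ, 0 ≤ (n:ℝ)^(-ε) := fun n => by positivity
    have hx1 : ∀ n : ℕ, (n:ℝ)^(-ε) ≤ 1 := by
      intro n
      rcases Nat.eq_zero_or_pos n with rfl | hn
      · rw [Nat.cast_zero, Real.zero_rpow (by linarith)]; norm_num
      · exact Real.rpow_le_one_of_one_le_of_nonpos (by exact_mod_cast hn) (by linarith)
    refine le_trans ?_ ((Finset.sum_le_sum (s := Finset.Icc (2 * V * Z^(M-1)) (Z^(M+1))) (f := f) ?_))
    · rw [← hsumm.sum_add_tsum_subtype_compl (Finset.Icc (2 * V * Z^(M-1)) (Z^(M+1)))]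
      suffices h : ∑' x : {x : ℕ // x ∉ Finset.Icc (2 * V * Z^(M-1)) (Z^(M+1))}, f x ≤ 0 by linarith
      apply tsum_nonpos
      rintro ⟨n, hn⟩
      simp only
      rw [hf]
      simp only
      by_cases hn0 : n = 0
      · subst hn0; simp [an]
      have hnr : (0:ℝ) < n := by exact_mod_cast Nat.pos_of_ne_zero hn0
      apply mul_nonpos_of_nonneg_of_nonpos (an_nonneg _ _ _)
      apply mul_nonpos_of_nonneg_of_nonpos (hx0 n)
      apply hq1 _ (hx0 n) (hx1 n)
      have hexp : (n:ℝ)^(-ε) = Real.exp (-(ε * Real.log n)) := by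
        rw [Real.rpow_def_of_pos hnr]; congr 1; ring
      rw [Finset.mem_Icc, not_and_or] at hn
      rcases hn with hn | hn
      · rw [not_le] at hn
        have h1 : Real.log n ≤ Real.log (2 * V) + (M-1) * lz := by
          have h2 : (n:ℝ) ≤ 2 * V * (Z:ℝ)^(M-1) := by exact_mod_cast hn.le
          have h3 := Real.log_le_log hnr h2
          rw [Real.log_mul (by positivity) (by positivity), Real.log_pow, Nat.cast_sub hM] at h3
          simpa using h3
        have h4 : ε * Real.log n ≤ Real.log 2 * (1 - 1/(2*M)) := by
          have h5 : Real.log n ≤ (M - 1/2) * lz := by linarith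
          calc ε * Real.log n ≤ ε * ((M - 1/2) * lz) := by gcongr
            _ = (M - 1/2) * (ε * lz) := by ring
            _ = _ := by rw [hεlz]; field_simp; 
        have h6 : 1/2 + δ ≤ (n:ℝ)^(-ε) := by
          rw [hexp]
          refine hδa.trans ?_
          apply Real.exp_le_exp.mpr
          linarith
        rw [le_abs]; left; linarith
      · rw [not_le] at hn
        have h1 : (M+1) * lz ≤ Real.log n := by
          have h2 : (Z:ℝ)^(M+1) ≤ n := by exact_mod_cast hn.le
          have h3 := Real.log_le_log (by positivity) h2
          rw [Real.log_pow] at h3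
          push_cast at h3
          exact h3
        have h4 : Real.log 2 * (1 + 1/M) ≤ ε * Real.log n := by
          calc Real.log 2 * (1 + 1/M) = (M+1) * (ε * lz) := by rw [hεlz]; field_simp
            _ = ε * ((M+1) * lz) := by ring
            _ ≤ _ := by gcongr
        have h6 : (n:ℝ)^(-ε) ≤ 1/2 - δ := by
          rw [hexp]
          refine le_trans ?_ hδb
          apply Real.exp_le_exp.mpr
          linarith
        rw [le_abs]; right; linarith
    · intro n _
      rw [hf]
      simp only
      apply mul_le_of_le_one_right (an_nonneg _ _ _)
      calc (n:ℝ)^(-ε) * q.eval ((n:ℝ)^(-ε)) ≤ (n:ℝ)^(-ε) * 1 := by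
            apply mul_le_mul_of_nonneg_left _ (hx0 n)
            exact hq2 _ (hx0 n) (hx1 n)
        _ ≤ 1 := by rw [mul_one]; exact hx1 n
  refine le_trans ?_ (hlow.trans hup)
  have e : κ * (V.totient : ℝ)⁻¹ / ε = 2 * (κ * M / (2 * Real.log 2) * lz / V.totient) := by
    rw [hε]; field_simp
  rw [e]
  have : C' ≤ κ * M / (2 * Real.log 2) * lz / V.totient := by
    rw [div_le_iff₀ (by positivity)] at hE
    rw [le_div_iff₀ hφ, div_mul_eq_mul_div, le_div_iff₀ (by positivity)]
    linarith
  linarith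

lemma block_primes (M : ℕ) (hM : 5 ≤ M) : ∃ c : ℝ, 0 < c ∧ ∀ V b : ℕ, 0 < V → b < V → Nat.Coprime b V →
    ∃ Z0 : ℕ, ∀ Z : ℕ, Z0 ≤ Z → ∃ u : ℕ, Z^(M-1) ≤ u ∧ u ≤ Z^(M+1) ∧
      c * (V / V.totient : ℝ) * (Z:ℝ)^(M-4) / Real.log Z ≤
        (((Finset.Ico u (u + Z^(M-4))).filter (fun x => (b + V * x).Prime)).card : ℝ) := by
  obtain ⟨κ, hκ, hw⟩ := window_sum M (by omega)
  have hMr : (0:ℝ) < M := by exact_mod_cast (by omega : 0 < M)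
  refine ⟨κ / (6 * (M+1) + 1), by positivity, ?_⟩
  intro V b hV hbV hb
  obtain ⟨Z0, hZ0⟩ := hw V b hV hb
  refine ⟨max Z0 3, ?_⟩
  intro Z hZ
  have hZ3 : 3 ≤ Z := le_of_max_le_right hZ
  have hsum := hZ0 Z (le_of_max_le_left hZ)
  have hφ : (0:ℝ) < V.totient := by exact_mod_cast Nat.totient_pos.mpr hV
  have hVr : (0:ℝ) < V := by exact_mod_cast hV
  have hZr : (3:ℝ) ≤ Z := by exact_mod_cast hZ3
  have hlz1 : 1 ≤ Real.log Z := by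
    rw [Real.le_log_iff_exp_le (by linarith)]
    have := Real.exp_one_lt_d9
    linarith
  set lz := Real.log Z with hlz
  set c := κ / (6 * (M+1) + 1) with hc
  have hc0 : 0 < c := by positivity
  set R := c * (V / V.totient : ℝ) * (Z:ℝ)^(M-4) / lz with hR
  set Y := Z^(M-4) with hY
  have hY0 : 0 < Y := by positivity
  set P := (Finset.Icc (2 * V * Z^(M-1)) (Z^(M+1))).filter (fun n : ℕ => n.Prime ∧ (n : ZMod V) = (b : ZMod V)) with hP
  set xx : ℕ → ℕ := fun n => n / V with hxx
  have hPx : ∀ n ∈ P, n.Prime ∧ n = b + V * (n / V) ∧ 2 * Z^(M-1) ≤ n / V ∧ n / V ≤ Z^(M+1) ∧ n ≤ Z^(M+1) := by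
    intro n hn
    rw [hP, Finset.mem_filter, Finset.mem_Icc] at hn
    obtain ⟨⟨h1, h2⟩, h3, h4⟩ := hn
    have h5 : n % V = b := by
      have := (ZMod.natCast_eq_natCast_iff' n b V).mp h4
      rw [this, Nat.mod_eq_of_lt hbV]
    refine ⟨h3, ?_, ?_, ?_, h2⟩
    · have := Nat.mod_add_div n V; omega
    · rw [Nat.le_div_iff_mul_le hV]; nlinarith
    · exact (Nat.div_le_self n V).trans h2
  have hsumP : ∑ n ∈ Finset.Icc (2 * V * Z^(M-1)) (Z^(M+1)), an V b n = ∑ n ∈ P, Real.log n / n := by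
    unfold an
    rw [hP, Finset.sum_filter]
  have hYle : Y ≤ Z^(M-1) := Nat.pow_le_pow_right (by omega) (by omega)
  set J := P.image (fun n => n / V / Y) with hJ
  have hJm : ∀ j ∈ J, 1 ≤ j ∧ j ≤ Z^5 ∧ Z^(M-1) ≤ j * Y ∧ j * Y ≤ Z^(M+1) := by
    intro j hj
    rw [hJ, Finset.mem_image] at hj
    obtain ⟨n, hn, rfl⟩ := hj
    obtain ⟨_, _, h3, h4, _⟩ := hPx n hn
    have h5 := Nat.div_add_mod (n / V) Y
    have h6 := Nat.mod_lt (n / V) hY0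
    have h7 : n / V / Y * Y = Y * (n / V / Y) := mul_comm _ _
    have h8 : Z^(M-1) ≤ n / V / Y * Y := by omega
    refine ⟨?_, ?_, h8, by omega⟩
    · rw [Nat.one_le_div_iff hY0]; omega
    · rw [Nat.div_le_iff_le_mul_add_pred hY0]
      have : Z^(M+1) = Y * Z^5 := by rw [hY, ← pow_add]; congr 1; omega
      omega
  by_contra hcon
  push Not at hcon
  have hblock : ∀ j ∈ J, ∑ n ∈ P.filter (fun n => n / V / Y = j), Real.log n / n ≤ R * ((M+1) * lz / (V * Y)) * (1 / j) := by
    intro j hj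
    obtain ⟨hj1, hj2, hj3, hj4⟩ := hJm j hj
    have hjr : (0:ℝ) < j := by exact_mod_cast hj1
    have hYr : (0:ℝ) < Y := by exact_mod_cast hY0
    have h1 : ∀ n ∈ P.filter (fun n => n / V / Y = j), Real.log n / n ≤ (M+1) * lz / (V * Y * j) := by
      intro n hn
      rw [Finset.mem_filter] at hn
      obtain ⟨h2, h3, h4, h5, h6⟩ := hPx n hn.1
      have hn0 : (0:ℝ) < n := by exact_mod_cast h2.pos
      have hlog : Real.log n ≤ (M+1) * lz := by
        have : (n:ℝ) ≤ (Z:ℝ)^(M+1) := by exact_mod_cast h6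
        have := Real.log_le_log hn0 this
        rw [Real.log_pow] at this
        push_cast at this
        exact this
      have hge : (V:ℝ) * Y * j ≤ n := by
        have h7 := Nat.div_mul_le_self (n / V) Y
        rw [hn.2] at h7
        have h8 : V * Y * j ≤ n := by
          calc V * Y * j = V * (j * Y) := by ring
            _ ≤ V * (n / V) := Nat.mul_le_mul_left _ h7
            _ ≤ n := by omega
        exact_mod_cast h8
      exact div_le_div₀ (by positivity) hlog (by positivity) hge
    refine (Finset.sum_le_card_nsmul _ _ _ h1).trans ?_
    rw [nsmul_eq_mul]
    have hcard : ((P.filter (fun n => n / V / Y = j)).card : ℝ) ≤ R := by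
      have h2 := (hcon (j * Y) hj3 hj4).le
      refine le_trans ?_ h2
      exact_mod_cast Finset.card_le_card_of_injOn (fun n => n / V) (by
        intro n hn
        simp only [Finset.coe_filter, Set.mem_ofPred_eq] at hn
        obtain ⟨h2, h3, h4, h5, h6⟩ := hPx n hn.1
        simp only [Finset.coe_filter, Set.mem_ofPred_eq, Finset.mem_Ico]
        have h7 := Nat.div_add_mod (n / V) Y
        have h8 := Nat.mod_lt (n / V) hY0
        rw [hn.2] at h7
        have h9 : j * Y = Y * j := mul_comm _ _
        refine ⟨⟨by omega, by omega⟩, ?_⟩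
        rw [← h3]; exact h2) (by
        intro n hn n' hn' hnn
        simp only [Finset.coe_filter, Set.mem_ofPred_eq] at hn hn' hnn
        rw [(hPx n hn.1).2.1, (hPx n' hn'.1).2.1, hnn])
    calc _ ≤ R * ((M+1) * lz / (V * Y * j)) := by gcongr
      _ = _ := by field_simp
  have htot : ∑ n ∈ P, Real.log n / n ≤ R * ((M+1) * lz / (V * Y)) * (1 + 5 * lz) := by
    rw [← Finset.sum_fiberwise_of_maps_to (t := J) (g := fun n => n / V / Y) (fun n hn => Finset.mem_image_of_mem _ hn)]
    refine (Finset.sum_le_sum hblock).trans ?_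
    rw [← Finset.mul_sum]
    have hR0 : 0 ≤ R := by positivity
    apply mul_le_mul_of_nonneg_left _ (by positivity)
    have hsub : J ⊆ Finset.Icc 1 (Z^5) := by
      intro j hj
      exact Finset.mem_Icc.mpr ⟨(hJm j hj).1, (hJm j hj).2.1⟩
    refine (Finset.sum_le_sum_of_subset_of_nonneg hsub (fun _ _ _ => by positivity)).trans ?_
    have := harmonic_le_one_add_log (Z^5)
    rw [harmonic_eq_sum_Icc] at this
    push_cast at this
    rw [Real.log_pow] at this
    simp only [one_div]
    push_cast at this
    exact this
  rw [hsumP] at hsum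
  have hYr : (0:ℝ) < Y := by exact_mod_cast hY0
  have e : R * ((M+1) * lz / (V * Y)) = c * (M+1) / V.totient := by
    rw [hR]
    have : (Y:ℝ) = (Z:ℝ)^(M-4) := by rw [hY]; push_cast; rfl
    rw [← this]
    field_simp
  rw [e] at htot
  have h1 := hsum.trans htot
  rw [div_mul_eq_mul_div, div_le_div_iff_of_pos_right hφ] at h1
  have h2 : κ = c * (6 * (M+1) + 1) := by rw [hc]; field_simp
  rw [h2] at h1
  have h3 : 0 < c * lz := by positivity
  have h4 : c * (M+1) * (1 + 5 * lz) ≤ c * (M+1) * (6 * lz) := by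
    apply mul_le_mul_of_nonneg_left _ (by positivity)
    linarith
  nlinarith


noncomputable def TT (g : ℕ → ℤ) (H : ℕ) (α : ℝ) : ℂ := ∑ s ∈ Finset.range H, ee (α * g s)
noncomputable def TZ (g : ℕ → ℤ) (H : ℕ) (α : ℝ) : ℂ :=
  ∑ s ∈ Finset.range H, ((1 / ((g (s+1) - g s : ℤ) : ℝ) : ℝ) : ℂ) * ∑ y ∈ Finset.Ico (g s) (g (s+1)), ee (α * y)

lemma ee_tele (α : ℝ) (a b : ℤ) (h : a ≤ b) :
    (∑ y ∈ Finset.Ico a b, ee (α * y)) * (ee α - 1) = ee (α * b) - ee (α * a) := by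
  obtain ⟨n, rfl⟩ := Int.le.dest h
  induction n with
  | zero => simp
  | succ n ih =>
    have : Finset.Ico a (a + ((n+1 : ℕ) : ℤ)) = insert (a + (n:ℤ)) (Finset.Ico a (a + (n:ℤ))) := by
      ext y; simp only [Finset.mem_Ico, Finset.mem_insert]; push_cast; omega
    rw [this, Finset.sum_insert (by simp), add_mul, ih (by omega)]
    have e : ee (α * ((a + ((n+1 : ℕ) : ℤ) : ℤ) : ℝ)) = ee (α * ((a + (n:ℤ) : ℤ) : ℝ)) * ee α := by
      rw [← ee_add]; congr 1; push_cast; ring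
    rw [e]; ring

lemma abel_bd (w : ℕ → ℝ) (z : ℕ → ℂ) (hz : ∀ s, ‖z s‖ = 1) (hw : ∀ s, 0 ≤ w s) (hm : ∀ s, w (s+1) ≤ w s) (n : ℕ) :
    ‖∑ s ∈ Finset.range n, (w s : ℂ) * (z (s+1) - z s)‖ ≤ 2 * w 0 := by
  have key : ‖∑ s ∈ Finset.range n, (w s : ℂ) * (z (s+1) - z s) - w n * z n‖ ≤ 2 * w 0 - w n := by
    induction n with
    | zero => simp [hz, abs_of_nonneg (hw 0)]; linarith
    | succ n ih =>
      rw [Finset.sum_range_succ]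
      have e : ∑ s ∈ Finset.range n, (w s : ℂ) * (z (s+1) - z s) + w n * (z (n+1) - z n) - w (n+1) * z (n+1) =
        (∑ s ∈ Finset.range n, (w s : ℂ) * (z (s+1) - z s) - w n * z n) + ((w n - w (n+1) : ℝ) : ℂ) * z (n+1) := by
        push_cast; ring
      rw [e]
      refine (norm_add_le _ _).trans ?_
      rw [norm_mul, hz, Complex.norm_real, Real.norm_of_nonneg (by linarith [hm n])]
      linarith
  have h2 : ‖(w n : ℂ) * z n‖ = w n := by rw [norm_mul, hz, Complex.norm_real, Real.norm_of_nonneg (hw n), mul_one]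
  calc _ = ‖(∑ s ∈ Finset.range n, (w s : ℂ) * (z (s+1) - z s) - w n * z n) + w n * z n‖ := by congr 1; ring
    _ ≤ _ := norm_add_le _ _
    _ ≤ 2 * w 0 := by rw [h2]; linarith

lemma TZ_bound (g : ℕ → ℤ) (H : ℕ) (α dmin : ℝ) (hd : 0 < dmin) (hg : ∀ s, dmin ≤ ((g (s+1) - g s : ℤ) : ℝ))
    (hm : ∀ s, g (s+1) - g s ≤ g (s+2) - g (s+1)) :
    ‖TZ g H α‖ * |α - round α| ≤ 1 / (2 * dmin) := by
  set y := α - round α with hy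
  have hy1 : |y| ≤ 1/2 := abs_sub_round α
  have hee : ee α = ee y := by
    have : α = y + (round α : ℤ) := by rw [hy]; ring
    conv_lhs => rw [this, ee_add_int]
  have h1 := ee_sub_one_lower y hy1
  have hpos : ∀ s, 0 < ((g (s+1) - g s : ℤ) : ℝ) := fun s => hd.trans_le (hg s)
  have h2 : TZ g H α * (ee α - 1) = ∑ s ∈ Finset.range H, ((1 / ((g (s+1) - g s : ℤ) : ℝ) : ℝ) : ℂ) * (ee (α * g (s+1)) - ee (α * g s)) := by
    unfold TZ
    rw [Finset.sum_mul]
    apply Finset.sum_congr rfl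
    intro s _
    have h3 : g s ≤ g (s+1) := by
      have : (0:ℤ) < g (s+1) - g s := by exact_mod_cast hpos s
      omega
    rw [mul_assoc, ee_tele _ _ _ h3]
  have h3 := abel_bd (fun s => 1 / ((g (s+1) - g s : ℤ) : ℝ)) (fun s => ee (α * g s)) (fun s => ee_norm _)
    (fun s => (one_div_pos.mpr (hpos s)).le) (fun s => one_div_le_one_div_of_le (hpos s) (by exact_mod_cast hm s)) H
  rw [← h2, norm_mul] at h3
  rw [← hee] at h1
  have h4 : (1:ℝ) / ((g (0+1) - g 0 : ℤ) : ℝ) ≤ 1 / dmin := one_div_le_one_div_of_le hd (hg 0)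
  have h5 : ‖TZ g H α‖ * (4 * |y|) ≤ 2 * (1 / dmin) := by
    calc _ ≤ ‖TZ g H α‖ * ‖ee α - 1‖ := by gcongr
      _ ≤ _ := h3
      _ ≤ _ := by linarith
  have : 1 / (2 * dmin) = (1/dmin) / 2 := by field_simp
  rw [this]; linarith

lemma ee_round (α : ℝ) (n : ℤ) : ee (α * n) = ee ((α - round α) * n) := by
  have : α * n = (α - round α) * n + ((round α * n : ℤ) : ℝ) := by push_cast; ring
  rw [this, ee_add_int]

lemma E_small (g : ℕ → ℤ) (H : ℕ) (α dmax : ℝ) (hg0 : ∀ s, 0 < g (s+1) - g s)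
    (hg : ∀ s < H, ((g (s+1) - g s : ℤ) : ℝ) ≤ dmax) :
    ‖TT g H α - TZ g H α‖ ≤ 2 * Real.pi * |α - round α| * dmax * H := by
  unfold TT TZ
  rw [← Finset.sum_sub_distrib]
  have : ∀ s ∈ Finset.range H, ‖ee (α * g s) - ((1 / ((g (s+1) - g s : ℤ) : ℝ) : ℝ) : ℂ) * ∑ y ∈ Finset.Ico (g s) (g (s+1)), ee (α * y)‖ ≤
      2 * Real.pi * |α - round α| * dmax := by
    intro s hs
    rw [Finset.mem_range] at hs
    set d := g (s+1) - g s with hd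
    have hd0 : (0:ℝ) < (d:ℝ) := by exact_mod_cast hg0 s
    have hdc : ((Finset.Ico (g s) (g (s+1))).card : ℝ) = d := by
      rw [Int.card_Ico]
      have : ((g (s+1) - g s).toNat : ℤ) = g (s+1) - g s := Int.toNat_of_nonneg (hg0 s).le
      exact_mod_cast this
    have e : ee (α * g s) = ((1 / (d:ℝ) : ℝ) : ℂ) * ∑ y ∈ Finset.Ico (g s) (g (s+1)), ee (α * g s) := by
      rw [Finset.sum_const, nsmul_eq_mul]
      have h2 : ((Finset.Ico (g s) (g (s+1))).card : ℂ) = ((d:ℝ):ℂ) := by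
        rw [← hdc]; push_cast; rfl
      rw [h2, ← mul_assoc, ← Complex.ofReal_mul, one_div_mul_cancel hd0.ne']; simp
    rw [e, ← mul_sub, ← Finset.sum_sub_distrib, norm_mul, Complex.norm_real, Real.norm_of_nonneg (by positivity)]
    have h3 : ‖∑ y ∈ Finset.Ico (g s) (g (s+1)), (ee (α * g s) - ee (α * y))‖ ≤ d * (2 * Real.pi * |α - round α| * dmax) := by
      rw [← hdc, ← nsmul_eq_mul]
      apply norm_sum_le_of_le _ _ |>.trans
      rotate_left
      · exact fun _ => 2 * Real.pi * |α - round α| * dmax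
      · intro y hy
        rw [Finset.mem_Ico] at hy
        rw [ee_round, ee_round α y]
        refine (ee_lip _ _).trans ?_
        rw [← mul_sub, abs_mul, mul_assoc (2 * Real.pi)]
        have hh : |((g s : ℤ) : ℝ) - y| ≤ dmax := by
          refine le_trans ?_ (hg s hs)
          rw [abs_le]
          have h5 : (y:ℝ) ≤ g (s+1) := by exact_mod_cast hy.2.le
          have h6 : (g s : ℝ) ≤ y := by exact_mod_cast hy.1
          push_cast
          constructor <;> linarith
        have := Real.pi_pos
        gcongr
      · rw [Finset.sum_const]
    calc 1 / (d:ℝ) * _ ≤ 1 / d * (d * (2 * Real.pi * |α - round α| * dmax)) := by gcongr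
      _ = _ := by field_simp
  refine (norm_sum_le_of_le _ this).trans ?_
  rw [Finset.sum_const, Finset.card_range, nsmul_eq_mul, mul_comm]

lemma shift_sum (f : ℕ → ℂ) (hf : ∀ s, ‖f s‖ ≤ 1) (H q : ℕ) :
    ‖∑ s ∈ Finset.range H, f (s + q) - ∑ s ∈ Finset.range H, f s‖ ≤ 2 * q := by
  induction q with
  | zero => simp
  | succ q ih =>
    have e : ∑ s ∈ Finset.range H, f (s + (q+1)) - ∑ s ∈ Finset.range H, f (s + q) = f (H + q) - f (0 + q) := by
      rw [← Finset.sum_sub_distrib]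
      have := Finset.sum_range_sub (fun s => f (s + q)) H
      rw [← this]
      apply Finset.sum_congr rfl
      intro s _
      congr 2; ring
    calc _ = ‖(f (H + q) - f (0 + q)) + (∑ s ∈ Finset.range H, f (s + q) - ∑ s ∈ Finset.range H, f s)‖ := by rw [← e]; congr 1; ring
      _ ≤ (‖f (H+q)‖ + ‖f (0+q)‖) + 2 * q := (norm_add_le _ _).trans (add_le_add (norm_sub_le _ _) ih)
      _ ≤ _ := by have := hf (H+q); have := hf (0+q); push_cast; linarith

lemma sum_steps (g : ℕ → ℤ) (N : ℕ) (dmax : ℝ) (hg0 : ∀ s, 0 < g (s+1) - g s) (hg : ∀ s < N, ((g (s+1) - g s : ℤ) : ℝ) ≤ dmax)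
    (s q : ℕ) (h : s + q ≤ N) : 0 ≤ ((g (s+q) - g s : ℤ) : ℝ) ∧ ((g (s+q) - g s : ℤ) : ℝ) ≤ q * dmax := by
  induction q with
  | zero => simp
  | succ q ih =>
    obtain ⟨h1, h2⟩ := ih (by omega)
    have h3 := hg (s+q) (by omega)
    have h4 : (0:ℝ) < ((g (s+q+1) - g (s+q) : ℤ) : ℝ) := by exact_mod_cast hg0 (s+q)
    rw [← add_assoc]
    push_cast at *
    constructor
    · linarith
    · linarith

lemma T_shift (g : ℕ → ℤ) (H : ℕ) (α β dmax : ℝ) (a : ℤ) (p q1 : ℕ) (hp : p.Prime) (hq1 : 0 < q1) (hpa : ¬ (p:ℤ) ∣ a)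
    (hα : α = a / ((p * q1 : ℕ) : ℝ) + β) (hdiv : ∀ s, ((p * q1 : ℕ) : ℤ) ∣ g (s + q1) - g s - q1)
    (hg0 : ∀ s, 0 < g (s+1) - g s)
    (hg : ∀ s < H + q1, ((g (s+1) - g s : ℤ) : ℝ) ≤ dmax) :
    ‖TT g H α‖ ≤ (p * q1 : ℕ) + 2 * |β| * H * (p * q1 : ℕ) * dmax := by
  have hpr : (0:ℝ) < p := by exact_mod_cast hp.pos
  have hq1r : (0:ℝ) < q1 := by exact_mod_cast hq1
  set f : ℕ → ℂ := fun s => ee (α * g s) with hf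
  have h1 := shift_sum f (fun s => (ee_norm _).le) H q1
  have h2 : ∀ s ∈ Finset.range H, ‖f (s + q1) - ee (a / p) * f s‖ ≤ 2 * Real.pi * (|β| * (q1 * dmax)) := by
    intro s hs
    rw [Finset.mem_range] at hs
    obtain ⟨m, hm⟩ := hdiv s
    have hm' : (g (s + q1) : ℝ) - g s - q1 = (p * q1 : ℕ) * m := by exact_mod_cast hm
    have e1 : α * g (s+q1) = (a / p + a / ((p * q1 : ℕ) : ℝ) * g s + β * g (s+q1)) + ((a * m : ℤ) : ℝ) := by
      have : (g (s+q1) : ℝ) = g s + q1 + (p * q1 : ℕ) * m := by linarith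
      rw [hα, add_mul]
      conv_lhs => rw [this]
      conv_rhs => rw [this]
      push_cast
      field_simp
      ring
    have e2 : α * g s = a / ((p * q1 : ℕ) : ℝ) * g s + β * g s := by rw [hα]; ring
    simp only [hf]
    rw [e1, ee_add_int, e2, ee_add, ee_add, ee_add, ← mul_assoc, ← mul_sub, norm_mul, norm_mul, ee_norm, ee_norm, one_mul, one_mul]
    refine (ee_lip _ _).trans ?_
    rw [← mul_sub, abs_mul]
    obtain ⟨h3, h4⟩ := sum_steps g (H+q1) dmax hg0 hg s q1 (by omega)
    push_cast at h3 h4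
    rw [abs_of_nonneg h3]
    have := Real.pi_pos
    gcongr
  have h3 : ‖∑ s ∈ Finset.range H, f (s + q1) - ee (a / p) * ∑ s ∈ Finset.range H, f s‖ ≤ H * (2 * Real.pi * (|β| * (q1 * dmax))) := by
    rw [Finset.mul_sum, ← Finset.sum_sub_distrib]
    refine (norm_sum_le_of_le _ h2).trans ?_
    rw [Finset.sum_const, Finset.card_range, nsmul_eq_mul]
  have h4 : ‖(ee (a / p) - 1) * TT g H α‖ ≤ 2 * q1 + H * (2 * Real.pi * (|β| * (q1 * dmax))) := by
    have e : (ee (a / p) - 1) * TT g H α = (∑ s ∈ Finset.range H, f (s + q1) - ∑ s ∈ Finset.range H, f s) -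
        (∑ s ∈ Finset.range H, f (s + q1) - ee (a / p) * ∑ s ∈ Finset.range H, f s) := by
      have : TT g H α = ∑ s ∈ Finset.range H, f s := rfl
      rw [this]; ring
    rw [e]
    refine (norm_sub_le _ _).trans ?_
    linarith
  have h5 : 4 / (p:ℝ) ≤ ‖ee (a / p) - 1‖ := by
    set x : ℝ := a / p with hx
    have e : ee x = ee (x - round x) := by
      have : x = (x - round x) + (round x : ℤ) := by ring
      conv_lhs => rw [this, ee_add_int]
    rw [e]
    refine le_trans ?_ (ee_sub_one_lower _ (abs_sub_round x))
    have h6 : (1:ℝ) ≤ |(a - p * round x : ℤ)| := by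
      have : a - p * round x ≠ 0 := by
        intro h
        exact hpa ⟨round x, by linarith⟩
      exact_mod_cast Int.one_le_abs this
    have h7 : x - round x = ((a - p * round x : ℤ) : ℝ) / p := by
      push_cast; rw [hx]; field_simp
    rw [h7, abs_div, abs_of_pos hpr]
    push_cast at h6 ⊢
    rw [mul_div_assoc']
    gcongr
    linarith
  rw [norm_mul] at h4
  have h6 : 4 / (p:ℝ) * ‖TT g H α‖ ≤ 2 * q1 + H * (2 * Real.pi * (|β| * (q1 * dmax))) :=
    (mul_le_mul_of_nonneg_right h5 (norm_nonneg _)).trans h4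
  have hd : 0 ≤ q1 * dmax := by
    by_cases hH : H = 0
    · have := hg 0 (by omega)
      have h0 : (0:ℝ) < ((g (0+1) - g 0 : ℤ) : ℝ) := by exact_mod_cast hg0 0
      have : 0 ≤ dmax := by linarith
      positivity
    · have := sum_steps g (H+q1) dmax hg0 hg 0 q1 (by omega)
      linarith
  have hpi : Real.pi ≤ 4 := Real.pi_le_four
  have h7 : H * (2 * Real.pi * (|β| * (q1 * dmax))) ≤ 8 * (|β| * H * (q1 * dmax)) := by
    have : 0 ≤ |β| * H * (q1 * dmax) := by positivity
    nlinarith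
  have h8 : ‖TT g H α‖ ≤ p / 4 * (2 * q1 + 8 * (|β| * H * (q1 * dmax))) := by
    have : ‖TT g H α‖ = p / 4 * (4 / (p:ℝ) * ‖TT g H α‖) := by field_simp
    rw [this]
    gcongr
    linarith
  refine h8.trans ?_
  push_cast
  have : (0:ℝ) ≤ p * q1 := by positivity
  linarith


lemma E_dich (k : ℕ) (hk : 2 ≤ k) : ∃ C : ℕ, 1 ≤ C ∧ ∀ (G : ℤ[X]) (lam W' w t0 H : ℕ) (dmin dmax Z : ℝ),
    G.natDegree = k → G.leadingCoeff = lam → 0 < lam →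
    (∀ p : ℕ, p.Prime → p ∣ W' → ∀ (q1 : ℕ) (t : ℤ), ((p*q1 : ℕ) : ℤ) ∣ G.eval (t+q1) - G.eval t - q1) →
    (∀ p : ℕ, p.Prime → p ∣ lam → p ∣ W') → (∀ p : ℕ, p.Prime → p ≤ w → p ∣ W') →
    0 < dmin → 1 ≤ H →
    (∀ s : ℕ, dmin ≤ ((G.eval ((t0:ℤ)+((s+1:ℕ):ℤ)) - G.eval ((t0:ℤ)+(s:ℤ)) : ℤ) : ℝ)) →
    (∀ s : ℕ, G.eval ((t0:ℤ)+((s+1:ℕ):ℤ)) - G.eval ((t0:ℤ)+(s:ℤ)) ≤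
      G.eval ((t0:ℤ)+((s+2:ℕ):ℤ)) - G.eval ((t0:ℤ)+((s+1:ℕ):ℤ))) →
    (∀ s : ℕ, s < 2*H → ((G.eval ((t0:ℤ)+((s+1:ℕ):ℤ)) - G.eval ((t0:ℤ)+(s:ℤ)) : ℤ) : ℝ) ≤ dmax) →
    lam * Z ≤ H → 7*Z^2*dmax ≤ 2*dmin*H → 7*Z^2*dmax ≤ (H:ℝ)^k →
    lam*Z + 2*(Z/(H:ℝ)^k)*H*(lam*Z)*dmax < H/Z →
    ∀ (D α : ℝ), 2 ≤ D → D^C ≤ Z →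
    ‖TT (fun s => G.eval ((t0:ℤ)+(s:ℤ))) H α - TZ (fun s => G.eval ((t0:ℤ)+(s:ℤ))) H α‖ ≤ 2*H/D ∨
    ∃ q : ℕ, ∃ a : ℤ, w < q ∧ (q:ℝ) ≤ D^C ∧ |α - a/q| ≤ Z/(H:ℝ)^k := by
  obtain ⟨C0, hC0⟩ := weyl_inv k (by omega)
  refine ⟨C0+1, by omega, ?_⟩
  intro G lam W' w t0 H dmin dmax Z hGk hGl hlam hS hlamW hw hdmin hH hg1 hg2 hg3 n1 n2 n3 n4 D α hD hDZ
  set g : ℕ → ℤ := fun s => G.eval ((t0:ℤ)+(s:ℤ)) with hgdef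
  have hH0 : (0:ℝ) < H := by exact_mod_cast hH
  have hHk : (0:ℝ) < (H:ℝ)^k := by positivity
  have hD0 : 0 < D := by linarith
  have hDD : D ≤ D^(C0+1) := le_self_pow₀ (by linarith) (by omega)
  have hDC : D^C0 ≤ D^(C0+1) := pow_le_pow_right₀ (by linarith) (by omega)
  have hDZ1 : D ≤ Z := hDD.trans hDZ
  have hZ0 : 0 < Z := by linarith
  have hdmax : 0 < dmax := by
    have h1 := hg1 0
    have h2 := hg3 0 (by omega)
    linarith
  have hpos : ∀ s, 0 < g (s+1) - g s := by
    intro s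
    have := hg1 s
    have : (0:ℝ) < ((g (s+1) - g s : ℤ) : ℝ) := lt_of_lt_of_le hdmin this
    exact_mod_cast this
  by_cases hI : |α - round α| ≤ 1/(7*D*dmax)
  · left
    refine (E_small g H α dmax hpos (fun s hs => hg3 s (by omega))).trans ?_
    calc 2*Real.pi*|α - round α| * dmax * H ≤ 2*Real.pi*(1/(7*D*dmax))*dmax*H := by
          have := Real.pi_pos; gcongr
      _ = (2*Real.pi/7)*(H/D) := by field_simp
      _ ≤ 2 * (H/D) := by
          have := Real.pi_lt_d2
          gcongr; linarith
      _ = _ := by ring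
  push Not at hI
  have hTZ : ‖TZ g H α‖ ≤ H/D := by
    have h1 := TZ_bound g H α dmin hdmin hg1 hg2
    have h2 : ‖TZ g H α‖*(1/(7*D*dmax)) ≤ 1/(2*dmin) := le_trans (by gcongr) h1
    have h3 : ‖TZ g H α‖ ≤ 7*D*dmax/(2*dmin) := by
      rw [mul_one_div, div_le_iff₀ (by positivity)] at h2
      calc _ ≤ _ := h2
        _ = _ := by ring
    refine h3.trans ?_
    rw [div_le_div_iff₀ (by positivity) hD0]
    calc 7*D*dmax*D = 7*D^2*dmax := by ring
      _ ≤ 7*Z^2*dmax := by gcongr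
      _ ≤ _ := n2
      _ = _ := by ring
  by_cases hT : ‖TT g H α‖ ≤ H/D
  · left
    calc _ ≤ ‖TT g H α‖ + ‖TZ g H α‖ := norm_sub_le _ _
      _ ≤ H/D + H/D := by gcongr
      _ = _ := by ring
  push Not at hT
  right
  set gp : ℝ[X] := C α * (taylor (t0:ℤ) G).map (Int.castRingHom ℝ) with hgp
  have hev : ∀ s : ℕ, gp.eval (s:ℝ) = α * g s := by
    intro s
    have : (s:ℝ) = (Int.castRingHom ℝ) (s:ℤ) := by simp
    rw [hgp, eval_mul, eval_C, this, eval_map_apply, taylor_eval, hgdef]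
    simp [add_comm]
  have hdeg : gp.natDegree ≤ k := by
    refine (natDegree_C_mul_le _ _).trans (natDegree_map_le.trans ?_)
    rw [natDegree_taylor, hGk]
  have hcoef : gp.coeff k = α * lam := by
    have h1 : (taylor (t0:ℤ) G).coeff k = lam := by
      have := leadingCoeff_taylor (r := (t0:ℤ)) (f := G)
      rw [leadingCoeff, natDegree_taylor, hGk] at this
      rw [this, hGl]
    rw [hgp, coeff_C_mul, coeff_map, h1]; simp
  obtain ⟨q', a', hq1, hqD, hqa⟩ := hC0 gp hdeg H D hH hD (by
    have : ∑ s ∈ Finset.range H, ee (gp.eval (s:ℝ)) = TT g H α := by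
      unfold TT
      exact Finset.sum_congr rfl fun s _ => by rw [hev]
    rw [this]
    rw [div_lt_iff₀ hD0] at hT
    linarith)
  rw [hcoef] at hqa
  have hq0 : (0:ℝ) < q' := by exact_mod_cast hq1
  have hl0 : (0:ℝ) < lam := by exact_mod_cast hlam
  have hl1 : (1:ℝ) ≤ lam := by exact_mod_cast hlam
  have hq1' : (1:ℝ) ≤ q' := by exact_mod_cast hq1
  set r : ℚ := (a':ℚ) / ((q'*lam : ℕ):ℚ) with hr
  have hqlne : ((q'*lam:ℕ):ℤ) ≠ 0 := by positivity
  have hden : r.den ∣ q'*lam := by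
    have h := Rat.den_dvd a' ((q'*lam:ℕ):ℤ)
    have h2 : ((a':ℚ) / (((q'*lam:ℕ):ℤ):ℚ)) = r := by rw [hr]; push_cast; rfl
    rw [Rat.divInt_eq_div, h2] at h
    exact_mod_cast h
  have hrr : (r.num:ℝ)/(r.den:ℝ) = a'/(q'*lam) := by
    have : ((r:ℚ):ℝ) = (r.num:ℝ)/(r.den:ℝ) := Rat.cast_def r
    rw [← this, hr]; push_cast; rfl
  have hβ : |α - r.num/r.den| ≤ Z/(H:ℝ)^k := by
    rw [hrr]
    have : α - a'/(q'*lam) = (q'*(α*lam) - a')/(q'*lam) := by field_simp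
    rw [this, abs_div, abs_of_pos (show (0:ℝ) < q'*lam by positivity)]
    have h1 : |q'*(α*lam) - a'| ≤ Z/(H:ℝ)^k := by
      rw [le_div_iff₀ hHk]
      exact hqa.trans (hDC.trans hDZ)
    refine (div_le_self (abs_nonneg _) ?_).trans h1
    nlinarith
  have hnop : ∀ p : ℕ, p.Prime → p ∣ r.den → ¬ p ∣ W' := by
    intro p hp hpd hpW
    obtain ⟨q1, hq1e⟩ := hpd
    have hdpos : 0 < r.den := r.den_pos
    have hq1pos : 0 < q1 := by
      rcases Nat.eq_zero_or_pos q1 with h | h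
      · rw [h] at hq1e; omega
      · exact h
    have hpa : ¬ (p:ℤ) ∣ r.num := by
      intro h
      have h1 : p ∣ r.num.natAbs := Int.natCast_dvd.mp h
      have h2 : p ∣ r.den := ⟨q1, hq1e⟩
      have h3 := Nat.dvd_gcd h1 h2
      rw [r.reduced] at h3
      exact hp.one_lt.ne' (Nat.dvd_one.mp h3)
    have hle : r.den ≤ q'*lam := Nat.le_of_dvd (by positivity) hden
    have hleR : ((p*q1:ℕ):ℝ) ≤ lam*Z := by
      rw [← hq1e]
      calc (r.den:ℝ) ≤ ((q'*lam:ℕ):ℝ) := by exact_mod_cast hle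
        _ = lam*q' := by push_cast; ring
        _ ≤ lam*Z := by gcongr; exact hqD.trans (hDC.trans hDZ)
    have hq1H : q1 ≤ H := by
      have h1 : ((p*q1:ℕ):ℝ) ≤ H := hleR.trans n1
      have h2 : p*q1 ≤ H := by exact_mod_cast h1
      have := hp.pos
      nlinarith
    have := T_shift g H α (α - r.num/r.den) dmax r.num p q1 hp hq1pos hpa
      (by rw [← hq1e]; ring) (by
        intro s
        have := hS p hp hpW q1 (t0+s)
        simpa [hgdef, add_assoc] using this) hpos (fun s hs => hg3 s (by omega))
    have h5 : ‖TT g H α‖ < H/Z := by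
      refine this.trans_lt (lt_of_le_of_lt ?_ n4)
      gcongr
    have h6 : (H:ℝ)/Z ≤ H/D := by gcongr
    linarith
  have hcop : Nat.Coprime r.den lam := by
    apply Nat.Coprime.symm
    apply Nat.coprime_of_dvd
    intro p hp h1 h2
    exact hnop p hp h2 (hlamW p hp h1)
  have hdq : r.den ∣ q' := hcop.dvd_of_dvd_mul_right hden
  refine ⟨r.den, r.num, ?_, ?_, hβ⟩
  · by_cases h1 : r.den = 1
    · exfalso
      rw [h1] at hβ
      have h2 : |α - round α| ≤ |α - r.num| := round_le α r.num
      simp only [Nat.cast_one, div_one] at hβ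
      have h3 : Z/(H:ℝ)^k ≤ 1/(7*D*dmax) := by
        rw [div_le_div_iff₀ hHk (by positivity)]
        calc Z*(7*D*dmax) ≤ Z*(7*Z*dmax) := by gcongr
          _ = 7*Z^2*dmax := by ring
          _ ≤ _ := n3
          _ = _ := by ring
      linarith
    · have hmf := Nat.minFac_prime h1
      by_contra hle
      push Not at hle
      exact hnop _ hmf (Nat.minFac_dvd _) (hw _ hmf ((Nat.minFac_le r.den_pos).trans hle))
  · calc (r.den:ℝ) ≤ q' := by exact_mod_cast Nat.le_of_dvd hq1 hdq
      _ ≤ _ := hqD.trans hDC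


lemma poly_asymp (P : ℝ[X]) (n : ℕ) (hn : P.natDegree ≤ n) (hc : 0 < P.coeff n) :
    ∃ t1 : ℕ, ∀ t : ℕ, t1 ≤ t → P.coeff n/2 * (t:ℝ)^n ≤ P.eval (t:ℝ) ∧ P.eval (t:ℝ) ≤ 2*P.coeff n * (t:ℝ)^n := by
  have hnd : P.natDegree = n := le_antisymm hn (le_natDegree_of_ne_zero hc.ne')
  have h1 := P.isEquivalent_atTop_lead
  have h2 := h1.isLittleO.def (show (0:ℝ) < 1/2 by norm_num)
  have h3 := tendsto_natCast_atTop_atTop (R := ℝ) |>.eventually h2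
  obtain ⟨t1, ht1⟩ := Filter.eventually_atTop.mp h3
  refine ⟨t1, fun t ht => ?_⟩
  have h4 := ht1 t ht
  have hl : P.leadingCoeff = P.coeff n := by rw [leadingCoeff, hnd]
  simp only [Pi.sub_apply, hl, hnd, Real.norm_eq_abs] at h4
  have h5 : (0:ℝ) ≤ P.coeff n * (t:ℝ)^n := by positivity
  rw [abs_of_nonneg h5] at h4
  have := abs_le.mp h4
  constructor <;> nlinarith [this.1, this.2]

lemma growth1 (k : ℕ) (hk : 2 ≤ k) (G : ℤ[X]) (lam : ℕ) (hGk : G.natDegree = k) (hGl : G.leadingCoeff = lam) (hlam : 0 < lam) :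
    ∃ t1 : ℕ, 1 ≤ t1 ∧ ∀ t : ℕ, t1 ≤ t →
      (lam:ℝ)/2*(t:ℝ)^k ≤ ((G.eval (t:ℤ):ℤ):ℝ) ∧ ((G.eval (t:ℤ):ℤ):ℝ) ≤ 2*lam*(t:ℝ)^k ∧
      (lam*k:ℝ)/2*(t:ℝ)^(k-1) ≤ ((G.eval ((t:ℤ)+1) - G.eval (t:ℤ) : ℤ):ℝ) ∧
      ((G.eval ((t:ℤ)+1) - G.eval (t:ℤ) : ℤ):ℝ) ≤ 2*(lam*k)*(t:ℝ)^(k-1) ∧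
      G.eval ((t:ℤ)+1) - G.eval (t:ℤ) ≤ G.eval ((t:ℤ)+2) - G.eval ((t:ℤ)+1) := by
  obtain ⟨j, rfl⟩ : ∃ j, k = j+2 := ⟨k-2, by omega⟩
  set P : ℝ[X] := G.map (Int.castRingHom ℝ) with hP
  have hev : ∀ t : ℤ, P.eval (t:ℝ) = ((G.eval t:ℤ):ℝ) := by
    intro t
    have : (t:ℝ) = (Int.castRingHom ℝ) t := by simp
    rw [this, hP, eval_map_apply]; simp
  have hP0 : P.natDegree ≤ j+2 := natDegree_map_le.trans hGk.le
  have hPc : P.coeff (j+2) = lam := by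
    rw [hP, coeff_map, ← hGk, coeff_natDegree, hGl]; simp
  obtain ⟨hd1, hc1⟩ := taylor_diff P (j+1) hP0 1
  set P1 := taylor 1 P - P with hP1
  obtain ⟨hd2, hc2⟩ := taylor_diff P1 j hd1 1
  set P2 := taylor 1 P1 - P1 with hP2
  have hl0 : (0:ℝ) < lam := by exact_mod_cast hlam
  rw [hPc] at hc1
  rw [hc1] at hc2
  obtain ⟨a, ha⟩ := poly_asymp P (j+2) hP0 (by rw [hPc]; exact hl0)
  obtain ⟨b, hb⟩ := poly_asymp P1 (j+1) hd1 (by rw [hc1]; positivity)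
  obtain ⟨c, hc⟩ := poly_asymp P2 j hd2 (by rw [hc2]; positivity)
  have e1 : ∀ t : ℤ, P1.eval (t:ℝ) = ((G.eval (t+1) - G.eval t : ℤ):ℝ) := by
    intro t
    rw [hP1, eval_sub, taylor_eval, hev]
    have : (t:ℝ)+1 = ((t+1:ℤ):ℝ) := by push_cast; ring
    rw [this, hev]; push_cast; ring
  have e2 : ∀ t : ℤ, P2.eval (t:ℝ) = ((G.eval (t+1+1) - G.eval (t+1) - (G.eval (t+1) - G.eval t) : ℤ):ℝ) := by
    intro t
    rw [hP2, eval_sub, taylor_eval, e1]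
    have : (t:ℝ)+1 = ((t+1:ℤ):ℝ) := by push_cast; ring
    rw [this, e1]; push_cast; ring
  refine ⟨max 1 (max a (max b c)), by simp, fun t ht => ?_⟩
  simp only [max_le_iff] at ht
  obtain ⟨h1, h2⟩ := ha t (by omega)
  obtain ⟨h3, h4⟩ := hb t (by omega)
  obtain ⟨h5, h6⟩ := hc t (by omega)
  have hcast : ((t:ℤ):ℝ) = (t:ℝ) := by simp
  have e0' := hev t
  have e1' := e1 t
  have e2' := e2 t
  rw [hcast] at e0' e1' e2'
  rw [e0', hPc] at h1 h2
  rw [e1', hc1] at h3 h4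
  rw [e2', hc2] at h5
  refine ⟨h1, h2, ?_, ?_, ?_⟩
  · refine le_trans (le_of_eq ?_) h3
    rw [show j+2-1 = j+1 by omega]; push_cast; ring
  · refine h4.trans (le_of_eq ?_)
    rw [show j+2-1 = j+1 by omega]; push_cast; ring
  · have : (0:ℝ) ≤ ((G.eval ((t:ℤ)+1+1) - G.eval ((t:ℤ)+1) - (G.eval ((t:ℤ)+1) - G.eval (t:ℤ)) : ℤ):ℝ) :=
      le_trans (by positivity) h5
    have h7 : 0 ≤ G.eval ((t:ℤ)+1+1) - G.eval ((t:ℤ)+1) - (G.eval ((t:ℤ)+1) - G.eval (t:ℤ)) := by exact_mod_cast this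
    have e : (t:ℤ)+1+1 = t+2 := by ring
    rw [e] at h7
    linarith


set_option maxHeartbeats 4000000 in
lemma growth (k : ℕ) (hk : 2 ≤ k) : ∃ M : ℕ, 5 ≤ M ∧ ∃ K : ℝ, 0 < K ∧ ∀ (G : ℤ[X]) (lam : ℕ),
    G.natDegree = k → G.leadingCoeff = lam → 0 < lam → ∃ Z0 : ℕ, ∀ Z U : ℕ, Z0 ≤ Z → 2*Z^(M-1) ≤ U → U ≤ 2*Z^(M+1) →
    ∃ t0 H : ℕ, ∃ dmin dmax : ℝ, 0 < dmin ∧ 1 ≤ H ∧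
    (∀ s : ℕ, dmin ≤ ((G.eval ((t0:ℤ)+((s+1:ℕ):ℤ)) - G.eval ((t0:ℤ)+(s:ℤ)) : ℤ) : ℝ)) ∧
    (∀ s : ℕ, G.eval ((t0:ℤ)+((s+1:ℕ):ℤ)) - G.eval ((t0:ℤ)+(s:ℤ)) ≤
      G.eval ((t0:ℤ)+((s+2:ℕ):ℤ)) - G.eval ((t0:ℤ)+((s+1:ℕ):ℤ))) ∧
    (∀ s : ℕ, s < 2*H → ((G.eval ((t0:ℤ)+((s+1:ℕ):ℤ)) - G.eval ((t0:ℤ)+(s:ℤ)) : ℤ) : ℝ) ≤ dmax) ∧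
    lam * (Z:ℝ) ≤ H ∧ 7*(Z:ℝ)^2*dmax ≤ 2*dmin*H ∧ 7*(Z:ℝ)^2*dmax ≤ (H:ℝ)^k ∧
    lam*(Z:ℝ) + 2*((Z:ℝ)/(H:ℝ)^k)*H*(lam*Z)*dmax < H/Z ∧
    2*(Z:ℝ)^5 < (H:ℝ)^k ∧ G.eval (t0:ℤ) ≤ U ∧ (U:ℤ)+2*(Z:ℤ)^(M-4) ≤ G.eval ((t0:ℤ)+(H:ℤ)) ∧
    H*dmax ≤ K*(Z:ℝ)^(M-4) := by
  have hM : 8*k+40 ≤ k*(8*k+20) := by nlinarith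
  refine ⟨k*(8*k+20), by omega, 16*3^k, by positivity, ?_⟩
  intro G lam hGk hGl hlam
  obtain ⟨t1, ht1, hgr⟩ := growth1 k hk G lam hGk hGl hlam
  set M := k*(8*k+20) with hMdef
  clear_value M
  set A := 100*3^k*lam*k + t1 + (G.eval (t1:ℤ)).natAbs with hA
  clear_value A
  refine ⟨A, fun Z U hZ hU1 hU2 => ?_⟩
  have h3k : 1 ≤ 3^k := Nat.one_le_pow _ _ (by norm_num)
  have hlk : 1 ≤ lam*k := by nlinarith
  have hbig : 100*3^k*lam*k ≤ Z := by omega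
  have hbigR : (100*3^k*lam*k:ℝ) ≤ Z := by exact_mod_cast hbig
  have hl1 : (1:ℝ) ≤ lam := by exact_mod_cast hlam
  have hk1 : (2:ℝ) ≤ k := by exact_mod_cast hk
  have h3R : (1:ℝ) ≤ 3^k := by exact_mod_cast h3k
  have hlkR : (1:ℝ) ≤ lam*k := by nlinarith
  have b1 : (100*3^k:ℝ) ≤ Z := by
    refine le_trans ?_ hbigR
    have : (100*3^k:ℝ) * 1 ≤ 100*3^k*(lam*k) := by gcongr
    linarith
  have b2 : (100*lam*k:ℝ) ≤ Z := by
    refine le_trans ?_ hbigR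
    have : (1:ℝ)*(100*lam*k) ≤ 3^k*(100*lam*k) := by gcongr
    linarith
  have b3 : (100*lam:ℝ) ≤ Z := by nlinarith
  have b4 : (100:ℝ) ≤ Z := by linarith
  have hZ0 : (0:ℝ) < Z := by linarith
  have hZ1 : (1:ℝ) ≤ Z := by linarith
  -- choice of t0
  have ev0 : ∀ t : ℕ, t1 ≤ t → (1:ℝ) ≤ ((G.eval ((t:ℤ)+1) - G.eval (t:ℤ) : ℤ):ℝ) := by
    intro t ht
    refine le_trans ?_ (hgr t ht).2.2.1
    have : (1:ℝ) ≤ (t:ℝ)^(k-1) := one_le_pow₀ (by exact_mod_cast ht1.trans ht)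
    nlinarith
  have ev1 : ∀ t : ℕ, t1 ≤ t → G.eval (t:ℤ) + 1 ≤ G.eval ((t:ℤ)+1) := by
    intro t ht
    have : (1:ℤ) ≤ G.eval ((t:ℤ)+1) - G.eval (t:ℤ) := by exact_mod_cast ev0 t ht
    linarith
  have ev2 : ∀ t h : ℕ, t1 ≤ t → G.eval (t:ℤ) + h ≤ G.eval ((t:ℤ)+(h:ℤ)) := by
    intro t h ht
    induction h with
    | zero => simp
    | succ h ih =>
      have := ev1 (t+h) (by omega)
      push_cast at this ⊢
      rw [← add_assoc (t:ℤ)]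
      linarith
  have hG1 : -(Z:ℤ) ≤ G.eval (t1:ℤ) ∧ G.eval (t1:ℤ) ≤ Z := by omega
  have hex : ∃ t : ℕ, t1 ≤ t ∧ (U:ℤ) < G.eval ((t:ℤ)+1) := by
    refine ⟨t1 + (U+Z), by omega, ?_⟩
    have := ev2 t1 (U+Z+1) le_rfl
    push_cast at this ⊢
    rw [add_assoc]
    linarith [hG1.1]
  obtain ⟨ht0a, ht0b⟩ := Nat.find_spec hex
  have hmin := fun t (h : t < Nat.find hex) => Nat.find_min hex h
  set t0 := Nat.find hex with ht0
  have hGt0 : G.eval (t0:ℤ) ≤ U := by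
    rcases Nat.eq_or_lt_of_le ht0a with h | h
    · rw [← h]
      refine hG1.2.trans ?_
      have h1 : Z ≤ Z^(M-1) := Nat.le_self_pow (by omega) _
      have : Z ≤ U := by omega
      exact_mod_cast this
    · have := hmin (t0-1) (by omega)
      push Not at this
      have h2 := this (by omega)
      have h3 : ((t0-1:ℕ):ℤ)+1 = t0 := by omega
      rwa [h3] at h2
  clear_value t0
  -- choice of H
  have hexH : ∃ h : ℕ, (U:ℤ)+2*(Z:ℤ)^(M-4) ≤ G.eval ((t0:ℤ)+(h:ℤ)) := by
    refine ⟨U + 2*Z^(M-4) + (G.eval (t0:ℤ)).natAbs, ?_⟩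
    have := ev2 t0 (U + 2*Z^(M-4) + (G.eval (t0:ℤ)).natAbs) ht0a
    refine le_trans ?_ this
    push_cast
    have := neg_abs_le (G.eval (t0:ℤ))
    linarith
  have hHs := Nat.find_spec hexH
  have hHmin := fun t (h : t < Nat.find hexH) => Nat.find_min hexH h
  set H := Nat.find hexH with hHdef
  clear_value H
  have hYpos : (0:ℤ) < (Z:ℤ)^(M-4) := by
    have : (0:ℤ) < Z := by exact_mod_cast hZ0
    positivity
  have hH1 : 1 ≤ H := by
    rcases Nat.eq_zero_or_pos H with h | h
    · rw [h] at hHs; simp at hHs; linarith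
    · exact h
  set x : ℝ := (t0:ℝ) with hx
  clear_value x
  set z : ℝ := (Z:ℝ) with hz
  clear_value z
  have hx1 : 1 ≤ x := by rw [hx]; exact_mod_cast ht1.trans ht0a
  have hx0 : 0 < x := by linarith
  -- size of t0
  have hxl : z^(M-2) ≤ x^k := by
    have h1 := (hgr (t0+1) (by omega)).2.1
    have h2 : ((U:ℤ):ℝ) < ((G.eval ((t0:ℤ)+1):ℤ):ℝ) := by exact_mod_cast ht0b
    have h3 : (2*z^(M-1):ℝ) ≤ (U:ℝ) := by rw [hz]; exact_mod_cast hU1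
    push_cast at h1 h2
    rw [← hx] at h1
    have h4 : (x+1)^k ≤ (2*x)^k := by gcongr; linarith
    rw [mul_pow] at h4
    have h5 : (2:ℝ)^k ≤ 3^k := by gcongr; norm_num
    have h6 : z^(M-1) = z^(M-2)*z := by rw [← pow_succ]; congr 1; omega
    have h7 : z^(M-2)*z ≤ x^k*z := by
      rw [← h6]
      have : lam*2^k ≤ z := by
        refine le_trans ?_ hbigR
        have h8 : lam*2^k*1 ≤ lam*3^k*(k:ℝ) := by gcongr; linarith
        have h9 : 0 ≤ lam*3^k*(k:ℝ) := by positivity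
        have h9' : 100*3^k*(lam:ℝ)*k = 100*(lam*3^k*(k:ℝ)) := by ring
        rw [h9']; linarith
      have h10 : lam*2^k*x^k ≤ z*x^k := by gcongr
      have h11 : lam*(x+1)^k ≤ lam*(2^k*x^k) := by gcongr
      have h12 : 2*lam*(x+1)^k = 2*(lam*(x+1)^k) := by ring
      have h13 : lam*(2^k*x^k) = lam*2^k*x^k := by ring
      have h14 : x^k*z = z*x^k := by ring
      linarith
    exact le_of_mul_le_mul_right h7 hZ0
  have hxu : x^k ≤ z^(M+2) := by
    have h1 := (hgr t0 ht0a).1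
    have h2 : ((G.eval (t0:ℤ):ℤ):ℝ) ≤ ((U:ℤ):ℝ) := by exact_mod_cast hGt0
    have h3 : (U:ℝ) ≤ 2*z^(M+1) := by rw [hz]; exact_mod_cast hU2
    push_cast at h2
    rw [← hx] at h1
    have h4 : x^k ≤ lam*x^k := le_mul_of_one_le_left (by positivity) hl1
    have h5 : z^(M+2) = z^(M+1)*z := by rw [← pow_succ]
    have h6 : z^(M+1)*4 ≤ z^(M+1)*z := by gcongr; linarith
    have h7 : (lam:ℝ)/2*x^k = (lam*x^k)/2 := by ring
    linarith
  have hxb : z^(8*k+19) ≤ x := by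
    have h1 : (z^(8*k+19))^k ≤ x^k := by
      refine le_trans ?_ hxl
      rw [← pow_mul]
      apply pow_le_pow_right₀ hZ1
      have : (8*k+19)*k + k = M := by rw [hMdef]; ring
      omega
    exact le_of_pow_le_pow_left₀ (by omega) hx0.le h1
  have hxk : x^k = x^(k-1)*x := by rw [← pow_succ]; congr 1; omega
  have hxk1 : x^(k-1) ≤ z^(M-8*k-17) := by
    have h1 : x^(k-1)*z^(8*k+19) ≤ z^(M-8*k-17)*z^(8*k+19) := by
      calc _ ≤ x^(k-1)*x := by gcongr
        _ = x^k := hxk.symm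
        _ ≤ _ := hxu
        _ = _ := by rw [← pow_add]; congr 1; omega
    exact le_of_mul_le_mul_right h1 (by positivity)
  set dmin : ℝ := (lam*k:ℝ)/2*x^(k-1) with hdmin
  clear_value dmin
  set dmax : ℝ := 4*3^k*dmin with hdmax
  clear_value dmax
  have hxk0 : 0 < x^(k-1) := by positivity
  have hdmin0 : 0 < dmin := by rw [hdmin]; positivity
  have hdm : dmax ≤ z^(M-8*k-16) := by
    have e : z^(M-8*k-16) = z*z^(M-8*k-17) := by rw [← pow_succ']; congr 1; omega
    rw [e]
    calc dmax = (2*3^k*lam*k)*x^(k-1) := by rw [hdmax, hdmin]; ring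
      _ ≤ z*z^(M-8*k-17) := by
        gcongr
        have : 0 ≤ 3^k*(lam:ℝ)*k := by positivity
        linarith
  have hdmm : dmin ≤ dmax := by
    rw [hdmax]; exact le_mul_of_one_le_left hdmin0.le (by linarith)
  have hYd : dmin ≤ z^(M-4) := by
    refine hdmm.trans (hdm.trans ?_)
    apply pow_le_pow_right₀ hZ1; omega
  have hg1 : ∀ s : ℕ, dmin ≤ ((G.eval ((t0:ℤ)+((s+1:ℕ):ℤ)) - G.eval ((t0:ℤ)+(s:ℤ)) : ℤ) : ℝ) := by
    intro s
    have h1 := (hgr (t0+s) (by omega)).2.2.1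
    have e : ((t0:ℤ)+((s+1:ℕ):ℤ)) = ((t0+s:ℕ):ℤ)+1 := by push_cast; ring
    have e2 : ((t0:ℤ)+(s:ℤ)) = ((t0+s:ℕ):ℤ) := by push_cast; ring
    rw [e, e2]
    refine le_trans ?_ h1
    rw [hdmin]
    gcongr
    rw [hx]; push_cast; linarith [(Nat.cast_nonneg s : (0:ℝ) ≤ s)]
  have hsum : ∀ (a : ℕ) (h : ℕ), (h:ℝ)*dmin ≤ ((G.eval ((t0:ℤ)+((a+h:ℕ):ℤ)) - G.eval ((t0:ℤ)+(a:ℤ)) : ℤ) : ℝ) := by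
    intro a h
    induction h with
    | zero => simp
    | succ h ih =>
      have := hg1 (a+h)
      rw [show a+(h+1) = a+h+1 by ring]
      push_cast at this ih ⊢
      linarith
  have hHd : H*dmin ≤ 4*z^(M-4) := by
    rcases Nat.lt_or_ge H 3 with h | h
    · have : (H:ℝ) ≤ 2 := by exact_mod_cast (by omega : H ≤ 2)
      have h2 : H*dmin ≤ 2*dmin := by gcongr
      linarith
    · have h1 := hsum 1 (H-2)
      have h2 := hHmin (H-1) (by omega)
      push Not at h2
      have h3 : (1+(H-2)) = H-1 := by omega
      rw [h3] at h1
      have h4 : (G.eval ((t0:ℤ)+((H-1:ℕ):ℤ)) - G.eval ((t0:ℤ)+((1:ℕ):ℤ)) : ℤ) ≤ 2*(Z:ℤ)^(M-4) := by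
        push_cast at h2 ⊢
        linarith
      have h5 : ((G.eval ((t0:ℤ)+((H-1:ℕ):ℤ)) - G.eval ((t0:ℤ)+((1:ℕ):ℤ)) : ℤ) : ℝ) ≤ 2*z^(M-4) := by
        rw [hz]; exact_mod_cast h4
      have h6 : ((H-2:ℕ):ℝ) = H-2 := by push_cast [show 2 ≤ H by omega]; ring
      rw [h6, sub_mul] at h1
      linarith
  have hHx : (H:ℝ) ≤ x := by
    have h1 : z^(M-4)*z^2 = z^(M-2) := by rw [← pow_add]; congr 1; omega
    have h2 : z^(M-4)*8 ≤ z^(M-4)*z^2 := by gcongr; nlinarith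
    have h3 : H*(lam*k*x^(k-1)) ≤ x*x^(k-1) := by
      have : H*dmin = H*(lam*k*x^(k-1))/2 := by rw [hdmin]; ring
      rw [this] at hHd
      have h5 : x*x^(k-1) = x^k := by rw [hxk]; ring
      rw [h5]; linarith
    have h4 : H*x^(k-1) ≤ x*x^(k-1) := by
      refine le_trans ?_ h3
      gcongr
      exact le_mul_of_one_le_left hxk0.le hlkR
    exact le_of_mul_le_mul_right h4 hxk0
  have hHx' : H ≤ t0 := by rw [hx] at hHx; exact_mod_cast hHx
  have hg3 : ∀ s : ℕ, s < 2*H → ((G.eval ((t0:ℤ)+((s+1:ℕ):ℤ)) - G.eval ((t0:ℤ)+(s:ℤ)) : ℤ) : ℝ) ≤ dmax := by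
    intro s hs
    have h1 := (hgr (t0+s) (by omega)).2.2.2.1
    have e : ((t0:ℤ)+((s+1:ℕ):ℤ)) = ((t0+s:ℕ):ℤ)+1 := by push_cast; ring
    have e2 : ((t0:ℤ)+(s:ℤ)) = ((t0+s:ℕ):ℤ) := by push_cast; ring
    rw [e, e2]
    refine h1.trans ?_
    have h2 : ((t0+s:ℕ):ℝ) ≤ 3*x := by
      have : t0+s ≤ 3*t0 := by omega
      rw [hx]; exact_mod_cast this
    calc 2*(lam*k)*((t0+s:ℕ):ℝ)^(k-1) ≤ 2*(lam*k)*(3*x)^(k-1) := by gcongr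
      _ = 2*(lam*k)*(3^(k-1)*x^(k-1)) := by rw [mul_pow]
      _ ≤ 2*(lam*k)*(3^k*x^(k-1)) := by
        gcongr
        · norm_num
        · omega
      _ = dmax := by rw [hdmax, hdmin]; ring
  have hdmax0 : 0 < dmax := by linarith
  have hHlow : z^(8*k+12) ≤ H := by
    have h1 : ∀ h : ℕ, h ≤ 2*H → ((G.eval ((t0:ℤ)+(h:ℤ)) - G.eval (t0:ℤ) : ℤ) : ℝ) ≤ h*dmax := by
      intro h hh
      induction h with
      | zero => simp
      | succ h ih =>
        have h1 := ih (by omega)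
        have h2 := hg3 h (by omega)
        push_cast at h1 h2 ⊢
        linarith
    have h2 := h1 H (by omega)
    have h3 : 2*(Z:ℤ)^(M-4) ≤ G.eval ((t0:ℤ)+(H:ℤ)) - G.eval (t0:ℤ) := by linarith
    have h4 : 2*z^(M-4) ≤ ((G.eval ((t0:ℤ)+(H:ℤ)) - G.eval (t0:ℤ) : ℤ) : ℝ) := by
      rw [hz]; exact_mod_cast h3
    have h5 : z^(8*k+12)*z^(M-8*k-16) ≤ H*z^(M-8*k-16) := by
      calc _ = z^(M-4) := by rw [← pow_add]; congr 1; omega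
        _ ≤ 2*z^(M-4) := by linarith [show 0 ≤ z^(M-4) by positivity]
        _ ≤ H*dmax := by linarith
        _ ≤ _ := by gcongr
    exact le_of_mul_le_mul_right h5 (by positivity)
  have hHk : z^16*dmax ≤ (H:ℝ)^k := by
    calc z^16*dmax ≤ z^16*z^(M-8*k-16) := by gcongr
      _ = (z^(8*k+12))^k := by
        rw [← pow_add, ← pow_mul]; congr 1
        have : (8*k+12)*k + 8*k = M := by rw [hMdef]; ring
        omega
      _ ≤ _ := by gcongr
  have hH28 : z^28 ≤ H := by
    refine le_trans ?_ hHlow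
    apply pow_le_pow_right₀ hZ1; omega
  have hH0 : (0:ℝ) < H := by exact_mod_cast hH1
  refine ⟨t0, H, dmin, dmax, hdmin0, hH1, hg1, ?_, hg3, ?_, ?_, ?_, ?_, ?_, hGt0, hHs, ?_⟩
  · intro s
    have h1 := (hgr (t0+s) (by omega)).2.2.2.2
    push_cast at h1 ⊢
    simpa [add_assoc] using h1
  · calc lam*z ≤ z*z := by gcongr; linarith
      _ = z^2 := by ring
      _ ≤ z^28 := pow_le_pow_right₀ hZ1 (by norm_num)
      _ ≤ H := hH28
  · rw [hdmax]
    calc 7*z^2*(4*3^k*dmin) = 2*dmin*(z^2*(14*3^k)) := by ring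
      _ ≤ 2*dmin*(z^2*z) := by gcongr; linarith
      _ = 2*dmin*z^3 := by ring
      _ ≤ 2*dmin*z^28 := by gcongr; norm_num
      _ ≤ _ := by gcongr
  · refine le_trans ?_ hHk
    gcongr
    calc 7*z^2 ≤ z*z^2 := by gcongr; linarith
      _ = z^3 := by ring
      _ ≤ z^16 := pow_le_pow_right₀ hZ1 (by norm_num)
  · have h1 : dmax/(H:ℝ)^k ≤ 1/z^16 := by
      rw [div_le_div_iff₀ (by positivity) (by positivity)]; linarith
    have h2 : 2*(z/(H:ℝ)^k)*H*(lam*z)*dmax ≤ H/(4*z) := by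
      calc 2*(z/(H:ℝ)^k)*H*(lam*z)*dmax = (2*lam)*z^2*H*(dmax/(H:ℝ)^k) := by ring
        _ ≤ z*z^2*H*(1/z^16) := by gcongr; linarith
        _ = H/(z^13) := by field_simp
        _ ≤ _ := by
          gcongr
          calc 4*z ≤ z*z := by gcongr; linarith
            _ = z^2 := by ring
            _ ≤ z^13 := pow_le_pow_right₀ hZ1 (by norm_num)
    have h3 : lam*z ≤ H/(4*z) := by
      rw [le_div_iff₀ (by positivity)]
      calc lam*z*(4*z) = (4*lam)*z^2 := by ring
        _ ≤ z*z^2 := by gcongr; linarith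
        _ = z^3 := by ring
        _ ≤ z^28 := pow_le_pow_right₀ hZ1 (by norm_num)
        _ ≤ _ := hH28
    have h4 : H/(4*z) = (H/z)/4 := by field_simp
    have h5 : 0 < H/z := by positivity
    linarith
  · have h0 : z^28 ≤ (H:ℝ)^k := hH28.trans (le_self_pow₀ (by exact_mod_cast hH1) (by omega))
    refine lt_of_lt_of_le ?_ h0
    calc 2*z^5 < z*z^5 := by gcongr; linarith
      _ = z^6 := by ring
      _ ≤ z^28 := pow_le_pow_right₀ hZ1 (by norm_num)
  · calc H*dmax = 4*3^k*(H*dmin) := by rw [hdmax]; ring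
      _ ≤ 4*3^k*(4*z^(M-4)) := by gcongr
      _ = _ := by ring


lemma crt_choice (m : ℕ) (hm : 0 < m) (hme : Even m) (s f : ℤ) (S : Finset ℕ) (hS : ∀ p ∈ S, p.Prime ∧ ¬ p ∣ m) :
    ∃ b : ℤ, b ≡ s [ZMOD (m:ℤ)] ∧ ∀ p ∈ S, ¬ (p:ℤ) ∣ b ∧ ¬ (p:ℤ) ∣ f - b := by
  induction S using Finset.induction_on with
  | empty => exact ⟨s, rfl, by simp⟩
  | insert p S hpS ih =>
    obtain ⟨b, hb, hbS⟩ := ih (fun q hq => hS q (Finset.mem_insert_of_mem hq))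
    obtain ⟨hp, hpm⟩ := hS p (Finset.mem_insert_self _ _)
    set N : ℤ := (m:ℤ) * ∏ q ∈ S, (q:ℤ) with hN
    have hpZ : Prime (p:ℤ) := Nat.prime_iff_prime_int.mp hp
    have hp3 : 3 ≤ p := by
      rcases hp.eq_two_or_odd with h | h
      · exfalso; apply hpm; rw [h]; exact hme.two_dvd
      · have := hp.two_le; omega
    have hpN : ¬ (p:ℤ) ∣ N := by
      intro h
      rcases hpZ.dvd_or_dvd h with h | h
      · exact hpm (by exact_mod_cast h)
      · rw [Prime.dvd_finsetProd_iff hpZ] at h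
        obtain ⟨q, hq, h⟩ := h
        have h1 : p ∣ q := by exact_mod_cast h
        have := (Nat.prime_dvd_prime_iff_eq hp (hS q (Finset.mem_insert_of_mem hq)).1).mp h1
        exact hpS (this ▸ hq)
    have key : ∃ j : ℤ, ¬ (p:ℤ) ∣ b + N*j ∧ ¬ (p:ℤ) ∣ f - (b + N*j) := by
      by_contra hcon
      push Not at hcon
      have hd : ∀ i j : ℤ, (p:ℤ) ∣ N*(i-j) → (p:ℤ) ∣ i - j := fun i j h =>
        (hpZ.dvd_or_dvd h).resolve_left hpN
      have hno : ∀ i : ℤ, (p:ℤ) ∣ i → i.natAbs < 3 → i = 0 := by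
        intro i hi h3
        by_contra h0
        have h1 : p ∣ i.natAbs := Int.natCast_dvd.mp hi
        have := Nat.le_of_dvd (Int.natAbs_pos.mpr h0) h1
        omega
      have hA : ∀ i j : ℤ, (p:ℤ) ∣ b + N*i → (p:ℤ) ∣ b + N*j → (p:ℤ) ∣ i - j := by
        intro i j h1 h2
        apply hd
        have := dvd_sub h1 h2
        have e : b + N*i - (b+N*j) = N*(i-j) := by ring
        rwa [e] at this
      have hB : ∀ i j : ℤ, (p:ℤ) ∣ f - (b + N*i) → (p:ℤ) ∣ f - (b + N*j) → (p:ℤ) ∣ i - j := by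
        intro i j h1 h2
        apply hd
        have := dvd_sub h2 h1
        have e : f - (b + N*j) - (f - (b+N*i)) = N*(i-j) := by ring
        rwa [e] at this
      have c : ∀ i j : ℤ, i - j ≠ 0 → (i-j).natAbs < 3 → (p:ℤ) ∣ i - j → False :=
        fun i j h1 h2 h3 => h1 (hno _ h3 h2)
      have c10 := c 1 0 (by norm_num) (by norm_num)
      have c20 := c 2 0 (by norm_num) (by norm_num)
      have c21 := c 2 1 (by norm_num) (by norm_num)
      by_cases a0 : (p:ℤ) ∣ b + N*0
      · have a1 : ¬ (p:ℤ) ∣ b + N*1 := fun h => c10 (hA _ _ h a0)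
        have a2 : ¬ (p:ℤ) ∣ b + N*2 := fun h => c20 (hA _ _ h a0)
        exact c21 (hB _ _ (hcon 2 a2) (hcon 1 a1))
      · by_cases a1 : (p:ℤ) ∣ b + N*1
        · have a2 : ¬ (p:ℤ) ∣ b + N*2 := fun h => c21 (hA _ _ h a1)
          exact c20 (hB _ _ (hcon 2 a2) (hcon 0 a0))
        · exact c10 (hB _ _ (hcon 1 a1) (hcon 0 a0))
    obtain ⟨j, hj1, hj2⟩ := key
    refine ⟨b + N*j, ?_, ?_⟩
    · have : (m:ℤ) ∣ N*j := ⟨(∏ q ∈ S, (q:ℤ))*j, by rw [hN]; ring⟩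
      refine Int.ModEq.trans ?_ hb
      exact (Int.modEq_iff_dvd.mpr (by
        have e : b - (b + N*j) = -(N*j) := by ring
        rw [e]; exact (dvd_neg).mpr this))
    · intro q hq
      rcases Finset.mem_insert.mp hq with h | h
      · subst h; exact ⟨hj1, hj2⟩
      · have hqN : (q:ℤ) ∣ N*j := by
          have : (q:ℤ) ∣ ∏ q ∈ S, (q:ℤ) := Finset.dvd_prod_of_mem (fun q : ℕ => (q:ℤ)) h
          exact Dvd.dvd.mul_right (Dvd.dvd.mul_left this _) _
        obtain ⟨h1, h2⟩ := hbS q h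
        refine ⟨fun h3 => h1 ((dvd_add_left hqN).mp h3), fun h3 => h2 ?_⟩
        have e : f - b = f - (b + N*j) + N*j := by ring
        rw [e]; exact dvd_add h3 hqN

lemma cop_of (V : ℕ) (b : ℤ) (hV : 0 < V) (h : ∀ p : ℕ, p.Prime → p ∣ V → ¬ (p:ℤ) ∣ b) :
    ∃ r : ℕ, r < V ∧ Nat.Coprime r V ∧ (r:ℤ) ≡ b [ZMOD (V:ℤ)] := by
  have hV' : (0:ℤ) < V := by exact_mod_cast hV
  have h0 := Int.emod_nonneg b hV'.ne'
  have h1 := Int.emod_lt_of_pos b hV'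
  have h2 : ((b % V).toNat : ℤ) = b % V := Int.toNat_of_nonneg h0
  refine ⟨(b % V).toNat, by omega, ?_, ?_⟩
  · apply Nat.coprime_of_dvd
    intro p hp hp1 hp2
    apply h p hp hp2
    have h3 : (p:ℤ) ∣ b % V := by rw [← h2]; exact_mod_cast hp1
    have h4 : (p:ℤ) ∣ V := by exact_mod_cast hp2
    rw [← Int.emod_add_mul_ediv b V]
    exact dvd_add h3 (Dvd.dvd.mul_right h4 _)
  · rw [h2]; exact Int.mod_modEq _ _

lemma local_choice (m : ℕ) (hm : 0 < m) (hme : Even m) (s₁ s₂ : ℤ)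
    (hs₁ : IsCoprime s₁ (m : ℤ)) (hs₂ : IsCoprime s₂ (m : ℤ)) (k : ℕ) (hk : 2 ≤ k)
    (F : ℤ[X]) (hFk : F.natDegree = k) (hFl : 0 < F.leadingCoeff) (n₀ : ℤ)
    (hc : F.eval n₀ ≡ s₁ + s₂ [ZMOD (m : ℤ)]) (hD : 0 < F.derivative.eval n₀) (w : ℕ) :
    ∃ V b1 b2 : ℕ, 0 < V ∧ m ∣ V ∧ b1 < V ∧ b2 < V ∧ Nat.Coprime b1 V ∧ Nat.Coprime b2 V ∧
      (b1:ℤ) ≡ s₁ [ZMOD (m:ℤ)] ∧ (b2:ℤ) ≡ s₂ [ZMOD (m:ℤ)] ∧ ∃ (G : ℤ[X]) (lam W' : ℕ),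
      G.natDegree = k ∧ G.leadingCoeff = lam ∧ 0 < lam ∧
      (∀ p : ℕ, p.Prime → p ∣ W' → ∀ (q1 : ℕ) (t : ℤ), ((p*q1 : ℕ) : ℤ) ∣ G.eval (t+q1) - G.eval t - q1) ∧
      (∀ p : ℕ, p.Prime → p ∣ lam → p ∣ W') ∧ (∀ p : ℕ, p.Prime → p ≤ w → p ∣ W') ∧
      ∀ t : ℤ, ∃ n : ℤ, (b1:ℤ) + b2 + V*G.eval t = F.eval n := by
  obtain ⟨D0, hD0⟩ := Int.eq_ofNat_of_zero_le hD.le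
  obtain ⟨a, ha⟩ := Int.eq_ofNat_of_zero_le hFl.le
  rw [hD0] at hD
  rw [ha] at hFl
  have hD0p : 0 < D0 := by exact_mod_cast hD
  have hap : 0 < a := by exact_mod_cast hFl
  set W' := w.factorial * m * a * D0 with hW'
  have hW'p : 0 < W' := by have := Nat.factorial_pos w; positivity
  set W := W' * D0 with hW
  set V := W * D0 with hV
  have hWp : 0 < W := by positivity
  have hVp : 0 < V := by positivity
  have hmV : m ∣ V := ⟨w.factorial * a * D0 * D0 * D0, by rw [hV, hW, hW']; ring⟩
  set f := F.eval n₀ with hf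
  obtain ⟨b, hbm, hbp⟩ := crt_choice m hm hme s₁ f (V.primeFactors.filter (fun p => ¬ p ∣ m)) (by
    intro p hp
    rw [Finset.mem_filter] at hp
    exact ⟨Nat.prime_of_mem_primeFactors hp.1, hp.2⟩)
  have hfb : f - b ≡ s₂ [ZMOD (m:ℤ)] := by
    have := Int.ModEq.sub hc hbm
    simpa using this
  have hcopdvd : ∀ (s x : ℤ), IsCoprime s (m:ℤ) → x ≡ s [ZMOD (m:ℤ)] → ∀ p : ℕ, p.Prime → p ∣ m → ¬ (p:ℤ) ∣ x := by
    intro s x hs hx p hp hpm hpx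
    have h1 : (p:ℤ) ∣ m := by exact_mod_cast hpm
    have h2 : (p:ℤ) ∣ s := by
      have := (hx.dvd)
      have h3 := dvd_add (h1.trans this) hpx
      simpa using h3
    have h4 := hs.isUnit_of_dvd' h2 h1
    exact (Nat.prime_iff_prime_int.mp hp).not_isUnit h4
  obtain ⟨b1, hb1V, hb1c, hb1⟩ := cop_of V b hVp (by
    intro p hp hpV
    by_cases hpm : p ∣ m
    · exact hcopdvd s₁ b hs₁ hbm p hp hpm
    · exact (hbp p (by rw [Finset.mem_filter, Nat.mem_primeFactors]; exact ⟨⟨hp, hpV, hVp.ne'⟩, hpm⟩)).1)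
  obtain ⟨b2, hb2V, hb2c, hb2⟩ := cop_of V (f - b) hVp (by
    intro p hp hpV
    by_cases hpm : p ∣ m
    · exact hcopdvd s₂ (f-b) hs₂ hfb p hp hpm
    · exact (hbp p (by rw [Finset.mem_filter, Nat.mem_primeFactors]; exact ⟨⟨hp, hpV, hVp.ne'⟩, hpm⟩)).2)
  have hmVZ : (m:ℤ) ∣ (V:ℤ) := by exact_mod_cast hmV
  have hsum : (V:ℤ) ∣ f - (b1 + b2) := by
    have := (hb1.add hb2).dvd
    simpa using this
  obtain ⟨c, hcV⟩ := hsum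
  obtain ⟨B, hB⟩ := (F.map (C : ℤ →+* ℤ[X])).binomExpansion (C n₀) (C (W:ℤ) * X)
  set Lp : ℤ[X] := C n₀ + C (W:ℤ) * X with hLp
  have hcomp : ∀ q : ℤ[X], (F.map (C : ℤ →+* ℤ[X])).eval q = F.comp q := by
    intro q; rw [eval_map]; rfl
  have hB' : F.comp Lp = C f + C (D0:ℤ) * (C (W:ℤ) * X) + B * (C (W:ℤ) * X)^2 := by
    rw [← hcomp, hB, hcomp, derivative_map, eval_map, comp_C]
    congr 2
    have : eval₂ C (C n₀) (derivative F) = (derivative F).comp (C n₀) := rfl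
    rw [this, comp_C, hD0]
  set A : ℤ[X] := B * X^2 with hA
  set G : ℤ[X] := C c + X + C (W':ℤ) * A with hG
  have hVG : C (V:ℤ) * G = F.comp Lp - C ((b1:ℤ)+b2) := by
    rw [hB', hG, hA]
    have h1 : (V:ℤ) = W' * D0 * D0 := by rw [hV, hW]; push_cast; ring
    have h2 : (W:ℤ) = W' * D0 := by rw [hW]; push_cast; ring
    have h3 : f = V * c + (b1+b2) := by linarith
    rw [h3, h2, h1]
    simp only [map_add, map_mul]
    ring
  have hV0 : (V:ℤ) ≠ 0 := by exact_mod_cast hVp.ne'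
  have hW0 : (W:ℤ) ≠ 0 := by exact_mod_cast hWp.ne'
  have hLd : Lp.natDegree = 1 := by rw [hLp, natDegree_C_add, natDegree_C_mul_X _ hW0]
  have hLl : Lp.leadingCoeff = W := by
    rw [leadingCoeff, hLd, hLp, coeff_add, coeff_C, coeff_C_mul, coeff_X]; norm_num
  have hcd : (F.comp Lp).natDegree = k := by rw [natDegree_comp, hLd, hFk, mul_one]
  have hGk : G.natDegree = k := by
    rw [← natDegree_C_mul hV0, hVG, natDegree_sub_C, hcd]
  have hGl : (V:ℤ) * G.leadingCoeff = a * W^k := by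
    have h1 : (C (V:ℤ) * G).coeff k = (F.comp Lp).coeff k := by
      rw [hVG, coeff_sub, coeff_C, if_neg (by omega), sub_zero]
    rw [coeff_C_mul] at h1
    have h2 : (F.comp Lp).coeff k = a * W^k := by
      rw [← hcd, coeff_natDegree, leadingCoeff_comp (by rw [hLd]; norm_num), hLl, hFk, ha, hcd]
    rw [leadingCoeff, hGk, h1, h2]
  have hlpos : 0 < G.leadingCoeff := by
    have : 0 < (V:ℤ) * G.leadingCoeff := by rw [hGl]; positivity
    exact pos_of_mul_pos_right this (by positivity)
  obtain ⟨lam, hlam⟩ := Int.eq_ofNat_of_zero_le hlpos.le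
  refine ⟨V, b1, b2, hVp, hmV, hb1V, hb2V, hb1c, hb2c, (hb1.of_dvd hmVZ).trans hbm, (hb2.of_dvd hmVZ).trans hfb,
    G, lam, W', hGk, hlam, by rw [hlam] at hlpos; exact_mod_cast hlpos, ?_, ?_, ?_, ?_⟩
  · intro p hp hpW q1 t
    have e : G.eval (t+q1) - G.eval t - q1 = W' * (A.eval (t+q1) - A.eval t) := by
      rw [hG]; simp only [eval_add, eval_C, eval_X, eval_mul]; ring
    rw [e, Nat.cast_mul]
    have h1 := sub_dvd_eval_sub (t+q1) t A
    have h2 : t + q1 - t = (q1:ℤ) := by ring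
    rw [h2] at h1
    exact mul_dvd_mul (by exact_mod_cast hpW) h1
  · intro p hp hpl
    rw [hlam] at hGl
    have h1 : V * lam = a * W^k := by exact_mod_cast hGl
    have h2 : p ∣ a * W^k := h1 ▸ Dvd.dvd.mul_left hpl V
    rcases hp.dvd_mul.mp h2 with h | h
    · exact h.trans ⟨w.factorial * m * D0, by rw [hW']; ring⟩
    · have h3 := hp.dvd_of_dvd_pow h
      rcases hp.dvd_mul.mp h3 with h | h
      · exact h
      · exact h.trans ⟨w.factorial * m * a, by rw [hW']; ring⟩
  · intro p hp hpw
    exact ((Nat.Prime.dvd_factorial hp).mpr hpw).trans ⟨m * a * D0, by rw [hW']; ring⟩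
  · intro t
    refine ⟨n₀ + W*t, ?_⟩
    have := congrArg (eval t) hVG
    simp only [eval_mul, eval_C, eval_sub, eval_comp, hLp, eval_add, eval_X] at this
    linarith


lemma triple (A1 A2 : Finset ℕ) (N : ℕ) (hN : 0 < N) (y : ℤ) :
    ∑ r ∈ Finset.range N, fh A1 (r/N) * fh A2 (r/N) * ee (-(r/N) * y) =
      (((∑ x1 ∈ A1, ∑ x2 ∈ A2, if (N:ℤ) ∣ (x1:ℤ) + x2 - y then (N:ℝ) else 0 : ℝ)) : ℂ) := by
  have h1 : ∀ r ∈ Finset.range N, fh A1 (r/N) * fh A2 (r/N) * ee (-(r/N) * y) =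
      ∑ x1 ∈ A1, ∑ x2 ∈ A2, ee (r/N * (((x1:ℤ) + x2 - y : ℤ) : ℝ)) := by
    intro r _
    unfold fh
    rw [Finset.sum_mul_sum, Finset.sum_mul]
    refine Finset.sum_congr rfl fun x1 _ => ?_
    rw [Finset.sum_mul]
    refine Finset.sum_congr rfl fun x2 _ => ?_
    rw [← ee_add, ← ee_add]
    congr 1
    push_cast; ring
  rw [Finset.sum_congr rfl h1, Finset.sum_comm]
  push_cast
  refine Finset.sum_congr rfl fun x1 _ => ?_
  rw [Finset.sum_comm]
  refine Finset.sum_congr rfl fun x2 _ => ?_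
  have := orth N hN ((x1:ℤ) + x2 - y)
  push_cast at this
  rw [this]
  split_ifs <;> simp

lemma circle_lower (A1 A2 : Finset ℕ) (g : ℕ → ℤ) (H N : ℕ) (dmax : ℝ) (hN : 0 < N)
    (hg0 : ∀ s, 0 < g (s+1) - g s) (hg : ∀ s < H, ((g (s+1) - g s : ℤ) : ℝ) ≤ dmax)
    (hlo : ∀ x1 ∈ A1, ∀ x2 ∈ A2, g 0 ≤ (x1:ℤ) + x2 ∧ (x1:ℤ) + x2 < g H)
    (hno : ∀ x1 ∈ A1, ∀ x2 ∈ A2, ∀ s < H, ¬ (N:ℤ) ∣ (x1:ℤ) + x2 - g s) :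
    (N:ℝ) * A1.card * A2.card / dmax ≤ ∑ r ∈ Finset.range N, ‖fh A1 (r/N)‖ * ‖fh A2 (r/N)‖ *
      ‖TT g H (-(r/N)) - TZ g H (-(r/N))‖ := by
  set c : ℤ → ℝ := fun y => ∑ x1 ∈ A1, ∑ x2 ∈ A2, if (N:ℤ) ∣ (x1:ℤ) + x2 - y then (N:ℝ) else 0 with hc
  have hT : ∑ r ∈ Finset.range N, fh A1 (r/N) * fh A2 (r/N) * TT g H (-(r/N)) = 0 := by
    have : ∀ r ∈ Finset.range N, fh A1 (r/N) * fh A2 (r/N) * TT g H (-(r/N)) =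
        ∑ s ∈ Finset.range H, fh A1 (r/N) * fh A2 (r/N) * ee (-(r/N) * g s) := by
      intro r _
      unfold TT
      rw [Finset.mul_sum]
    rw [Finset.sum_congr rfl this, Finset.sum_comm]
    refine Finset.sum_eq_zero fun s hs => ?_
    rw [triple A1 A2 N hN (g s)]
    rw [Finset.mem_range] at hs
    rw [Complex.ofReal_eq_zero]
    refine Finset.sum_eq_zero fun x1 h1 => Finset.sum_eq_zero fun x2 h2 => ?_
    rw [if_neg (hno x1 h1 x2 h2 s hs)]
  have hZ : ∑ r ∈ Finset.range N, fh A1 (r/N) * fh A2 (r/N) * TZ g H (-(r/N)) =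
      ((∑ s ∈ Finset.range H, 1 / ((g (s+1) - g s : ℤ) : ℝ) * ∑ y ∈ Finset.Ico (g s) (g (s+1)), c y : ℝ) : ℂ) := by
    have : ∀ r ∈ Finset.range N, fh A1 (r/N) * fh A2 (r/N) * TZ g H (-(r/N)) =
        ∑ s ∈ Finset.range H, ((1 / ((g (s+1) - g s : ℤ) : ℝ) : ℝ) : ℂ) *
          ∑ y ∈ Finset.Ico (g s) (g (s+1)), fh A1 (r/N) * fh A2 (r/N) * ee (-(r/N) * y) := by
      intro r _
      unfold TZ
      rw [Finset.mul_sum]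
      refine Finset.sum_congr rfl fun s _ => ?_
      rw [← Finset.mul_sum]; ring
    rw [Finset.sum_congr rfl this, Finset.sum_comm, Complex.ofReal_sum]
    refine Finset.sum_congr rfl fun s _ => ?_
    rw [← Finset.mul_sum, Finset.sum_comm, Complex.ofReal_mul, Complex.ofReal_sum]
    congr 1
    refine Finset.sum_congr rfl fun y _ => ?_
    exact triple A1 A2 N hN y
  have hdiff : ∑ r ∈ Finset.range N, fh A1 (r/N) * fh A2 (r/N) * (TT g H (-(r/N)) - TZ g H (-(r/N))) =
      -((∑ s ∈ Finset.range H, 1 / ((g (s+1) - g s : ℤ) : ℝ) * ∑ y ∈ Finset.Ico (g s) (g (s+1)), c y : ℝ) : ℂ) := by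
    rw [← hZ]
    simp only [mul_sub, Finset.sum_sub_distrib, hT, zero_sub]
  set R : ℝ := ∑ s ∈ Finset.range H, 1 / ((g (s+1) - g s : ℤ) : ℝ) * ∑ y ∈ Finset.Ico (g s) (g (s+1)), c y with hR
  have hup : R ≤ ∑ r ∈ Finset.range N, ‖fh A1 (r/N)‖ * ‖fh A2 (r/N)‖ * ‖TT g H (-(r/N)) - TZ g H (-(r/N))‖ := by
    have h1 := congrArg norm hdiff
    rw [norm_neg, Complex.norm_real] at h1
    calc R ≤ ‖R‖ := Real.le_norm_self R
      _ = _ := h1.symm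
      _ ≤ _ := norm_sum_le _ _
      _ = _ := by simp only [norm_mul]
  refine le_trans ?_ hup
  have hsw : R = ∑ x1 ∈ A1, ∑ x2 ∈ A2, ∑ s ∈ Finset.range H, 1 / ((g (s+1) - g s : ℤ) : ℝ) *
      ∑ y ∈ Finset.Ico (g s) (g (s+1)), if (N:ℤ) ∣ (x1:ℤ) + x2 - y then (N:ℝ) else 0 := by
    have h1 : ∀ s ∈ Finset.range H, 1 / ((g (s+1) - g s : ℤ) : ℝ) * ∑ y ∈ Finset.Ico (g s) (g (s+1)), c y =
        ∑ x1 ∈ A1, ∑ x2 ∈ A2, 1 / ((g (s+1) - g s : ℤ) : ℝ) *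
      ∑ y ∈ Finset.Ico (g s) (g (s+1)), if (N:ℤ) ∣ (x1:ℤ) + x2 - y then (N:ℝ) else 0 := by
      intro s _
      simp only [← Finset.mul_sum]
      congr 1
      rw [hc, Finset.sum_comm]
      refine Finset.sum_congr rfl fun x1 _ => ?_
      rw [Finset.sum_comm]
    rw [hR, Finset.sum_congr rfl h1, Finset.sum_comm]
    refine Finset.sum_congr rfl fun x1 _ => ?_
    rw [Finset.sum_comm]
  have hterm : ∀ x1 ∈ A1, ∀ x2 ∈ A2, (N:ℝ)/dmax ≤ ∑ s ∈ Finset.range H, 1 / ((g (s+1) - g s : ℤ) : ℝ) *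
      ∑ y ∈ Finset.Ico (g s) (g (s+1)), if (N:ℤ) ∣ (x1:ℤ) + x2 - y then (N:ℝ) else 0 := by
    intro x1 h1 x2 h2
    obtain ⟨l1, l2⟩ := hlo x1 h1 x2 h2
    have hex : ∃ s, (x1:ℤ) + x2 < g (s+1) := by
      refine ⟨H, ?_⟩
      have := hg0 H; linarith
    have hs1 := Nat.find_spec hex
    have hmin := fun t (h : t < Nat.find hex) => Nat.find_min hex h
    set s := Nat.find hex with hs
    have hs2 : g s ≤ (x1:ℤ) + x2 := by
      rcases Nat.eq_zero_or_pos s with h | h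
      · rw [h]; exact l1
      · have := hmin (s-1) (by omega)
        push Not at this
        rwa [show s-1+1 = s by omega] at this
    have hsH : s < H := by
      by_contra hcon
      push Not at hcon
      have : g H ≤ g s := by
        have hm : Monotone g := monotone_nat_of_le_succ (fun n => by have := hg0 n; linarith)
        exact hm hcon
      linarith
    have hnn : ∀ s' ∈ Finset.range H, 0 ≤ 1 / ((g (s'+1) - g s' : ℤ) : ℝ) *
      ∑ y ∈ Finset.Ico (g s') (g (s'+1)), if (N:ℤ) ∣ (x1:ℤ) + x2 - y then (N:ℝ) else 0 := by
      intro s' _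
      have : (0:ℝ) < ((g (s'+1) - g s' : ℤ) : ℝ) := by exact_mod_cast hg0 s'
      apply mul_nonneg (by positivity)
      apply Finset.sum_nonneg
      intro y _
      split_ifs <;> positivity
    refine le_trans ?_ (Finset.single_le_sum hnn (Finset.mem_range.mpr hsH))
    have hp : (0:ℝ) < ((g (s+1) - g s : ℤ) : ℝ) := by exact_mod_cast hg0 s
    have hin : (N:ℝ) ≤ ∑ y ∈ Finset.Ico (g s) (g (s+1)), if (N:ℤ) ∣ (x1:ℤ) + x2 - y then (N:ℝ) else 0 := by
      have hn2 : ∀ y ∈ Finset.Ico (g s) (g (s+1)), 0 ≤ if (N:ℤ) ∣ (x1:ℤ) + x2 - y then (N:ℝ) else 0 := by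
        intro y _; split_ifs <;> positivity
      have := Finset.single_le_sum hn2 (Finset.mem_Ico.mpr ⟨hs2, hs1⟩)
      simpa using this
    calc (N:ℝ)/dmax ≤ N / ((g (s+1) - g s : ℤ) : ℝ) := by
          gcongr
          exact hg s hsH
      _ = 1 / ((g (s+1) - g s : ℤ) : ℝ) * N := by ring
      _ ≤ _ := by gcongr
  rw [hsw]
  calc (N:ℝ) * A1.card * A2.card / dmax = ∑ x1 ∈ A1, ∑ x2 ∈ A2, (N:ℝ)/dmax := by
        simp only [Finset.sum_const, nsmul_eq_mul]; ring
    _ ≤ _ := Finset.sum_le_sum fun x1 h1 => Finset.sum_le_sum fun x2 h2 => hterm x1 h1 x2 h2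


lemma shift_cop (V b l Z : ℕ) (hl : 1 ≤ l) (hlZ : l ≤ Z) (hcop : Nat.Coprime l V) :
    ∃ u, ∀ x : ℕ, (b+V*x).Prime → Z < b+V*x → Nat.Coprime (x+u) l := by
  rcases Nat.eq_or_lt_of_le hl with h | h
  · refine ⟨0, fun x _ _ => ?_⟩
    rw [← h]; exact Nat.coprime_one_right _
  obtain ⟨v, hv⟩ := Nat.exists_mul_mod_eq_one_of_coprime hcop.symm h
  refine ⟨v*b, fun x hx hZ => ?_⟩
  have hv' : V*v ≡ 1 [MOD l] := by
    rw [Nat.ModEq, hv.2, Nat.mod_eq_of_lt h]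
  have h1 : V*(x+v*b) ≡ b+V*x [MOD l] := by
    have e : V*(x+v*b) = (V*v)*b + V*x := by ring
    rw [e]
    have := (hv'.mul_right b).add_right (V*x)
    simpa using this
  apply Nat.coprime_of_dvd
  intro p hp h2 h3
  have h4 : p ∣ b+V*x := by
    have h5 := h1.of_dvd h3
    exact (Nat.ModEq.dvd_iff h5 dvd_rfl).mp (Dvd.dvd.mul_left h2 V)
  have h6 := (Nat.prime_dvd_prime_iff_eq hp hx).mp h4
  have h7 := Nat.le_of_dvd (by omega) h3
  omega

lemma M_bound (A : Finset ℕ) (N lo : ℕ) (hN : 0 < N) (hA : ∀ x ∈ A, lo ≤ x ∧ x < lo + N)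
    (V b Z Q : ℕ) (hV : 0 < V) (hpr : ∀ x ∈ A, (b+V*x).Prime ∧ Z < b+V*x)
    (hZN : ∀ l, 1 ≤ l → l ≤ Z → l ∣ N) (τ : ℝ) (hτ : 2 * τ * ((Q:ℝ)^2 * (Z:ℝ)^2) < 1)
    (M : Finset ℕ) (hM : M ⊆ Finset.range N)
    (hMq : ∀ r ∈ M, ∃ q : ℕ, ∃ a : ℤ, 1 ≤ q ∧ q ≤ Q ∧ |(r:ℝ) / N - a / q| ≤ τ) :
    Real.log Z * ∑ r ∈ M, ‖fh A ((r:ℝ)/N)‖^2 ≤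
      ((V:ℝ)/V.totient) * ((Q.factorial:ℝ)/(Q.factorial).totient) * (N * A.card) := by
  have hQ := Nat.factorial_pos Q
  have h1 := ls2 A N lo hN hA Q Z τ hτ M hM hMq (sqS Z (V*Q.factorial)) (by
    intro l hl
    unfold sqS at hl
    rw [Finset.mem_filter, Finset.mem_Icc] at hl
    obtain ⟨⟨l1, l2⟩, l3, l4⟩ := hl
    refine ⟨l3, l2, hZN l l1 l2, ?_, ?_⟩
    · intro q q1 q2
      have h2 : Nat.Coprime l Q.factorial := l4.coprime_mul_left_right
      exact (h2.coprime_dvd_right (Nat.dvd_factorial q1 q2)).symm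
    · obtain ⟨u, hu⟩ := shift_cop V b l Z l1 l2 l4.coprime_mul_right_right
      exact ⟨u, fun x hx => hu x (hpr x hx).1 (hpr x hx).2⟩)
  have h2 := sum_phi_lower Z (V*Q.factorial) (by positivity)
  have h3 := totient_ratio_mul V Q.factorial hV hQ
  set S1 := ∑ l ∈ sqS Z (V*Q.factorial), 1/(l.totient:ℝ)
  set X := ∑ r ∈ M, ‖fh A ((r:ℝ)/N)‖^2
  have hS1 : 0 ≤ S1 := Finset.sum_nonneg fun l _ => by positivity
  have hX : 0 ≤ X := Finset.sum_nonneg fun l _ => by positivity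
  calc Real.log Z * X ≤ ((((V*Q.factorial:ℕ):ℝ)/(V*Q.factorial).totient) * S1) * X := by gcongr
    _ ≤ ((((V:ℝ)/V.totient) * ((Q.factorial:ℝ)/(Q.factorial).totient)) * S1) * X := by gcongr
    _ = (((V:ℝ)/V.totient) * ((Q.factorial:ℝ)/(Q.factorial).totient)) * (S1 * X) := by ring
    _ ≤ _ := by gcongr

lemma upper_one (A : Finset ℕ) (N lo : ℕ) (hN : 0 < N) (hA : ∀ x ∈ A, lo ≤ x ∧ x < lo + N)
    (V b Z C i0 I H : ℕ) (hV : 0 < V) (hpr : ∀ x ∈ A, (b+V*x).Prime ∧ Z < b+V*x)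
    (hZN : ∀ l, 1 ≤ l → l ≤ Z → l ∣ N) (τ C8 : ℝ) (hτ0 : 0 ≤ τ) (hτ : 2 * τ * ((Z:ℝ)^2 * (Z:ℝ)^2) < 1)
    (hC : 1 ≤ C) (hC8 : ∀ J : ℕ, 1 ≤ J → gq J ≤ C8 * (J:ℝ)^8) (hZ : Z = 2^(I*C)) (hi0 : 1 ≤ i0) (hI : i0 ≤ I)
    (e : ℕ → ℝ)
    (hdich : ∀ r < N, ∀ i, 1 ≤ i → i ≤ I → e r ≤ 2*H/2^i ∨
      ∃ q : ℕ, ∃ a : ℤ, 2^(i0*C) < q ∧ q ≤ 2^(i*C) ∧ |(r:ℝ)/N - a/q| ≤ τ) :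
    Real.log Z * ∑ r ∈ Finset.range N, ‖fh A ((r:ℝ)/N)‖^2 * e r ≤
      N * A.card * H * (2/2^I * Real.log Z + ((V:ℝ)/V.totient) *
        ∑ i ∈ Finset.Ico i0 I, 2/2^i * (C8 * (((i+1)*C:ℕ):ℝ)^8)) := by
  classical
  set Ms : ℕ → Finset ℕ := fun i => (Finset.range N).filter
    (fun r => ∃ q : ℕ, ∃ a : ℤ, 1 ≤ q ∧ q ≤ 2^(i*C) ∧ |(r:ℝ)/N - a/q| ≤ τ) with hMs
  have hlog : 0 ≤ Real.log Z := Real.log_natCast_nonneg Z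
  have hpt : ∀ r ∈ Finset.range N, e r ≤ 2*H/2^I + ∑ i ∈ Finset.Ico i0 I, if r ∈ Ms (i+1) then 2*(H:ℝ)/2^i else 0 := by
    intro r hr
    have hr' := Finset.mem_range.mp hr
    have hnn : ∀ i ∈ Finset.Ico i0 I, 0 ≤ if r ∈ Ms (i+1) then 2*(H:ℝ)/2^i else 0 := by
      intro i _; split_ifs <;> positivity
    have hsn := Finset.sum_nonneg hnn
    by_cases hE : e r ≤ 2*H/2^I
    · linarith
    have h0 : e r ≤ 2*H/2^i0 := by
      rcases hdich r hr' i0 hi0 hI with h | ⟨q, a, h1, h2, _⟩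
      · exact h
      · omega
    have hex : ∃ j, ¬ e r ≤ 2*H/2^(i0+j) := ⟨I-i0, by rw [show i0+(I-i0) = I by omega]; exact hE⟩
    have hs := Nat.find_spec hex
    have hmin := fun t (h : t < Nat.find hex) => Nat.find_min hex h
    have hle : Nat.find hex ≤ I - i0 := Nat.find_min' hex (by rw [show i0+(I-i0) = I by omega]; exact hE)
    set j := Nat.find hex
    have hj1 : 1 ≤ j := by
      rcases Nat.eq_zero_or_pos j with h | h
      · rw [h] at hs; exact absurd h0 hs
      · exact h
    have hprev := hmin (j-1) (by omega)
    push Not at hprev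
    set i := i0 + (j-1) with hi
    have hii : i0 + j = i+1 := by omega
    rw [hii] at hs
    have hmem : r ∈ Ms (i+1) := by
      rcases hdich r hr' (i+1) (by omega) (by omega) with h | ⟨q, a, h1, h2, h3⟩
      · exact absurd h hs
      · rw [hMs, Finset.mem_filter]
        exact ⟨hr, q, a, Nat.one_le_iff_ne_zero.mpr (Nat.ne_zero_of_lt h1), h2, h3⟩
    have := Finset.single_le_sum hnn (Finset.mem_Ico.mpr ⟨by omega, by omega⟩ : i ∈ Finset.Ico i0 I)
    rw [if_pos hmem] at this
    have hp : (0:ℝ) ≤ 2*H/2^I := by positivity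
    linarith
  have hMb : ∀ i ∈ Finset.Ico i0 I, Real.log Z * ∑ r ∈ Ms (i+1), ‖fh A ((r:ℝ)/N)‖^2 ≤
      ((V:ℝ)/V.totient) * (C8 * (((i+1)*C:ℕ):ℝ)^8) * (N * A.card) := by
    intro i hi
    rw [Finset.mem_Ico] at hi
    have hQZ : 2^((i+1)*C) ≤ Z := by
      rw [hZ]; apply Nat.pow_le_pow_right (by norm_num)
      apply Nat.mul_le_mul_right; omega
    have hQZr : ((2^((i+1)*C):ℕ):ℝ) ≤ Z := by exact_mod_cast hQZ
    have := M_bound A N lo hN hA V b Z (2^((i+1)*C)) hV hpr hZN τ (by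
      refine lt_of_le_of_lt ?_ hτ
      gcongr) (Ms (i+1)) (Finset.filter_subset _ _) (by
      intro r hr
      rw [hMs, Finset.mem_filter] at hr
      exact hr.2)
    refine this.trans ?_
    have h8 := hC8 ((i+1)*C) (by nlinarith)
    unfold gq at h8
    gcongr
  have hpv := parseval A N lo hN hA
  calc Real.log Z * ∑ r ∈ Finset.range N, ‖fh A ((r:ℝ)/N)‖^2 * e r
      ≤ Real.log Z * ∑ r ∈ Finset.range N, ‖fh A ((r:ℝ)/N)‖^2 * (2*H/2^I + ∑ i ∈ Finset.Ico i0 I, if r ∈ Ms (i+1) then 2*(H:ℝ)/2^i else 0) := by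
        apply mul_le_mul_of_nonneg_left _ hlog
        exact Finset.sum_le_sum fun r hr => mul_le_mul_of_nonneg_left (hpt r hr) (by positivity)
    _ = 2*H/2^I * Real.log Z * (N * A.card) + ∑ i ∈ Finset.Ico i0 I, 2*(H:ℝ)/2^i * (Real.log Z * ∑ r ∈ Ms (i+1), ‖fh A ((r:ℝ)/N)‖^2) := by
        rw [← hpv]
        simp only [mul_add, Finset.sum_add_distrib]
        congr 1
        · rw [← Finset.sum_mul]; ring
        · simp only [Finset.mul_sum]
          rw [Finset.sum_comm]
          refine Finset.sum_congr rfl fun i _ => ?_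
          have : Ms (i+1) = (Finset.range N).filter (fun r => r ∈ Ms (i+1)) := by
            ext r
            simp only [Finset.mem_filter]
            exact ⟨fun h => ⟨Finset.filter_subset _ _ h, h⟩, fun h => h.2⟩
          conv_rhs => rw [this]
          rw [Finset.sum_filter]
          refine Finset.sum_congr rfl fun r _ => ?_
          split_ifs <;> ring
    _ ≤ 2*H/2^I * Real.log Z * (N * A.card) + ∑ i ∈ Finset.Ico i0 I, 2*(H:ℝ)/2^i * (((V:ℝ)/V.totient) * (C8 * (((i+1)*C:ℕ):ℝ)^8) * (N * A.card)) := by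
        apply add_le_add_right
        exact Finset.sum_le_sum fun i hi => mul_le_mul_of_nonneg_left (hMb i hi) (by positivity)
    _ = _ := by
        rw [mul_add, Finset.mul_sum, Finset.mul_sum]
        congr 1
        · ring
        · refine Finset.sum_congr rfl fun i _ => ?_
          ring

lemma tail_small (C : ℕ) (C8 ε : ℝ) (hC8 : 0 < C8) (hε : 0 < ε) :
    ∃ i0 : ℕ, 1 ≤ i0 ∧ ∀ I : ℕ, ∑ i ∈ Finset.Ico i0 I, 2/2^i * (C8 * (((i+1)*C:ℕ):ℝ)^8) ≤ ε := by
  set f : ℕ → ℝ := fun i => 2/2^i * (C8 * (((i+1)*C:ℕ):ℝ)^8) with hf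
  have hs0 : Summable (fun n : ℕ => (n:ℝ)^8 * (1/2:ℝ)^n) :=
    summable_pow_mul_geometric_of_norm_lt_one 8 (by norm_num)
  have hs1 := (summable_nat_add_iff 1).mpr hs0
  have hs : Summable f := by
    have := hs1.mul_left (4*C8*(C:ℝ)^8)
    refine this.congr fun i => ?_
    rw [hf]; simp only
    push_cast
    rw [mul_pow, one_div, inv_pow, pow_succ]
    field_simp
    ring
  have hnn : ∀ i, 0 ≤ f i := fun i => by positivity
  have ht := hs.hasSum.tendsto_sum_nat
  have hev := ht.eventually (lt_mem_nhds (show (∑' i, f i) - ε < ∑' i, f i by linarith))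
  obtain ⟨j, hj⟩ := Filter.eventually_atTop.mp hev
  refine ⟨max 1 j, le_max_left _ _, fun I => ?_⟩
  rcases Nat.lt_or_ge I (max 1 j) with h | h
  · rw [Finset.Ico_eq_empty (by omega)]; simp [hε.le]
  · rw [Finset.sum_Ico_eq_sub _ h]
    have h1 := hj (max 1 j) (le_max_right _ _)
    have h2 := hs.sum_le_tsum (Finset.range I) (fun i _ => hnn i)
    linarith


lemma choose_I (K c : ℝ) (C B : ℕ) (hK : 0 < K) (hc : 0 < c) (hC : 1 ≤ C) : ∃ I : ℕ, B ≤ I ∧ B ≤ 2^(I*C) ∧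
    K*(2/2^I*Real.log ((2^(I*C):ℕ):ℝ)) < c/2 := by
  have h1 := tendsto_self_mul_const_pow_of_lt_one (r := (1/2:ℝ)) (by norm_num) (by norm_num)
  have h2 := h1.eventually (gt_mem_nhds (show (0:ℝ) < c/(4*K*C) by
    have : (0:ℝ) < C := by exact_mod_cast hC
    positivity))
  obtain ⟨J, hJ⟩ := Filter.eventually_atTop.mp h2
  refine ⟨max J B, le_max_right _ _, ?_, ?_⟩
  · have a1 : max J B < 2^(max J B) := Nat.lt_two_pow_self
    have a2 : 2^(max J B) ≤ 2^(max J B*C) := Nat.pow_le_pow_right (by norm_num) (Nat.le_mul_of_pos_right _ hC)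
    have := le_max_right J B
    omega
  · have h3 := hJ (max J B) (le_max_left _ _)
    set I := max J B
    have hC0 : (0:ℝ) < C := by exact_mod_cast hC
    rw [lt_div_iff₀ (by positivity)] at h3
    have h4 : Real.log ((2^(I*C):ℕ):ℝ) ≤ I*C := by
      push_cast
      rw [Real.log_pow]
      push_cast
      have : Real.log 2 ≤ 1 := by linarith [Real.log_two_lt_d9]
      calc (I:ℝ)*C*Real.log 2 ≤ I*C*1 := by gcongr
        _ = _ := by ring
    calc K*(2/2^I*Real.log ((2^(I*C):ℕ):ℝ)) ≤ K*(2/2^I*(I*C)) := by gcongr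
      _ = (I*(1/2)^I*(4*K*C))/2 := by rw [one_div, inv_pow]; field_simp; ring
      _ < c/2 := by linarith

lemma num_contra (N P H dmax K Y c v L X1 X2 R T : ℝ) (hN : 0 < N) (hP : 0 < P) (hd : 0 < dmax) (hK : 0 < K)
    (hY : 0 < Y) (hv : 1 ≤ v) (hc : 0 < c) (hL : 0 < L) (hR0 : 0 ≤ R) (hT0 : 0 ≤ T)
    (h1 : N*P*P/dmax ≤ (X1+X2)/2) (h2 : L*X1 ≤ N*P*H*(T + v*R)) (h3 : L*X2 ≤ N*P*H*(T+v*R))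
    (h4 : H*dmax ≤ K*Y) (h5 : c*v*Y/L ≤ P) (h6 : K*R ≤ c/2) (h7 : K*T < c/2) : False := by
  rw [div_le_iff₀ hd] at h1
  rw [div_le_iff₀ hL] at h5
  have h8 : L*(N*P*P) ≤ N*P*H*(T+v*R)*dmax := by
    calc L*(N*P*P) ≤ L*((X1+X2)/2*dmax) := by gcongr
      _ = (L*X1+L*X2)/2*dmax := by ring
      _ ≤ (N*P*H*(T + v*R) + N*P*H*(T + v*R))/2*dmax := by gcongr
      _ = _ := by ring
  have h9 : (N*P)*(P*L) ≤ (N*P)*(H*dmax*(T+v*R)) := by linarith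
  have h10 := le_of_mul_le_mul_left h9 (by positivity)
  have hB : 0 ≤ T+v*R := by positivity
  have h11 : c*v*Y ≤ K*Y*(T+v*R) := by
    calc c*v*Y ≤ P*L := h5
      _ ≤ H*dmax*(T+v*R) := h10
      _ ≤ _ := by gcongr
  have h12 : (c*v)*Y ≤ (K*T+v*(K*R))*Y := by linarith
  have h13 := le_of_mul_le_mul_right h12 hY
  have h14 : v*(K*R) ≤ v*(c/2) := by gcongr
  have h15 : c/2*1 ≤ c/2*v := by gcongr
  linarith

lemma core (m : ℕ) (hm : 0 < m) (hme : Even m) (s₁ s₂ : ℤ)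
    (hs₁ : IsCoprime s₁ (m : ℤ)) (hs₂ : IsCoprime s₂ (m : ℤ)) (k : ℕ) (hk : 2 ≤ k)
    (F : ℤ[X]) (hFk : F.natDegree = k) (hFl : 0 < F.leadingCoeff) (n₀ : ℤ)
    (hcg : F.eval n₀ ≡ s₁ + s₂ [ZMOD (m : ℤ)]) (hD : 0 < F.derivative.eval n₀) (B : ℕ) :
    ∃ p₁ p₂ : ℕ, p₁.Prime ∧ p₂.Prime ∧ B < p₁ ∧ B < p₂ ∧
      (p₁ : ℤ) ≡ s₁ [ZMOD (m : ℤ)] ∧ (p₂ : ℤ) ≡ s₂ [ZMOD (m : ℤ)] ∧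
      ∃ n : ℤ, (p₁ : ℤ) + (p₂ : ℤ) = F.eval n := by
  obtain ⟨C, hC1, hdich⟩ := E_dich k hk
  obtain ⟨M, hM5, K, hK, hgrow⟩ := growth k hk
  obtain ⟨c, hc, hblock⟩ := block_primes M hM5
  obtain ⟨C8, hC8p, hC8⟩ := gq_bound
  obtain ⟨i0, hi01, hi0⟩ := tail_small C C8 (c/(2*K)) hC8p (by positivity)
  obtain ⟨V, b1, b2, hV, hmV, hb1V, hb2V, hb1c, hb2c, hb1s, hb2s, G, lam, W', hGk, hGl, hlam, hS, hlW, hwW, hval⟩ :=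
    local_choice m hm hme s₁ s₂ hs₁ hs₂ k hk F hFk hFl n₀ hcg hD (2^(i0*C))
  obtain ⟨Z0, hZ0⟩ := hgrow G lam hGk hGl hlam
  obtain ⟨Z1, hZ1⟩ := hblock V b1 hV hb1V hb1c
  obtain ⟨Z2, hZ2⟩ := hblock V b2 hV hb2V hb2c
  obtain ⟨I, hI1, hI2, hI3⟩ := choose_I K c C (Z0+Z1+Z2+B+i0+5) hK hc hC1
  set Z := 2^(I*C) with hZ
  clear_value Z
  obtain ⟨u1, hu1a, hu1b, hu1c⟩ := hZ1 Z (by omega)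
  obtain ⟨u2, hu2a, hu2b, hu2c⟩ := hZ2 Z (by omega)
  obtain ⟨t0, H, dmin, dmax, hdmin, hH1, hg1, hg2, hg3, n1, n2, n3, n4, n5, hlo, hhi, hHd⟩ :=
    hZ0 Z (u1+u2) (by omega) (by omega) (by omega)
  set Y := Z^(M-4) with hYdef
  set P := min ((Finset.Ico u1 (u1+Y)).filter (fun x => (b1+V*x).Prime)).card
    ((Finset.Ico u2 (u2+Y)).filter (fun x => (b2+V*x).Prime)).card with hP
  obtain ⟨A1, hA1, hA1c⟩ := Finset.exists_subset_card_eq (show P ≤ _ from min_le_left _ _)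
  obtain ⟨A2, hA2, hA2c⟩ := Finset.exists_subset_card_eq (show P ≤ _ from min_le_right _ _)
  have hPl : c*((V:ℝ)/V.totient)*(Z:ℝ)^(M-4)/Real.log Z ≤ P := by
    rcases min_choice ((Finset.Ico u1 (u1+Y)).filter (fun x => (b1+V*x).Prime)).card
      ((Finset.Ico u2 (u2+Y)).filter (fun x => (b2+V*x).Prime)).card with h | h
    · rw [hP, h]; exact hu1c
    · rw [hP, h]; exact hu2c
  clear_value P
  have hZ5 : 5 ≤ Z := by omega
  have hZM : Z < Z^(M-1) := by
    calc Z = Z^1 := (pow_one Z).symm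
      _ < Z^(M-1) := Nat.pow_lt_pow_right (by omega) (by omega)
  have hA1p : ∀ x ∈ A1, u1 ≤ x ∧ x < u1 + Y ∧ (b1+V*x).Prime ∧ Z < b1+V*x := by
    intro x hx
    have := hA1 hx
    rw [Finset.mem_filter, Finset.mem_Ico] at this
    refine ⟨this.1.1, this.1.2, this.2, ?_⟩
    have : x ≤ V*x := Nat.le_mul_of_pos_left _ hV
    omega
  have hA2p : ∀ x ∈ A2, u2 ≤ x ∧ x < u2 + Y ∧ (b2+V*x).Prime ∧ Z < b2+V*x := by
    intro x hx
    have := hA2 hx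
    rw [Finset.mem_filter, Finset.mem_Ico] at this
    refine ⟨this.1.1, this.1.2, this.2, ?_⟩
    have : x ≤ V*x := Nat.le_mul_of_pos_left _ hV
    omega
  by_contra hcon
  have hnosol : ∀ x1 ∈ A1, ∀ x2 ∈ A2, ∀ t : ℤ, (x1:ℤ) + x2 ≠ G.eval t := by
    intro x1 h1 x2 h2 t ht
    apply hcon
    obtain ⟨_, _, a3, a4⟩ := hA1p x1 h1
    obtain ⟨_, _, c3, c4⟩ := hA2p x2 h2
    obtain ⟨n, hn⟩ := hval t
    have hmod : ∀ (b : ℕ) (x : ℕ) (s : ℤ), (b:ℤ) ≡ s [ZMOD (m:ℤ)] → ((b+V*x:ℕ):ℤ) ≡ s [ZMOD (m:ℤ)] := by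
      intro b x s hbs
      refine Int.ModEq.trans ?_ hbs
      apply Int.ModEq.symm
      apply Int.modEq_iff_dvd.mpr
      have e : ((b+V*x:ℕ):ℤ) - b = V*x := by push_cast; ring
      rw [e]
      exact Dvd.dvd.mul_right (by exact_mod_cast hmV) _
    refine ⟨b1+V*x1, b2+V*x2, a3, c3, by omega, by omega, hmod _ _ _ hb1s, hmod _ _ _ hb2s, n, ?_⟩
    rw [← hn, ← ht]; push_cast; ring
  set g : ℕ → ℤ := fun s => G.eval ((t0:ℤ)+(s:ℤ)) with hg
  have hg00 : g 0 = G.eval (t0:ℤ) := by rw [hg]; simp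
  have hgpos : ∀ s, 0 < g (s+1) - g s := by
    intro s
    have : (0:ℝ) < ((g (s+1) - g s : ℤ):ℝ) := lt_of_lt_of_le hdmin (hg1 s)
    exact_mod_cast this
  have hmono : Monotone g := monotone_nat_of_le_succ (fun n => by have := hgpos n; linarith)
  set N := Z.factorial * ((g H - g 0).toNat + Y + 1) with hN
  have hfZ := Nat.factorial_pos Z
  have hN0 : 0 < N := by positivity
  have hNbig : (g H - g 0).toNat + Y + 1 ≤ N := Nat.le_mul_of_pos_left _ hfZ
  have hNl : ∀ l, 1 ≤ l → l ≤ Z → l ∣ N := fun l h1 h2 => (Nat.dvd_factorial h1 h2).mul_right _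
  have hYZ : (Y:ℤ) = (Z:ℤ)^(M-4) := by rw [hYdef]; push_cast; rfl
  clear_value N
  have hrange : ∀ x1 ∈ A1, ∀ x2 ∈ A2, g 0 ≤ (x1:ℤ) + x2 ∧ (x1:ℤ) + x2 < g H := by
    intro x1 h1 x2 h2
    obtain ⟨a1, a2, _, _⟩ := hA1p x1 h1
    obtain ⟨c1, c2, _, _⟩ := hA2p x2 h2
    have hgH : ((u1+u2:ℕ):ℤ) + 2*(Y:ℤ) ≤ g H := by rw [hYZ]; exact hhi
    rw [hg00]
    constructor
    · refine hlo.trans ?_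
      push_cast; omega
    · push_cast at hgH; omega
  have hcl := circle_lower A1 A2 g H N dmax hN0 hgpos (fun s hs => hg3 s (by omega)) hrange (by
    intro x1 h1 x2 h2 s hs hdvd
    obtain ⟨r1, r2⟩ := hrange x1 h1 x2 h2
    have e1 := hmono (Nat.zero_le s)
    have e2 := hmono hs.le
    have hne : (x1:ℤ) + x2 - g s ≠ 0 := fun h => hnosol x1 h1 x2 h2 (t0+s) (by
      have : (x1:ℤ) + x2 = g s := by linarith
      exact this)
    have hle := Int.le_of_dvd (abs_pos.mpr hne) ((dvd_abs _ _).mpr hdvd)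
    have : |(x1:ℤ) + x2 - g s| ≤ g H - g 0 := by
      rw [abs_le]; constructor <;> linarith
    omega)
  have hZR : (0:ℝ) < Z := by exact_mod_cast (by omega : 0 < Z)
  have hHk : (0:ℝ) < (H:ℝ)^k := by
    have : (0:ℝ) < H := by exact_mod_cast hH1
    positivity
  set e : ℕ → ℝ := fun r => ‖TT g H (-((r:ℝ)/N)) - TZ g H (-((r:ℝ)/N))‖ with he
  have hed : ∀ r < N, ∀ i, 1 ≤ i → i ≤ I → e r ≤ 2*H/2^i ∨
      ∃ q : ℕ, ∃ a : ℤ, 2^(i0*C) < q ∧ q ≤ 2^(i*C) ∧ |(r:ℝ)/N - a/q| ≤ (Z:ℝ)/(H:ℝ)^k := by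
    intro r _ i hi1 hiI
    have h2i : (2:ℝ) ≤ 2^i := le_self_pow₀ (by norm_num) (by omega)
    have hpz : ((2:ℝ)^i)^C ≤ Z := by
      rw [← pow_mul, hZ]; push_cast
      apply pow_le_pow_right₀ (by norm_num)
      exact Nat.mul_le_mul_right _ hiI
    rcases hdich G lam W' (2^(i0*C)) t0 H dmin dmax Z hGk hGl hlam hS hlW hwW hdmin hH1 hg1 hg2 hg3
      n1 n2 n3 n4 (2^i) (-((r:ℝ)/N)) h2i hpz with h | ⟨q, a, h1, h2, h3⟩
    · left; exact h
    · right
      refine ⟨q, -a, h1, ?_, ?_⟩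
      · rw [← pow_mul] at h2; exact_mod_cast h2
      · rw [← abs_neg] at h3
        refine le_trans (le_of_eq ?_) h3
        congr 1; push_cast; ring
  have hτ0 : 0 ≤ (Z:ℝ)/(H:ℝ)^k := by positivity
  have hτ : 2*((Z:ℝ)/(H:ℝ)^k)*((Z:ℝ)^2*(Z:ℝ)^2) < 1 := by
    have : 2*((Z:ℝ)/(H:ℝ)^k)*((Z:ℝ)^2*(Z:ℝ)^2) = 2*(Z:ℝ)^5/(H:ℝ)^k := by ring
    rw [this, div_lt_one hHk]; exact n5
  have hU1 := upper_one A1 N u1 hN0 (fun x hx => ⟨(hA1p x hx).1, by have := (hA1p x hx).2.1; omega⟩) V b1 Z C i0 I H hV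
    (fun x hx => (hA1p x hx).2.2) hNl _ C8 hτ0 hτ hC1 hC8 hZ hi01 (by omega) e hed
  have hU2 := upper_one A2 N u2 hN0 (fun x hx => ⟨(hA2p x hx).1, by have := (hA2p x hx).2.1; omega⟩) V b2 Z C i0 I H hV
    (fun x hx => (hA2p x hx).2.2) hNl _ C8 hτ0 hτ hC1 hC8 hZ hi01 (by omega) e hed
  rw [hA1c] at hU1 hcl
  rw [hA2c] at hU2 hcl
  have hlogp : 0 < Real.log Z := Real.log_pos (by exact_mod_cast (by omega : 1 < Z))
  have hφ : 0 < V.totient := Nat.totient_pos.mpr hV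
  have hv1 : (1:ℝ) ≤ (V:ℝ)/V.totient := by
    rw [le_div_iff₀ (by exact_mod_cast hφ), one_mul]
    exact_mod_cast Nat.totient_le V
  have hYR : (0:ℝ) < (Z:ℝ)^(M-4) := by positivity
  have hP0 : (0:ℝ) < P := lt_of_lt_of_le (by positivity) hPl
  have hdmax : 0 < dmax := by
    have h1 := hg1 0
    have h2 := hg3 0 (by omega)
    linarith
  refine num_contra N P H dmax K ((Z:ℝ)^(M-4)) c ((V:ℝ)/V.totient) (Real.log Z) _ _
    (∑ i ∈ Finset.Ico i0 I, 2/2^i * (C8 * (((i+1)*C:ℕ):ℝ)^8)) (2/2^I*Real.log Z)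
    (by exact_mod_cast hN0) hP0 hdmax hK hYR hv1 hc hlogp (Finset.sum_nonneg fun i _ => by positivity) (by positivity)
    ?_ hU1 hU2 hHd hPl ?_ ?_
  · refine hcl.trans ?_
    rw [← Finset.sum_add_distrib, Finset.sum_div]
    refine Finset.sum_le_sum fun r _ => ?_
    have he0 : 0 ≤ e r := norm_nonneg _
    have hab := two_mul_le_add_sq ‖fh A1 ((r:ℝ)/N)‖ ‖fh A2 ((r:ℝ)/N)‖
    calc ‖fh A1 ((r:ℝ)/N)‖ * ‖fh A2 ((r:ℝ)/N)‖ * e r ≤ ((‖fh A1 ((r:ℝ)/N)‖^2 + ‖fh A2 ((r:ℝ)/N)‖^2)/2) * e r := by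
          gcongr; linarith
      _ = _ := by ring
  · have := hi0 I
    rw [le_div_iff₀ (by positivity)] at this
    linarith
  · rw [hZ]; rw [hZ] at hI3; exact hI3


lemma exists_deriv_pos (G : ℤ[X]) (hd : 1 ≤ G.natDegree) (hl : 0 < G.leadingCoeff) :
    ∃ t : ℕ, 0 < G.derivative.eval (t:ℤ) := by
  obtain ⟨d, hd'⟩ : ∃ d, G.natDegree = d + 1 := ⟨G.natDegree - 1, by omega⟩
  have hcf : G.derivative.coeff d = G.leadingCoeff * (d+1) := by
    rw [coeff_derivative, leadingCoeff, hd']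
  have hle : G.derivative.natDegree ≤ d := by
    have := natDegree_derivative_le G
    omega
  have hpos : 0 < G.derivative.coeff d := by rw [hcf]; positivity
  obtain ⟨t1, ht1⟩ := poly_asymp (G.derivative.map (Int.castRingHom ℝ)) d
    (natDegree_map_le.trans hle) (by rw [coeff_map]; simpa using hpos)
  refine ⟨t1 + 1, ?_⟩
  have h := (ht1 (t1+1) (by omega)).1
  rw [coeff_map] at h
  have h2 : (0:ℝ) < ((G.derivative.coeff d : ℤ):ℝ) := by exact_mod_cast hpos
  have h3 : (0:ℝ) < (Int.castRingHom ℝ) (G.derivative.coeff d) / 2 * ((t1+1:ℕ):ℝ)^d := by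
    have : (0:ℝ) < ((t1+1:ℕ):ℝ) := by positivity
    simp only [eq_intCast]
    positivity
  have h4 := h3.trans_le h
  have h5 : (G.derivative.map (Int.castRingHom ℝ)).eval (((t1+1:ℕ)):ℝ) = ((G.derivative.eval ((t1+1:ℕ):ℤ) : ℤ):ℝ) := by
    have := Polynomial.eval_intCast_map (Int.castRingHom ℝ) G.derivative ((t1+1:ℕ):ℤ)
    simpa using this
  rw [h5] at h4
  exact_mod_cast h4

theorem infinitely_many_prime_pairs_summing_to_polynomial_value
    (m : ℕ) (hm : 0 < m) (hmeven : Even m) (s₁ s₂ : ℤ)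
    (hs₁ : IsCoprime s₁ (m : ℤ)) (hs₂ : IsCoprime s₂ (m : ℤ))
    (F : Polynomial ℤ) (hdeg : 0 < F.natDegree) (hlead : 0 < F.leadingCoeff)
    (n₀ : ℤ) (h₀even : Even (F.eval n₀)) (h₀cong : F.eval n₀ ≡ s₁ + s₂ [ZMOD (m : ℤ)]) :
    ∀ M : ℕ, ∃ p₁ p₂ : ℕ, p₁.Prime ∧ p₂.Prime ∧ M < p₁ ∧ M < p₂ ∧
      (p₁ : ℤ) ≡ s₁ [ZMOD (m : ℤ)] ∧ (p₂ : ℤ) ≡ s₂ [ZMOD (m : ℤ)] ∧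
      ∃ n : ℤ, (p₁ : ℤ) + (p₂ : ℤ) = F.eval n := by
  intro M
  have hm0 : (m:ℤ) ≠ 0 := by exact_mod_cast hm.ne'
  set Q : ℤ[X] := C (m:ℤ) * X^2 + C n₀ with hQ
  have hQd : Q.natDegree = 2 := by
    rw [hQ, natDegree_add_C, natDegree_C_mul_X_pow 2 _ hm0]
  have hQl : Q.leadingCoeff = m := by
    rw [leadingCoeff, hQd, hQ]
    rw [coeff_add, coeff_C_mul, coeff_X_pow, coeff_C]; simp
  have hd2 : (F.comp Q).natDegree = F.natDegree * 2 := by rw [natDegree_comp, hQd]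
  have hl2 : 0 < (F.comp Q).leadingCoeff := by
    rw [leadingCoeff_comp (by rw [hQd]; norm_num), hQl]
    positivity
  have hev : ∀ t : ℤ, (F.comp Q).eval t = F.eval (m * t^2 + n₀) := by
    intro t; simp [hQ, eval_comp]
  obtain ⟨t, ht⟩ := exists_deriv_pos (F.comp Q) (by omega) hl2
  have hcg : (F.comp Q).eval (t:ℤ) ≡ s₁ + s₂ [ZMOD (m:ℤ)] := by
    refine Int.ModEq.trans ?_ h₀cong
    rw [hev]
    apply Int.ModEq.symm
    rw [Int.modEq_iff_dvd]
    refine Dvd.dvd.trans ?_ (sub_dvd_eval_sub _ _ F)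
    exact ⟨(t:ℤ)^2, by ring⟩
  obtain ⟨p₁, p₂, h1, h2, h3, h4, h5, h6, n, hn⟩ :=
    core m hm hmeven s₁ s₂ hs₁ hs₂ _ (by rw [hd2]; omega) (F.comp Q) rfl hl2 t hcg ht M
  exact ⟨p₁, p₂, h1, h2, h3, h4, h5, h6, _, hn.trans (hev n)⟩
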